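/- Let A be a σ-unital simple C*-algebra with QT̃(A) ≠ {0}. Suppose A has strict comparison and the canonical map Γ is surjective. If a, b ∈ (A⊗K)_+ satisfy d_τ(a) < d_τ(b) for all τ ∈ QT̃(A)\{0}, then there exists x ∈ A⊗K with x*x = a and xx* ∈ Her(b), i.e., a ≾̃ b. -/

import Mathlib

open scoped ENNReal
open Filter Topology

noncomputable section

namespace Paper

/-! ### Generic definitions in a (non-unital) C*-algebra -/

variable (R : Type*) [NonUnitalCStarAlgebra R] [PartialOrder R] [StarOrderedRing R]

variable {R} in
/-- The hereditary C*-subalgebra generated by `b`, i.e. `closure (b R b)`. -/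
def her (b : R) : Set R := closure {x : R | ∃ y : R, x = b * y * b}

/-- `I` is a (not necessarily closed) two-sided ideal of the subalgebra `B`. -/
def IsIdealIn (B I : Set R) : Prop :=
  I ⊆ B ∧ (0 : R) ∈ I ∧ (∀ x ∈ I, ∀ y ∈ I, x + y ∈ I) ∧ (∀ x ∈ I, -x ∈ I) ∧
    (∀ x ∈ I, ∀ b ∈ B, x * b ∈ I ∧ b * x ∈ I)

variable {R} in
/-- The Pedersen ideal of the subalgebra `B`: the minimal dense two-sided ideal of `B`,
equivalently the intersection of all dense two-sided ideals of `B`. -/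
def pedersenIn (B : Set R) : Set R :=
  ⋂ I ∈ {I : Set R | IsIdealIn R B I ∧ B ⊆ closure I}, I

/-- The Pedersen ideal of `R`. -/
def pedersen : Set R := pedersenIn (Set.univ : Set R)

variable {R} in
/-- Cuntz subequivalence `a ≲ b`. -/
def CuntzLE (a b : R) : Prop :=
  ∃ x : ℕ → R, Tendsto (fun n => ‖a - star (x n) * b * x n‖) atTop (𝓝 0)

variable {R} in
/-- Cuntz subequivalence relative to a subset `B` (the `xₙ` are taken in `B`). -/
def CuntzLEIn (B : Set R) (a b : R) : Prop :=
  ∃ x : ℕ → R, (∀ n, x n ∈ B) ∧ Tendsto (fun n => ‖a - star (x n) * b * x n‖) atTop (𝓝 0)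

variable {R} in
/-- Cuntz equivalence `a ∼ b`. -/
def CuntzEq (a b : R) : Prop := CuntzLE a b ∧ CuntzLE b a

/-- The cut-off function `f_ε`: `0` on `[0, ε/2]`, `1` on `[ε, ∞)`, linear in between. -/
def cutoff (ε : ℝ) : ℝ → ℝ := fun t => min 1 (max 0 (2 * t / ε - 1))

variable {R} in
/-- `f_ε(a)`, via the (non-unital) continuous functional calculus. -/
def fEps (ε : ℝ) (a : R) : R := cfcₙ (cutoff ε) a

/-- A densely defined 2-quasitrace on `R` (recorded by its values on positive elements;
the value on non-positive elements is normalised to `0`). -/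
structure QuasiTrace : Type _ where
  toFun : R → ℝ≥0∞
  zero_of_not_nonneg : ∀ a : R, ¬ (0 ≤ a) → toFun a = 0
  map_zero : toFun 0 = 0
  map_smul : ∀ (r : ℝ) (a : R), 0 < r → 0 ≤ a → toFun (r • a) = ENNReal.ofReal r * toFun a
  map_add_of_commute : ∀ a b : R, 0 ≤ a → 0 ≤ b → a * b = b * a →
    toFun (a + b) = toFun a + toFun b
  map_star_mul_self : ∀ x : R, toFun (star x * x) = toFun (x * star x)
  lowerSemicontinuousOn : LowerSemicontinuousOn toFun {a : R | 0 ≤ a}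
  finite_on_pedersen : ∀ a ∈ pedersen R, 0 ≤ a → toFun a < ∞
  exists_matrix_extension : ∃ σ : Matrix (Fin 2) (Fin 2) R → ℝ≥0∞,
    (∀ a : R, σ (fun i j => if i = 0 ∧ j = 0 then a else 0) = toFun a) ∧
    σ 0 = 0 ∧
    (∀ (r : ℝ) (x : Matrix (Fin 2) (Fin 2) R), 0 < r → (∃ y, x = star y * y) →
      σ (r • x) = ENNReal.ofReal r * σ x) ∧
    (∀ x y : Matrix (Fin 2) (Fin 2) R, (∃ z, x = star z * z) → (∃ z, y = star z * z) →
      x * y = y * x → σ (x + y) = σ x + σ y) ∧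
    (∀ x : Matrix (Fin 2) (Fin 2) R, σ (star x * x) = σ (x * star x))

/-- The topology of pointwise convergence on the Pedersen ideal. -/
instance : TopologicalSpace (QuasiTrace R) :=
  TopologicalSpace.induced (fun τ => fun a : pedersen R => τ.toFun a) inferInstance

variable {R}

/-- The zero quasitrace. -/
def QuasiTrace.IsZero (τ : QuasiTrace R) : Prop := ∀ a : R, τ.toFun a = 0

/-- The dimension function `d_τ(a) = lim_{ε → 0} τ(f_ε(a))`. -/
def dTau (τ : QuasiTrace R) (a : R) : ℝ≥0∞ :=
  ⨆ n : ℕ, τ.toFun (fEps (1 / (n + 1)) a)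

/-- `ω(a)` relative to a set `S` of quasitraces:
`lim_n sup {d_τ(a) - τ(f_{1/n}(a)) : τ ∈ S}`. -/
def omegaOn (S : Set (QuasiTrace R)) (a : R) : ℝ≥0∞ :=
  ⨅ n : ℕ, ⨆ τ ∈ S, (dTau τ a - τ.toFun (fEps (1 / (n + 1)) a))

/-- The seminorm `‖x‖_{2,S}`. -/
def norm2On (S : Set (QuasiTrace R)) (x : R) : ℝ≥0∞ :=
  ⨆ τ ∈ S, (τ.toFun (star x * x)) ^ (1 / 2 : ℝ)

variable (R)

/-- `R` has (Blackadar's) strict comparison. -/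
def StrictComparison : Prop :=
  ∀ a b : R, 0 ≤ a → 0 ≤ b →
    (∀ τ : QuasiTrace R, ¬ τ.IsZero → dTau τ a < dTau τ b) → CuntzLE a b

/-- `R` is a simple C*-algebra: it is nonzero and has no nontrivial closed two-sided ideals. -/
def IsSimpleCStar : Prop :=
  (∃ x : R, x ≠ 0) ∧
    ∀ I : TwoSidedIdeal R, IsClosed (I : Set R) → (I : Set R) = {0} ∨ (I : Set R) = Set.univ

/-- `R` is σ-unital: it contains a strictly positive element `h`
(equivalently, `Her(h) = R`). -/
def SigmaUnital : Prop := ∃ h : R, 0 ≤ h ∧ her h = Set.univ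

/-- `R` is elementary: isomorphic to the algebra of compact operators on some Hilbert space. -/
def IsElementary : Prop :=
  ∃ (H : Type) (_ : NormedAddCommGroup H) (_ : InnerProductSpace ℂ H) (_ : CompleteSpace H)
    (φ : R →⋆ₙₐ[ℂ] (H →L[ℂ] H)), Function.Injective φ ∧
      Set.range φ = {T : H →L[ℂ] H | IsCompactOperator (⇑T)}

/-- `R` is purely infinite: `R ≇ ℂ` and `b ≲ a` for all nonzero positive `a, b`. -/
def PurelyInfinite : Prop :=
  (¬ ∃ φ : R →⋆ₙₐ[ℂ] ℂ, Function.Bijective φ) ∧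
    ∀ a b : R, 0 ≤ a → 0 ≤ b → a ≠ 0 → b ≠ 0 → CuntzLE b a

/-- `R` is finite: its minimal unitization contains no non-unitary isometry. -/
def IsFiniteCStar : Prop :=
  ∀ v : Unitization ℂ R, star v * v = 1 → v * star v = 1

/-- `R` has stable rank one: the invertible elements are dense in the minimal unitization. -/
def StableRankOne : Prop := Dense {x : Unitization ℂ R | IsUnit x}

variable {R}

/-- `c` represents `n·[a]` in the Cuntz semigroup: it is the sum of `n` mutually
orthogonal positive elements, each Cuntz equivalent to `a`. -/
def IsNFoldRep (n : ℕ) (a c : R) : Prop :=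
  ∃ f : Fin n → R, (∀ i, 0 ≤ f i) ∧ (∀ i, CuntzEq (f i) a) ∧
    (∀ i j, i ≠ j → f i * f j = 0) ∧ c = ∑ i, f i

/-- `s` represents the supremum of the increasing sequence of Cuntz classes `[y n]`. -/
def IsCuntzLUB (y : ℕ → R) (s : R) : Prop :=
  (∀ n, CuntzLE (y n) s) ∧ ∀ c : R, 0 ≤ c → (∀ n, CuntzLE (y n) c) → CuntzLE s c

/-- `[x] ≪ [y]` in the Cuntz semigroup. -/
def CuntzWayBelow (x y : R) : Prop :=
  ∀ yseq : ℕ → R, (∀ n, 0 ≤ yseq n) → (∀ n, CuntzLE (yseq n) (yseq (n + 1))) →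
    ∀ s : R, 0 ≤ s → IsCuntzLUB yseq s → CuntzLE y s → ∃ n₀, CuntzLE x (yseq n₀)

variable (R)

/-- The Cuntz semigroup of `R` is almost unperforated. -/
def AlmostUnperforated : Prop :=
  ∀ (a b : R) (k : ℕ), 1 ≤ k → 0 ≤ a → 0 ≤ b →
    (∃ c d : R, IsNFoldRep (k + 1) a c ∧ IsNFoldRep k b d ∧ CuntzLE c d) → CuntzLE a b

/-- The Cuntz semigroup of `R` is almost divisible. -/
def AlmostDivisible : Prop :=
  ∀ x y : R, 0 ≤ x → 0 ≤ y → CuntzWayBelow x y → ∀ n : ℕ, 1 ≤ n →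
    ∃ z : R, 0 ≤ z ∧ (∃ c : R, IsNFoldRep n z c ∧ CuntzLE c y) ∧
      (∃ c : R, IsNFoldRep (n + 1) z c ∧ CuntzLE x c)

/-! ### The stabilization `W ≅ A ⊗ K` -/

variable (A W : Type*) [NonUnitalCStarAlgebra A] [PartialOrder A] [StarOrderedRing A]
  [NonUnitalCStarAlgebra W] [PartialOrder W] [StarOrderedRing W]

/-- A realization of `W` as the stabilization `A ⊗ K`: the maps `emb i j : a ↦ a ⊗ e_{ij}`
are isometric, satisfy the matrix-unit relations, and have dense joint linear span. -/
structure Stabilization : Type _ where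
  emb : ℕ → ℕ → (A →ₗ[ℂ] W)
  emb_mul : ∀ (i j k l : ℕ) (a b : A),
    emb i j a * emb k l b = if j = k then emb i l (a * b) else 0
  emb_star : ∀ (i j : ℕ) (a : A), star (emb i j a) = emb j i (star a)
  norm_emb : ∀ (i j : ℕ) (a : A), ‖emb i j a‖ = ‖a‖
  dense_span : Dense (Submodule.span ℂ {w : W | ∃ (i j : ℕ) (a : A), w = emb i j a} : Set W)

variable {A W}

/-- The set `QT(A)` of quasitraces normalized on `A ⊆ A ⊗ K`. -/
def QTSet (SB : Stabilization A W) : Set (QuasiTrace W) :=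
  {τ | (⨆ a : {a : A // 0 ≤ a ∧ ‖a‖ ≤ 1}, τ.toFun (SB.emb 0 0 a)) = 1}

/-- The quasitraces normalized on the hereditary subalgebra `Her(c) ⊆ W`. -/
def QTSetHer (c : W) : Set (QuasiTrace W) :=
  {τ : QuasiTrace W |
    (⨆ a : {a : W // a ∈ her c ∧ 0 ≤ a ∧ ‖a‖ ≤ 1}, τ.toFun a) = 1}

/-- `ω(a) = 0` for `a ∈ W = A ⊗ K`, computed relative to `\overline{QT(Her(e))}^w`
for any nonzero `e ∈ Ped(A)₊`. -/
def OmegaZero (SB : Stabilization A W) (a : W) : Prop :=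
  ∀ e : A, 0 ≤ e → e ≠ 0 → e ∈ pedersen A →
    omegaOn (closure (QTSetHer (SB.emb 0 0 e))) a = 0

/-- `A` has tracial approximate oscillation zero. -/
def TAOZ (SB : Stabilization A W) : Prop :=
  ∀ e : A, 0 ≤ e → e ≠ 0 → e ∈ pedersen A →
    ∀ a : W, 0 ≤ a → a ∈ pedersen W →
      ∃ b : ℕ → W, (∀ n, 0 ≤ b n) ∧ (∀ n, ‖b n‖ ≤ 1) ∧
        (∀ n, b n ∈ pedersenIn (her a)) ∧
        Tendsto (fun n => omegaOn (closure (QTSetHer (SB.emb 0 0 e))) (b n)) atTop (𝓝 0) ∧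
        Tendsto (fun n => norm2On (closure (QTSetHer (SB.emb 0 0 e))) (a - b n)) atTop (𝓝 0)

/-! ### Affine functions on the quasitrace cone and the map `Γ` -/

variable (W) in
/-- `ρ = t·τ + (1-t)·σ` as quasitraces. -/
def IsCombo (t : ℝ) (τ σ ρ : QuasiTrace W) : Prop :=
  ∀ a : W, 0 ≤ a →
    ρ.toFun a = ENNReal.ofReal t * τ.toFun a + ENNReal.ofReal (1 - t) * σ.toFun a

variable (W) in
/-- `f` is affine on the quasitrace cone. -/
def IsAffineQT (f : QuasiTrace W → ℝ≥0∞) : Prop :=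
  ∀ t : ℝ, 0 ≤ t → t ≤ 1 → ∀ τ σ ρ : QuasiTrace W, IsCombo W t τ σ ρ →
    f ρ = ENNReal.ofReal t * f τ + ENNReal.ofReal (1 - t) * f σ

variable (W) in
/-- Membership in `Aff₊(QT̃(A))`. -/
def MemAffPlus (f : QuasiTrace W → ℝ≥0∞) : Prop :=
  (∀ τ, f τ = 0) ∨
    (Continuous f ∧ IsAffineQT W f ∧ (∀ τ, f τ < ∞) ∧
      (∀ τ : QuasiTrace W, ¬ τ.IsZero → 0 < f τ) ∧
      (∀ τ : QuasiTrace W, τ.IsZero → f τ = 0))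

variable (W) in
/-- Membership in `LAff₊(QT̃(A))`. -/
def MemLAffPlus (f : QuasiTrace W → ℝ≥0∞) : Prop :=
  ∃ g : ℕ → QuasiTrace W → ℝ≥0∞, (∀ n, MemAffPlus W (g n)) ∧
    (∀ n τ, g n τ ≤ g (n + 1) τ) ∧ ∀ τ, f τ = ⨆ n, g n τ

variable (W) in
/-- The canonical map `Γ : Cu(A) → LAff₊(QT̃(A))`, `Γ([a])(τ) = d_τ(a)`, is surjective. -/
def GammaSurjective : Prop :=
  ∀ f : QuasiTrace W → ℝ≥0∞, MemLAffPlus W f →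
    ∃ a : W, 0 ≤ a ∧ ∀ τ : QuasiTrace W, dTau τ a = f τ


set_option linter.all false
section P1
variable {V : Type*} [NonUnitalCStarAlgebra V] [PartialOrder V] [StarOrderedRing V]

/-! ### Closed right ideals -/

/-- The closed right ideal generated by `b`. -/
def Rid (b : V) : Submodule ℂ V := (LinearMap.range (LinearMap.mulLeft ℂ b)).topologicalClosure

lemma Rid_closed (b : V) : IsClosed (Rid b : Set V) := Submodule.isClosed_topologicalClosure _

lemma mul_mem_Rid_self (b x : V) : b * x ∈ Rid b :=
  Submodule.le_topologicalClosure _ ⟨x, rfl⟩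

lemma Rid_induction {b : V} {p : V → Prop} (hp : IsClosed {x | p x}) (h : ∀ y, p (b * y))
    {x : V} (hx : x ∈ Rid b) : p x := by
  have : x ∈ closure (LinearMap.range (LinearMap.mulLeft ℂ b) : Set V) := hx
  refine (closure_minimal ?_ hp) this
  rintro _ ⟨y, rfl⟩
  exact h y

lemma mul_mem_Rid {b x : V} (hx : x ∈ Rid b) (w : V) : x * w ∈ Rid b := by
  refine Rid_induction (p := fun x => x * w ∈ Rid b) ?_ ?_ hx
  · exact (Rid_closed b).preimage (by fun_prop : Continuous fun x : V => x * w)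
  · intro y
    rw [mul_assoc]; exact mul_mem_Rid_self b _

lemma Rid_mul_of {b b' c x : V} (h : c * b ∈ Rid b') (hx : x ∈ Rid b) : c * x ∈ Rid b' := by
  refine Rid_induction (p := fun x => c * x ∈ Rid b') ?_ ?_ hx
  · exact (Rid_closed b').preimage (by fun_prop : Continuous fun x : V => c * x)
  · intro y
    rw [← mul_assoc]; exact mul_mem_Rid h _

lemma Rid_mul_zero {b c x : V} (h : c * b = 0) (hx : x ∈ Rid b) : c * x = 0 := by
  refine Rid_induction (p := fun x => c * x = 0) ?_ ?_ hx
  · exact isClosed_eq (by fun_prop) continuous_const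
  · intro y
    rw [← mul_assoc, h, zero_mul]

lemma Rid_le {b b' : V} (h : b ∈ Rid b') {x : V} (hx : x ∈ Rid b) : x ∈ Rid b' := by
  refine Rid_induction (p := fun x => x ∈ Rid b') (Rid_closed b') ?_ hx
  exact fun y => mul_mem_Rid h y

lemma Rid_of_tendsto {b x : V} {u : ℕ → V} (h : ∀ n, u n ∈ Rid b)
    (hu : Tendsto u atTop (𝓝 x)) : x ∈ Rid b :=
  (Rid_closed b).mem_of_tendsto hu (Eventually.of_forall h)

/-- approximating property -/
lemma Rid_approx {b x : V} (hx : x ∈ Rid b) {ε : ℝ} (hε : 0 < ε) : ∃ y, ‖x - b * y‖ < ε := by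
  have : x ∈ closure (LinearMap.range (LinearMap.mulLeft ℂ b) : Set V) := hx
  obtain ⟨_, ⟨y, rfl⟩, hy⟩ := Metric.mem_closure_iff.1 this ε hε
  exact ⟨y, by simpa [dist_eq_norm] using hy⟩

lemma mem_her_of_Rid {b x : V} (hb : star b = b) (hx : x ∈ Rid b) : x * star x ∈ her b := by
  unfold her
  have hcl : IsClosed {x : V | x * star x ∈ closure {x : V | ∃ y : V, x = b * y * b}} :=
    isClosed_closure.preimage (by fun_prop : Continuous fun x : V => x * star x)
  refine Rid_induction (p := fun x => x * star x ∈ closure {x : V | ∃ y : V, x = b * y * b})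
    hcl (fun y => subset_closure ⟨y * star y, ?_⟩) hx
  rw [star_mul, hb]; simp only [mul_assoc]

/-- The closed star subalgebra of elements `x` with `x, star x ∈ Rid b`. -/
def Hb (b : V) : NonUnitalStarSubalgebra ℂ V where
  carrier := {x | x ∈ Rid b ∧ star x ∈ Rid b}
  add_mem' := by
    rintro x y ⟨h1, h2⟩ ⟨h3, h4⟩
    exact ⟨add_mem h1 h3, by rw [star_add]; exact add_mem h2 h4⟩
  zero_mem' := ⟨zero_mem _, by rw [star_zero]; exact zero_mem _⟩
  mul_mem' := by
    rintro x y ⟨h1, h2⟩ ⟨h3, h4⟩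
    exact ⟨mul_mem_Rid h1 _, by rw [star_mul]; exact mul_mem_Rid h4 _⟩
  smul_mem' := by
    rintro c x ⟨h1, h2⟩
    exact ⟨Submodule.smul_mem _ _ h1, by rw [star_smul]; exact Submodule.smul_mem _ _ h2⟩
  star_mem' := by
    rintro x ⟨h1, h2⟩
    exact ⟨h2, by rwa [star_star]⟩

lemma mem_Hb {b x : V} : x ∈ Hb b ↔ x ∈ Rid b ∧ star x ∈ Rid b := Iff.rfl

lemma Hb_closed (b : V) : IsClosed (Hb b : Set V) :=
  (Rid_closed b).inter ((Rid_closed b).preimage continuous_star)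

end P1


section P2
variable {V : Type*} [NonUnitalCStarAlgebra V] [PartialOrder V] [StarOrderedRing V]

/-! ### Functional calculus toolkit -/

lemma sa {a : V} (ha : 0 ≤ a) : star a = a := (IsSelfAdjoint.of_nonneg ha).star_eq

lemma qs_nonneg {a : V} (ha : 0 ≤ a) {t : ℝ} (ht : t ∈ quasispectrum ℝ a) : 0 ≤ t :=
  quasispectrum_nonneg_of_nonneg a ha t ht

lemma fc_star (f : ℝ → ℝ) (a : V) : star (cfcₙ f a) = cfcₙ f a :=
  (cfcₙ_predicate (R := ℝ) f a : IsSelfAdjoint _).star_eq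

lemma fc_mul (a : V) {f g : ℝ → ℝ} (hf : Continuous f) (hf0 : f 0 = 0) (hg : Continuous g)
    (hg0 : g 0 = 0) : cfcₙ f a * cfcₙ g a = cfcₙ (fun t => f t * g t) a :=
  (cfcₙ_mul f g a hf.continuousOn hf0 hg.continuousOn hg0).symm

lemma fc_sub (a : V) {f g : ℝ → ℝ} (hf : Continuous f) (hf0 : f 0 = 0) (hg : Continuous g)
    (hg0 : g 0 = 0) : cfcₙ f a - cfcₙ g a = cfcₙ (fun t => f t - g t) a :=
  (cfcₙ_sub f g a hf.continuousOn hf0 hg.continuousOn hg0).symm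

lemma fc_id {a : V} (ha : 0 ≤ a) : cfcₙ (fun t : ℝ => t) a = a :=
  cfcₙ_id' ℝ a (IsSelfAdjoint.of_nonneg ha)

lemma fc_congr {a : V} (ha : 0 ≤ a) {f g : ℝ → ℝ} (h : ∀ t, 0 ≤ t → f t = g t) :
    cfcₙ f a = cfcₙ g a := cfcₙ_congr fun t ht => h t (qs_nonneg ha ht)

lemma fc_nonneg {a : V} (ha : 0 ≤ a) {f : ℝ → ℝ} (h : ∀ t, 0 ≤ t → 0 ≤ f t) : 0 ≤ cfcₙ f a :=
  cfcₙ_nonneg fun t ht => h t (qs_nonneg ha ht)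

lemma fc_norm {a : V} (ha : 0 ≤ a) {f : ℝ → ℝ} {c : ℝ} (h : ∀ t, 0 ≤ t → |f t| ≤ c) :
    ‖cfcₙ f a‖ ≤ c := norm_cfcₙ_le fun t ht => h t (qs_nonneg ha ht)

lemma fc_mono {a : V} (ha : 0 ≤ a) {f g : ℝ → ℝ} (hf : Continuous f) (hf0 : f 0 = 0)
    (hg : Continuous g) (hg0 : g 0 = 0)
    (h : ∀ t, 0 ≤ t → f t ≤ g t) : cfcₙ f a ≤ cfcₙ g a :=
  cfcₙ_mono (fun t ht => h t (qs_nonneg ha ht)) hf.continuousOn hg.continuousOn hf0 hg0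

lemma fc_comm (a : V) {f g : ℝ → ℝ} : cfcₙ f a * cfcₙ g a = cfcₙ g a * cfcₙ f a :=
  cfcₙ_commute_cfcₙ f g a

lemma cutoff_cont (ε : ℝ) : Continuous (cutoff ε) := by unfold cutoff; fun_prop
@[simp] lemma cutoff_zero (ε : ℝ) : cutoff ε 0 = 0 := by simp [cutoff]
lemma cutoff_nonneg (ε t : ℝ) : 0 ≤ cutoff ε t := by simp [cutoff]
lemma cutoff_le_one (ε t : ℝ) : cutoff ε t ≤ 1 := by simp [cutoff]
lemma cutoff_eq_one {ε t : ℝ} (hε : 0 < ε) (h : ε ≤ t) : cutoff ε t = 1 := by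
  unfold cutoff
  rw [min_eq_left]
  apply le_max_of_le_right
  rw [le_sub_iff_add_le, le_div_iff₀ hε]; linarith
lemma cutoff_eq_zero {ε t : ℝ} (hε : 0 < ε) (h : t ≤ ε / 2) : cutoff ε t = 0 := by
  unfold cutoff
  rw [max_eq_left]; · simp
  rw [sub_nonpos, div_le_one hε]; linarith
lemma cutoff_le_lin {ε t : ℝ} (hε : 0 < ε) (ht : 0 ≤ t) : cutoff ε t ≤ 2 / ε * t := by
  rcases le_total t (ε / 2) with h | h
  · rw [cutoff_eq_zero hε h]; positivity
  · refine (cutoff_le_one _ _).trans ?_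
    rw [div_mul_eq_mul_div, le_div_iff₀ hε]; linarith
lemma cutoff_anti {δ ε t : ℝ} (hδ : 0 < δ) (h : δ ≤ ε) (ht : 0 ≤ t) :
    cutoff ε t ≤ cutoff δ t := by
  unfold cutoff
  gcongr
lemma cutoff_mul {δ ε t : ℝ} (hδ : 0 < δ) (h : δ ≤ ε / 2) :
    cutoff δ t * cutoff ε t = cutoff ε t := by
  rcases le_total t (ε / 2) with h' | h'
  · rw [cutoff_eq_zero (by linarith) h', mul_zero]
  · rw [cutoff_eq_one hδ (h.trans h'), one_mul]
lemma id_sub_cutoff {ε t : ℝ} (hε : 0 < ε) (ht : 0 ≤ t) : |t - cutoff ε t * t| ≤ ε := by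
  have h0 := cutoff_nonneg ε t
  have h1 := cutoff_le_one ε t
  rcases le_total t ε with h | h
  · rw [abs_le]; constructor <;> nlinarith
  · rw [cutoff_eq_one hε h]; simp [hε.le]

lemma fEps_star (ε : ℝ) (a : V) : star (fEps ε a) = fEps ε a := fc_star _ _
lemma fEps_nonneg (ε : ℝ) (a : V) : 0 ≤ fEps ε a :=
  cfcₙ_nonneg fun t _ => cutoff_nonneg ε t
lemma fEps_norm (ε : ℝ) (a : V) : ‖fEps ε a‖ ≤ 1 :=
  norm_cfcₙ_le fun t _ => by
    rw [Real.norm_eq_abs, abs_of_nonneg (cutoff_nonneg ε t)]; exact cutoff_le_one ε t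
lemma fEps_mul (a : V) {δ ε : ℝ} (hδ : 0 < δ) (h : δ ≤ ε / 2) :
    fEps δ a * fEps ε a = fEps ε a := by
  unfold fEps
  rw [fc_mul a (cutoff_cont _) (cutoff_zero _) (cutoff_cont _) (cutoff_zero _)]
  congr 1; ext t; exact cutoff_mul hδ h
lemma fEps_mul' (a : V) {δ ε : ℝ} (hδ : 0 < δ) (h : δ ≤ ε / 2) :
    fEps ε a * fEps δ a = fEps ε a := by
  have := congrArg star (fEps_mul a hδ h)
  rwa [star_mul, fEps_star, fEps_star] at this
lemma fEps_comm (a : V) (δ ε : ℝ) : fEps δ a * fEps ε a = fEps ε a * fEps δ a := fc_comm a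
lemma fEps_comm_self {a : V} (ha : 0 ≤ a) (ε : ℝ) : fEps ε a * a = a * fEps ε a := by
  have h := fc_comm a (f := cutoff ε) (g := fun t => t)
  rwa [fc_id ha] at h
lemma fEps_sub_norm {a : V} (ha : 0 ≤ a) {ε : ℝ} (hε : 0 < ε) : ‖a - fEps ε a * a‖ ≤ ε := by
  have h : a - fEps ε a * a = cfcₙ (fun t : ℝ => t - cutoff ε t * t) a := by
    have h1 := fc_mul a (cutoff_cont ε) (cutoff_zero ε) continuous_id rfl
    have h2 := fc_sub a (f := fun t => t) (g := fun t => cutoff ε t * t) continuous_id rfl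
      ((cutoff_cont ε).mul continuous_id) (by simp)
    rw [← h2, fc_id ha]
    change _ = a - cfcₙ (fun t : ℝ => cutoff ε t * id t) a
    rw [← h1]
    change _ = a - fEps ε a * cfcₙ (fun t : ℝ => t) a
    rw [fc_id ha]
  rw [h]
  exact fc_norm ha fun t ht => id_sub_cutoff hε ht
lemma fEps_le_smul {a : V} (ha : 0 ≤ a) {ε : ℝ} (hε : 0 < ε) : fEps ε a ≤ (2 / ε) • a := by
  have h : (2 / ε) • a = cfcₙ (fun t : ℝ => (2 / ε) * t) a := by
    rw [cfcₙ_const_mul_id (2 / ε) a (IsSelfAdjoint.of_nonneg ha)]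
  rw [h]
  exact fc_mono ha (cutoff_cont ε) (by simp) (by fun_prop) (by simp)
    fun t ht => cutoff_le_lin hε ht
lemma fEps_anti {a : V} (ha : 0 ≤ a) {δ ε : ℝ} (hδ : 0 < δ) (h : δ ≤ ε) :
    fEps ε a ≤ fEps δ a :=
  fc_mono ha (cutoff_cont ε) (by simp) (cutoff_cont δ) (by simp) fun t ht => cutoff_anti hδ h ht

lemma mem_Rid_self {a : V} (ha : 0 ≤ a) : a ∈ Rid a := by
  refine Rid_of_tendsto (u := fun n : ℕ => fEps (1 / (n + 1)) a * a) (fun n => ?_) ?_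
  · rw [fEps_comm_self ha]; exact mul_mem_Rid_self _ _
  · rw [tendsto_iff_norm_sub_tendsto_zero]
    refine squeeze_zero (fun _ => norm_nonneg _) (fun n => ?_)
      (tendsto_one_div_add_atTop_nhds_zero_nat (𝕜 := ℝ))
    rw [norm_sub_rev]; exact fEps_sub_norm ha (by positivity)

lemma fc_mem_Rid {a b : V} (ha : 0 ≤ a) (h : a ∈ Rid b) (f : ℝ → ℝ) : cfcₙ f a ∈ Rid b := by
  have : a ∈ Hb b := ⟨h, by rwa [sa ha]⟩
  have hcl := Hb_closed b
  exact (cfcₙ_mem (𝕜' := ℂ) (s := Hb b) f this).1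

lemma fEps_mem_Rid {a b : V} (ha : 0 ≤ a) (h : a ∈ Rid b) (ε : ℝ) : fEps ε a ∈ Rid b :=
  fc_mem_Rid ha h _

lemma sqrt_mem_Rid {a b : V} (ha : 0 ≤ a) (h : a ∈ Rid b) : CFC.sqrt a ∈ Rid b := by
  rw [CFC.sqrt_eq_real_sqrt a ha]
  exact fc_mem_Rid ha h _

lemma sqrt_nonneg' (a : V) : 0 ≤ CFC.sqrt a := CFC.sqrt_nonneg a
lemma sqrt_star (a : V) : star (CFC.sqrt a) = CFC.sqrt a := sa (sqrt_nonneg' a)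
lemma sqrt_mul {a : V} (ha : 0 ≤ a) : CFC.sqrt a * CFC.sqrt a = a := CFC.sqrt_mul_sqrt_self a ha

lemma smul_nonneg_r {a : V} (ha : 0 ≤ a) {r : ℝ} (hr : 0 ≤ r) : 0 ≤ r • a := smul_nonneg hr ha

/-- Conjugation by `1 - E`. -/
lemma conj_one_sub {E a b : V} (hE : star E = E) (h : a ≤ b) (ha : IsSelfAdjoint a)
    (hb : IsSelfAdjoint b) :
    a - E * a - a * E + E * a * E ≤ b - E * b - b * E + E * b * E := by
  have h1 : (a : Unitization ℂ V) ≤ b := (Unitization.inr_le_iff a b ha hb).2 h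
  have h2 := star_right_conjugate_le_conjugate h1 (1 - (E : Unitization ℂ V))
  have key : ∀ c : V, (1 - (E : Unitization ℂ V)) * c * star (1 - (E : Unitization ℂ V)) =
      ((c - E * c - c * E + E * c * E : V) : Unitization ℂ V) := by
    intro c
    rw [star_sub, star_one, ← Unitization.inr_star, hE]
    simp only [Unitization.inr_sub, Unitization.inr_add, Unitization.inr_mul]
    noncomm_ring
  rw [key, key] at h2
  have hsa : ∀ c : V, IsSelfAdjoint c → IsSelfAdjoint (c - E * c - c * E + E * c * E) := by
    intro c hc
    rw [isSelfAdjoint_iff]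
    simp only [star_add, star_sub, star_mul, hE, hc.star_eq, mul_assoc]
    abel
  exact (Unitization.inr_le_iff _ _ (hsa a ha) (hsa b hb)).1 h2

/-- R1 -/
lemma norm_sub_fEps_mul {x e : V} (h : x * star x ≤ e) {η : ℝ} (hη : 0 < η) :
    ‖x - fEps η e * x‖ ^ 2 ≤ η := by
  have he : 0 ≤ e := (mul_star_self_nonneg x).trans h
  set E := fEps η e with hE
  have hEs : star E = E := fEps_star _ _
  have h1 : ‖x - E * x‖ ^ 2 = ‖x * star x - E * (x * star x) - x * star x * E
      + E * (x * star x) * E‖ := by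
    rw [pow_two, ← CStarRing.norm_self_mul_star]
    congr 1
    rw [star_sub, star_mul, hEs]
    noncomm_ring
  rw [h1]
  have hh := conj_one_sub hEs h (IsSelfAdjoint.of_nonneg (mul_star_self_nonneg x))
    (IsSelfAdjoint.of_nonneg he)
  have h0 := conj_one_sub hEs (mul_star_self_nonneg x) (IsSelfAdjoint.zero V)
    (IsSelfAdjoint.of_nonneg (mul_star_self_nonneg x))
  simp only [mul_zero, zero_mul, sub_zero, add_zero] at h0
  refine (CStarAlgebra.norm_le_norm_of_nonneg_of_le h0 hh).trans ?_
  have h2 : e - E * e - e * E + E * e * E = (e - E * e) - E * (e - E * e) := by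
    have hc : e * E = E * e := (fEps_comm_self he η).symm
    rw [mul_assoc E e E, hc]; noncomm_ring
  have h3 : e - E * e = cfcₙ (fun t : ℝ => t - cutoff η t * t) e := by
    have h1 := fc_mul e (cutoff_cont η) (cutoff_zero η) continuous_id rfl
    have h2 := fc_sub e (f := fun t => t) (g := fun t => cutoff η t * t) continuous_id rfl
      ((cutoff_cont η).mul continuous_id) (by simp)
    rw [← h2, fc_id he]
    change _ = e - cfcₙ (fun t : ℝ => cutoff η t * id t) e
    rw [← h1]
    change _ = e - fEps η e * cfcₙ (fun t : ℝ => t) e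
    rw [fc_id he]
  have hc := cutoff_cont η
  have h4 : (e - E * e) - E * (e - E * e) = cfcₙ (fun t : ℝ => (t - cutoff η t * t) -
      cutoff η t * (t - cutoff η t * t)) e := by
    rw [h3, hE]; unfold fEps
    rw [fc_mul e hc (by simp) (by fun_prop) (by simp), fc_sub e (by fun_prop) (by simp)
      (by fun_prop) (by simp)]
  rw [h2, h4]
  refine fc_norm he fun t ht => ?_
  have h5 := id_sub_cutoff hη ht
  have h6 := cutoff_nonneg η t
  have h7 := cutoff_le_one η t
  have : (t - cutoff η t * t) - cutoff η t * (t - cutoff η t * t) =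
    (1 - cutoff η t) * (t - cutoff η t * t) := by ring
  rw [this, abs_mul, abs_of_nonneg (by linarith)]
  nlinarith [abs_nonneg (t - cutoff η t * t)]

lemma norm_sub_fEps_mul' {x e : V} (h : x * star x ≤ e) {ε : ℝ} (hε : 0 < ε) {η : ℝ} (hη : 0 < η)
    (hle : η ≤ ε ^ 2) : ‖x - fEps η e * x‖ ≤ ε := by
  have := (norm_sub_fEps_mul h hη).trans hle
  exact le_of_sq_le_sq this hε.le

lemma mem_Rid_of_le {x e : V} (h : x * star x ≤ e) : x ∈ Rid e := by
  have he : 0 ≤ e := (mul_star_self_nonneg x).trans h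
  have : x ∈ closure (Rid e : Set V) := by
    rw [Metric.mem_closure_iff]
    intro ε hε
    refine ⟨fEps ((ε / 2) ^ 2) e * x, mul_mem_Rid (fEps_mem_Rid he (mem_Rid_self he) _) _, ?_⟩
    rw [dist_eq_norm]
    exact (norm_sub_fEps_mul' h (half_pos hε) (by positivity) le_rfl).trans_lt (half_lt_self hε)
  rwa [(Rid_closed e).closure_eq] at this

lemma mem_Rid_mul_star (x : V) : x ∈ Rid (x * star x) := mem_Rid_of_le le_rfl

lemma mem_Rid_of_le' {p q : V} (hp : 0 ≤ p) (h : p ≤ q) : p ∈ Rid q := by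
  have h1 : CFC.sqrt p ∈ Rid q := mem_Rid_of_le (by rwa [sqrt_star, sqrt_mul hp])
  rw [← sqrt_mul hp]; exact mul_mem_Rid h1 _

end P2

section P3
variable {V : Type*} [NonUnitalCStarAlgebra V] [PartialOrder V] [StarOrderedRing V]

/-! ### Dimension functions -/

lemma fEps_mul_approx {b x : V} (hb : 0 ≤ b) (hx : x ∈ Rid b) {ε : ℝ} (hε : 0 < ε) :
    ∃ η₀ > 0, ∀ η, 0 < η → η ≤ η₀ → ‖x - fEps η b * x‖ < ε := by
  obtain ⟨y, hy⟩ := Rid_approx hx (show 0 < ε / 4 by positivity)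
  refine ⟨ε / (4 * (‖y‖ + 1)), by positivity, fun η h0 h1 => ?_⟩
  have e1 : x - fEps η b * x = (x - b * y) + (b - fEps η b * b) * y - fEps η b * (x - b * y) := by
    noncomm_ring
  rw [e1]
  have h2 : ‖(b - fEps η b * b) * y‖ ≤ ε / 4 := by
    refine (norm_mul_le _ _).trans ?_
    have h3 := fEps_sub_norm hb h0
    calc _ ≤ (ε / (4 * (‖y‖ + 1))) * (‖y‖ + 1) := by
            gcongr
            · exact h3.trans h1
            · linarith
      _ = ε / 4 := by field_simp
  have h4 : ‖fEps η b * (x - b * y)‖ ≤ ε / 4 := by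
    refine (norm_mul_le _ _).trans ?_
    have := fEps_norm η b
    nlinarith [norm_nonneg (x - b * y), norm_nonneg (fEps η b)]
  have h5 := norm_sub_le ((x - b * y) + (b - fEps η b * b) * y) (fEps η b * (x - b * y))
  have h6 := norm_add_le (x - b * y) ((b - fEps η b * b) * y)
  linarith

lemma fEps_mul_tendsto {b x : V} (hb : 0 ≤ b) (hx : x ∈ Rid b) :
    Tendsto (fun n : ℕ => fEps (1 / (n + 1)) b * x) atTop (𝓝 x) := by
  rw [Metric.tendsto_atTop]
  intro ε hε
  obtain ⟨η₀, h0, h1⟩ := fEps_mul_approx hb hx hε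
  obtain ⟨N, hN⟩ := exists_nat_one_div_lt h0
  refine ⟨N, fun n hn => ?_⟩
  rw [dist_eq_norm, norm_sub_rev]
  refine h1 _ (by positivity) (le_trans ?_ hN.le)
  gcongr

/-- `F ≤ g` when `g` acts as a unit on `F`. -/
lemma le_of_unit {g F : V} (hg : 0 ≤ g) (hF : 0 ≤ F) (hg1 : ‖g‖ ≤ 1) (hF1 : ‖F‖ ≤ 1)
    (h : g * F = F) : F ≤ g := by
  have h' : F * g = F := by
    have := congrArg star h
    rwa [star_mul, sa hg, sa hF] at this
  have key : ∀ (c y : V), 0 ≤ c → 0 ≤ y → ‖c‖ ≤ 1 → y * c * y ≤ y * y := by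
    intro c y hc hy hc1
    have := CStarAlgebra.star_left_conjugate_le_norm_smul (a := y) (b := c)
      (IsSelfAdjoint.of_nonneg hc)
    rw [sa hy] at this
    refine this.trans ?_
    have h2 : 0 ≤ y * y := by simpa [sa hy] using star_mul_self_nonneg y
    have h3 : 0 ≤ (1 - ‖c‖) • (y * y) := smul_nonneg_r h2 (by linarith)
    rw [sub_smul, one_smul, sub_nonneg] at h3
    exact h3
  have h1 := key F g hF hg hF1
  rw [h, h'] at h1
  have h2 := key g (CFC.sqrt g) hg (sqrt_nonneg' g) hg1
  rw [sqrt_mul hg] at h2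
  have h3 : CFC.sqrt g * g * CFC.sqrt g = g * g := by
    nth_rw 2 [← sqrt_mul hg]
    rw [← mul_assoc, sqrt_mul hg, mul_assoc, sqrt_mul hg]
  rw [h3] at h2
  exact h1.trans h2

lemma orth_norm {F G : V} (hF : 0 ≤ F) (hG : 0 ≤ G) (hF1 : ‖F‖ ≤ 1) (hG1 : ‖G‖ ≤ 1)
    (h : F * G = 0) : ‖F + G‖ ≤ 1 := by
  have h' : G * F = 0 := by
    have := congrArg star h
    rwa [star_mul, sa hG, sa hF, star_zero] at this
  have key : ∀ (g : V), 0 ≤ g → ‖g‖ ≤ 1 → g * g ≤ g := by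
    intro g hg hg1
    have := CStarAlgebra.star_left_conjugate_le_norm_smul (a := CFC.sqrt g) (b := g)
      (IsSelfAdjoint.of_nonneg hg)
    rw [sqrt_star, sqrt_mul hg] at this
    have h3 : CFC.sqrt g * g * CFC.sqrt g = g * g := by
      nth_rw 2 [← sqrt_mul hg]
      rw [← mul_assoc, sqrt_mul hg, mul_assoc, sqrt_mul hg]
    rw [h3] at this
    refine this.trans ?_
    have h3 : 0 ≤ (1 - ‖g‖) • g := smul_nonneg_r hg (by linarith)
    rw [sub_smul, one_smul, sub_nonneg] at h3
    exact h3
  have h1 : (F + G) * (F + G) ≤ F + G := by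
    have : (F + G) * (F + G) = F * F + G * G := by
      rw [mul_add, add_mul, add_mul, h, h']; simp
    rw [this]
    exact add_le_add (key F hF hF1) (key G hG hG1)
  have h0 : 0 ≤ F + G := add_nonneg hF hG
  have h2 : ‖F + G‖ * ‖F + G‖ ≤ ‖F + G‖ := by
    have h3 : 0 ≤ (F + G) * (F + G) := by simpa [sa h0] using star_mul_self_nonneg (F + G)
    have := CStarAlgebra.norm_le_norm_of_nonneg_of_le h3 h1
    have h4 : ‖(F + G) * (F + G)‖ = ‖F + G‖ * ‖F + G‖ := by
      conv_lhs => rw [show (F + G) * (F + G) = star (F + G) * (F + G) by rw [sa h0]]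
      exact CStarRing.norm_star_mul_self
    rwa [h4] at this
  by_contra hc
  push Not at hc
  nlinarith

variable (τ : QuasiTrace V)

lemma tau_mono {x y : V} (hx : 0 ≤ x) (h : x ≤ y) (hc : x * y = y * x) :
    τ.toFun x ≤ τ.toFun y := by
  have := τ.map_add_of_commute x (y - x) hx (sub_nonneg.2 h) (by rw [mul_sub, sub_mul, hc])
  rw [add_sub_cancel] at this
  rw [this]; exact le_self_add

lemma tau_fEps_le {a : V} (ha : 0 ≤ a) {ε : ℝ} (hε : 0 < ε) : τ.toFun (fEps ε a) ≤ dTau τ a := by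
  obtain ⟨n, hn⟩ := exists_nat_one_div_lt hε
  refine le_trans ?_ (le_iSup (fun n : ℕ => τ.toFun (fEps (1 / (n + 1)) a)) n)
  exact tau_mono τ (fEps_nonneg _ _) (fEps_anti ha (by positivity) hn.le) (fEps_comm _ _ _)

lemma tau_fEps_anti {a : V} (ha : 0 ≤ a) {δ ε : ℝ} (hδ : 0 < δ) (h : δ ≤ ε) :
    τ.toFun (fEps ε a) ≤ τ.toFun (fEps δ a) :=
  tau_mono τ (fEps_nonneg _ _) (fEps_anti ha hδ h) (fEps_comm _ _ _)

lemma d_le {a : V} {c : ℝ≥0∞} (h : ∀ δ : ℝ, 0 < δ → τ.toFun (fEps δ a) ≤ c) : dTau τ a ≤ c :=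
  iSup_le fun n => h _ (by positivity)

lemma tau_le_of_tendsto {t : V} {u : ℕ → V} {c : ℝ≥0∞} (hu : ∀ n, 0 ≤ u n)
    (ht : Tendsto u atTop (𝓝 t)) (h : ∀ n, τ.toFun (u n) ≤ c) : τ.toFun t ≤ c := by
  have ht0 : 0 ≤ t := ge_of_tendsto' ht hu
  by_contra hc
  push Not at hc
  have h1 := τ.lowerSemicontinuousOn t ht0 c hc
  have h2 : Tendsto u atTop (𝓝[{a : V | 0 ≤ a}] t) :=
    tendsto_nhdsWithin_iff.2 ⟨ht, Eventually.of_forall hu⟩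
  obtain ⟨n, hn⟩ := (h2.eventually h1).exists
  exact absurd (h n) (not_le.2 hn)

/-- D6 -/
lemma d_le_tau {g x : V} (hg : 0 ≤ g) (hg1 : ‖g‖ ≤ 1) (hx : 0 ≤ x) (h : g * x = x) :
    dTau τ x ≤ τ.toFun g := by
  refine d_le τ fun δ hδ => ?_
  have h1 : g * fEps δ x = fEps δ x := by
    refine Rid_induction (p := fun y => g * y = y) (isClosed_eq (by fun_prop) continuous_id) ?_
      (fEps_mem_Rid hx (mem_Rid_self hx) δ)
    intro y; rw [← mul_assoc, h]
  refine tau_mono τ (fEps_nonneg _ _) (le_of_unit hg (fEps_nonneg _ _) hg1 (fEps_norm _ _) h1) ?_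
  have := congrArg star h1
  rw [star_mul, sa hg, fEps_star] at this
  rw [this, h1]

/-- D0 -/
lemma tau_le_d {t b : V} (ht : 0 ≤ t) (hb : 0 ≤ b) (h : t ∈ Rid b) (h1 : ‖t‖ ≤ 1) :
    τ.toFun t ≤ dTau τ b := by
  set f : ℕ → V := fun n => fEps (1 / ((n : ℝ) + 1)) b with hf
  have hlim : Tendsto (fun n => f n * t * f n) atTop (𝓝 t) := by
    have l1 : Tendsto (fun n => f n * t) atTop (𝓝 t) := fEps_mul_tendsto hb h
    have l2 : Tendsto (fun n => t * f n) atTop (𝓝 t) := by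
      have := (continuous_star.tendsto t).comp l1
      rw [sa ht] at this
      refine this.congr fun n => ?_
      simp only [Function.comp_apply, star_mul, sa ht, hf, fEps_star]
    rw [tendsto_iff_norm_sub_tendsto_zero] at l1 l2 ⊢
    refine squeeze_zero (fun _ => norm_nonneg _) (fun n => ?_) (by simpa using l1.add l2)
    have e : f n * t * f n - t = f n * (t * f n - t) + (f n * t - t) := by noncomm_ring
    rw [e, add_comm (‖f n * t - t‖)]
    refine (norm_add_le _ _).trans ?_
    gcongr
    refine (norm_mul_le _ _).trans ?_
    have : ‖f n‖ ≤ 1 := fEps_norm _ _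
    nlinarith [norm_nonneg (t * f n - t)]
  have hn0 : ∀ n, 0 ≤ f n * t * f n := by
    intro n
    have := star_left_conjugate_nonneg ht (f n)
    rwa [show star (f n) = f n from fEps_star _ _] at this
  refine tau_le_of_tendsto τ hn0 hlim fun n => ?_
  have hδ : (0 : ℝ) < 1 / ((n : ℝ) + 1) := by positivity
  set g := fEps (1 / ((n : ℝ) + 1) / 2) b with hg
  have hgf : g * f n = f n := fEps_mul b (by positivity) le_rfl
  have hfg : f n * g = f n := fEps_mul' b (by positivity) le_rfl
  have hn1 : ‖f n * t * f n‖ ≤ 1 := by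
    have h2 : ‖f n‖ ≤ 1 := fEps_norm _ _
    have h3 := norm_mul_le (f n * t) (f n)
    have h4 := norm_mul_le (f n) t
    have h5 : ‖f n * t‖ ≤ 1 := by nlinarith [norm_nonneg t, norm_nonneg (f n)]
    nlinarith [norm_nonneg (f n * t), norm_nonneg (f n)]
  have hu : g * (f n * t * f n) = f n * t * f n := by
    rw [← mul_assoc, ← mul_assoc, hgf]
  have hu' : (f n * t * f n) * g = f n * t * f n := by
    rw [mul_assoc, hfg]
  refine (tau_mono τ (hn0 n) (le_of_unit (fEps_nonneg _ _) (hn0 n) (fEps_norm _ _) hn1 hu)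
    (by rw [hu, hu'])).trans ?_
  exact tau_fEps_le τ hb (by positivity)

lemma d_le_d {t b : V} (ht : 0 ≤ t) (hb : 0 ≤ b) (h : t ∈ Rid b) : dTau τ t ≤ dTau τ b :=
  d_le τ fun δ _ => tau_le_d τ (fEps_nonneg _ _) hb (fEps_mem_Rid ht h δ) (fEps_norm _ _)

/-- square root of cutoff over identity -/
def kfun (δ : ℝ) : ℝ → ℝ := fun t => Real.sqrt (cutoff δ t / max t (δ / 2))

lemma kfun_cont {δ : ℝ} (hδ : 0 < δ) : Continuous (kfun δ) := by
  unfold kfun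
  refine Real.continuous_sqrt.comp ((cutoff_cont δ).div₀ (by fun_prop) fun t => ?_)
  have : δ / 2 ≤ max t (δ / 2) := le_max_right _ _
  have : 0 < δ / 2 := by positivity
  linarith

lemma kfun_zero (δ : ℝ) : kfun δ 0 = 0 := by simp [kfun]

lemma kfun_sq {δ t : ℝ} (hδ : 0 < δ) : kfun δ t * t * kfun δ t = cutoff δ t := by
  have h : kfun δ t * t * kfun δ t = (kfun δ t * kfun δ t) * t := by ring
  have h0 : 0 < max t (δ / 2) := lt_max_of_lt_right (by positivity)
  rw [h]
  unfold kfun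
  rw [Real.mul_self_sqrt (div_nonneg (cutoff_nonneg _ _) h0.le)]
  rcases le_total t (δ / 2) with h | h
  · rw [cutoff_eq_zero hδ h]; simp
  · rw [max_eq_left h]
    have : 0 < t := by linarith
    field_simp

lemma kfun_conj {p : V} (hp : 0 ≤ p) {δ : ℝ} (hδ : 0 < δ) :
    cfcₙ (kfun δ) p * p * cfcₙ (kfun δ) p = fEps δ p := by
  have hk := kfun_cont hδ
  conv_lhs => rw [← fc_id hp]
  rw [fc_id hp]
  nth_rw 2 [← fc_id hp]
  rw [fc_mul p hk (kfun_zero δ) continuous_id' rfl, fc_mul p (by fun_prop) (by simp) hk (kfun_zero δ)]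
  unfold fEps
  congr 1; ext t; exact kfun_sq hδ

/-- D1 -/
lemma d_star_le (x : V) : dTau τ (x * star x) ≤ dTau τ (star x * x) := by
  refine d_le τ fun δ hδ => ?_
  set p := x * star x with hp
  have hp0 : 0 ≤ p := mul_star_self_nonneg x
  set k := cfcₙ (kfun δ) p with hk
  have hks : star k = k := fc_star _ _
  have h1 : fEps δ p = (k * x) * star (k * x) := by
    rw [← kfun_conj hp0 hδ, star_mul, hks, hp]; simp only [mul_assoc, hk, hp]
  have h2 : ‖star (k * x) * (k * x)‖ ≤ 1 := by
    rw [CStarRing.norm_star_mul_self, ← CStarRing.norm_self_mul_star, ← h1]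
    exact fEps_norm _ _
  rw [h1, ← τ.map_star_mul_self]
  refine tau_le_d τ (star_mul_self_nonneg _) (star_mul_self_nonneg _) ?_ h2
  rw [star_mul, mul_assoc]
  have := mem_Rid_mul_star (star x)
  rw [star_star] at this
  exact mul_mem_Rid this _

lemma d_star_eq (x : V) : dTau τ (x * star x) = dTau τ (star x * x) := by
  refine le_antisymm (d_star_le τ x) ?_
  have := d_star_le τ (star x)
  rwa [star_star] at this

lemma orth_comm {x y : V} (hx : 0 ≤ x) (hy : 0 ≤ y) (h : x * y = 0) : y * x = 0 := by
  have := congrArg star h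
  rwa [star_mul, sa hy, sa hx, star_zero] at this

/-- D2 -/
lemma d_orth_ge {x y b : V} (hx : 0 ≤ x) (hy : 0 ≤ y) (hb : 0 ≤ b) (h : x * y = 0)
    (hxb : x ∈ Rid b) (hyb : y ∈ Rid b) : dTau τ x + dTau τ y ≤ dTau τ b := by
  refine ENNReal.iSup_add_iSup_le fun m n => ?_
  set F := fEps (1 / ((m : ℝ) + 1)) x
  set G := fEps (1 / ((n : ℝ) + 1)) y
  have h1 : x * G = 0 := Rid_mul_zero h (fEps_mem_Rid hy (mem_Rid_self hy) _)
  have h2 : G * x = 0 := orth_comm hx (fEps_nonneg _ _) h1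
  have h3 : G * F = 0 := Rid_mul_zero h2 (fEps_mem_Rid hx (mem_Rid_self hx) _)
  have h4 : F * G = 0 := orth_comm (fEps_nonneg _ _) (fEps_nonneg _ _) h3
  rw [← τ.map_add_of_commute F G (fEps_nonneg _ _) (fEps_nonneg _ _) (by rw [h3, h4])]
  exact tau_le_d τ (add_nonneg (fEps_nonneg _ _) (fEps_nonneg _ _)) hb
    (add_mem (fEps_mem_Rid hx hxb _) (fEps_mem_Rid hy hyb _))
    (orth_norm (fEps_nonneg _ _) (fEps_nonneg _ _) (fEps_norm _ _) (fEps_norm _ _) h4)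

lemma d_orth_le {p q : V} (hp : 0 ≤ p) (hq : 0 ≤ q) (h : p * q = 0) :
    dTau τ (p + q) ≤ dTau τ p + dTau τ q := by
  refine d_le τ fun δ hδ => ?_
  have h' := orth_comm hp hq h
  have hs : 0 ≤ p + q := add_nonneg hp hq
  set k := cfcₙ (kfun δ) (p + q) with hk
  have hks : star k = k := fc_star _ _
  have hF : fEps δ (p + q) = k * p * k + k * q * k := by
    rw [← kfun_conj hs hδ]; noncomm_ring
  have hc : ∀ c : V, Commute (p + q) c → k * c = c * k := fun c hc =>
    (Commute.cfcₙ hc (by rw [sa hs]; exact hc) (kfun δ))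
  have hkp : k * p = p * k := hc p (by rw [commute_iff_eq]; rw [add_mul, mul_add, h, h'])
  have hkq : k * q = q * k := hc q (by rw [commute_iff_eq]; rw [add_mul, mul_add, h, h'])
  have hp' : 0 ≤ k * p * k := by simpa [hks] using star_left_conjugate_nonneg hp k
  have hq' : 0 ≤ k * q * k := by simpa [hks] using star_left_conjugate_nonneg hq k
  have o : (k * p * k) * (k * q * k) = 0 := by
    have : (k * p * k) * (k * q * k) = k * k * (p * q) * (k * k) := by
      rw [show k * p * k = k * k * p by rw [mul_assoc, ← hkp, mul_assoc],
        show k * q * k = q * k * k by rw [hkq]]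
      noncomm_ring
    rw [this, h]; simp
  have o' := orth_comm hp' hq' o
  rw [hF, τ.map_add_of_commute _ _ hp' hq' (by rw [o, o'])]
  have hF1 : ‖k * p * k + k * q * k‖ ≤ 1 := by rw [← hF]; exact fEps_norm _ _
  refine add_le_add (tau_le_d τ hp' hp ?_ ?_) (tau_le_d τ hq' hq ?_ ?_)
  · rw [hkp, mul_assoc]; exact mul_mem_Rid_self _ _
  · exact (CStarAlgebra.norm_le_norm_of_nonneg_of_le hp' (le_add_of_nonneg_right hq')).trans hF1
  · rw [hkq, mul_assoc]; exact mul_mem_Rid_self _ _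
  · exact (CStarAlgebra.norm_le_norm_of_nonneg_of_le hq' (le_add_of_nonneg_left hp')).trans hF1

lemma d_orth {p q : V} (hp : 0 ≤ p) (hq : 0 ≤ q) (h : p * q = 0) :
    dTau τ (p + q) = dTau τ p + dTau τ q :=
  le_antisymm (d_orth_le τ hp hq h) (d_orth_ge τ hp hq (add_nonneg hp hq) h
    (mem_Rid_of_le' hp (le_add_of_nonneg_right hq)) (mem_Rid_of_le' hq (le_add_of_nonneg_left hp)))

/-- Stability: orthogonal copies. -/
def IsCopies (L : ℕ → V → V) : Prop :=
  ∀ i j x y, star (L i x) * L j y = if i = j then star x * y else 0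

lemma add_mul_star_le (a c : V) :
    (a + c) * star (a + c) ≤ (a * star a + c * star c) + (a * star a + c * star c) := by
  rw [← sub_nonneg]
  have : (a * star a + c * star c) + (a * star a + c * star c) - (a + c) * star (a + c)
      = (a - c) * star (a - c) := by
    rw [star_add, star_sub]; noncomm_ring
  rw [this]; exact mul_star_self_nonneg _

lemma add_self_mem {x b : V} (hx : x ∈ Rid (b + b)) : x ∈ Rid b := by
  refine Rid_induction (p := fun x => x ∈ Rid b) (Rid_closed b) (fun y => ?_) hx
  rw [add_mul]; exact add_mem (mul_mem_Rid_self _ _) (mul_mem_Rid_self _ _)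

lemma mem_Rid_add (a c : V) : (a + c) ∈ Rid (a * star a + c * star c) :=
  add_self_mem (mem_Rid_of_le (add_mul_star_le a c))

/-- D3 -/
lemma d_add_le {L : ℕ → V → V} (hL : IsCopies L) {p q : V} (hp : 0 ≤ p) (hq : 0 ≤ q) :
    dTau τ (p + q) ≤ dTau τ p + dTau τ q := by
  obtain ⟨A, hA⟩ : ∃ A, A = star (L 0 (CFC.sqrt p)) := ⟨_, rfl⟩
  obtain ⟨B, hB⟩ : ∃ B, B = star (L 1 (CFC.sqrt q)) := ⟨_, rfl⟩
  have hAA : A * star A = p := by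
    rw [hA, star_star, hL]; simp [sqrt_star, sqrt_mul hp]
  have hBB : B * star B = q := by
    rw [hB, star_star, hL]; simp [sqrt_star, sqrt_mul hq]
  have hAB : A * star B = 0 := by
    rw [hA, hB, star_star, hL]; simp
  have hBA : B * star A = 0 := by
    have := congrArg star hAB
    rwa [star_mul, star_star, star_zero] at this
  have hz : (A + B) * star (A + B) = p + q := by
    rw [star_add, mul_add, add_mul, add_mul, hAA, hBB, hAB, hBA]; simp
  rw [← hz, d_star_eq]
  have h1 : star (A + B) * (A + B) ∈ Rid (star A * A + star B * B) := by
    have := mem_Rid_add (star A) (star B)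
    rw [star_star, star_star] at this
    rw [star_add]; exact mul_mem_Rid this _
  have hA0 := star_mul_self_nonneg A
  have hB0 := star_mul_self_nonneg B
  refine (d_le_d τ (star_mul_self_nonneg _) (add_nonneg hA0 hB0) h1).trans ?_
  refine (d_orth_le τ hA0 hB0 ?_).trans ?_
  · rw [mul_assoc, ← mul_assoc A, hAB]; simp
  · rw [← d_star_eq, ← d_star_eq, hAA, hBB]

lemma d_sum_le {L : ℕ → V → V} (hL : IsCopies L) {ι : Type*} (s : Finset ι) (p : ι → V)
    (hp : ∀ i ∈ s, 0 ≤ p i) : dTau τ (∑ i ∈ s, p i) ≤ ∑ i ∈ s, dTau τ (p i) := by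
  classical
  induction s using Finset.induction_on with
  | empty =>
    simp only [Finset.sum_empty, nonpos_iff_eq_zero]
    refine le_antisymm (d_le τ fun δ _ => ?_) bot_le
    simp [fEps, cfcₙ_apply_zero, τ.map_zero]
  | insert i s hi ih =>
    rw [Finset.sum_insert hi, Finset.sum_insert hi]
    refine (d_add_le τ hL (hp i (Finset.mem_insert_self _ _)) (Finset.sum_nonneg fun j hj =>
      hp j (Finset.mem_insert_of_mem hj))).trans ?_
    gcongr
    exact ih fun j hj => hp j (Finset.mem_insert_of_mem hj)

lemma d_zero : dTau τ (0 : V) = 0 := by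
  refine le_antisymm (d_le τ fun δ _ => ?_) bot_le
  simp [fEps, cfcₙ_apply_zero, τ.map_zero]

/-- `(1 - E) b (1 - E)` -/
def cutc (E b : V) : V := b - E * b - b * E + E * b * E

lemma cutc_eq {E b : V} (hE : star E = E) (hb : 0 ≤ b) :
    cutc E b = (CFC.sqrt b - E * CFC.sqrt b) * star (CFC.sqrt b - E * CFC.sqrt b) := by
  rw [star_sub, star_mul, sqrt_star, hE, cutc]
  conv_lhs => rw [← sqrt_mul hb]
  noncomm_ring

lemma cutc_nonneg {E b : V} (hE : star E = E) (hb : 0 ≤ b) : 0 ≤ cutc E b := by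
  rw [cutc_eq hE hb]; exact mul_star_self_nonneg _

lemma cutc_mem {E b : V} (hb : 0 ≤ b) (h : E ∈ Rid b) : cutc E b ∈ Rid b :=
  add_mem (sub_mem (sub_mem (mem_Rid_self hb) (mul_mem_Rid h _)) (mul_mem_Rid_self _ _))
    (mul_mem_Rid (mul_mem_Rid h _) _)

/-- `(1-E)x ∈ Rid((1-E)b(1-E))` for `x ∈ Rid b`. -/
lemma sub_mul_mem_cutc {E b x : V} (hE : star E = E) (hb : 0 ≤ b) (hx : x ∈ Rid b) :
    x - E * x ∈ Rid (cutc E b) := by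
  refine Rid_induction (p := fun x => x - E * x ∈ Rid (cutc E b)) ?_ (fun y => ?_) hx
  · exact (Rid_closed _).preimage (by fun_prop : Continuous fun x : V => x - E * x)
  · have : b * y - E * (b * y) = (CFC.sqrt b - E * CFC.sqrt b) * (CFC.sqrt b * y) := by
      conv_lhs => rw [← sqrt_mul hb]
      noncomm_ring
    rw [this, cutc_eq hE hb]
    exact mul_mem_Rid (mem_Rid_mul_star _) _

/-- D4 -/
lemma d_cutc {L : ℕ → V → V} (hL : IsCopies L) {b e : V} (hb : 0 ≤ b) (he : 0 ≤ e) (η : ℝ) :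
    dTau τ b ≤ dTau τ e + dTau τ (cutc (fEps η e) b) := by
  set E := fEps η e with hE
  have hEs : star E = E := fEps_star _ _
  have h0 : b ∈ Rid (E * b * E + cutc E b) := by
    have h1 := mem_Rid_add (E * CFC.sqrt b) (CFC.sqrt b - E * CFC.sqrt b)
    rw [add_sub_cancel, ← cutc_eq hEs hb, star_mul, hEs, sqrt_star,
      show E * CFC.sqrt b * (CFC.sqrt b * E) = E * b * E by
        nth_rw 3 [← sqrt_mul hb]; noncomm_ring] at h1
    rw [← sqrt_mul hb]
    rw [sqrt_mul hb]
    have := mul_mem_Rid h1 (CFC.sqrt b)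
    rwa [sqrt_mul hb] at this
  have hP : 0 ≤ E * b * E := by simpa [hEs] using star_left_conjugate_nonneg hb E
  refine (d_le_d τ hb (add_nonneg hP (cutc_nonneg hEs hb)) h0).trans ?_
  refine (d_add_le τ hL hP (cutc_nonneg hEs hb)).trans ?_
  gcongr
  exact d_le_d τ hP he (mul_mem_Rid (mul_mem_Rid (fEps_mem_Rid he (mem_Rid_self he) _) _) _)

end P3

section P4u
variable {U : Type*} [CStarAlgebra U] [PartialOrder U] [StarOrderedRing U]

lemma norm_le_of_two_sided {x : U} (hx : IsSelfAdjoint x) {c : ℝ} 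
    (h1 : x ≤ algebraMap ℝ U c) (h2 : algebraMap ℝ U (-c) ≤ x) : ‖x‖ ≤ c ∨ Subsingleton U := by
  rcases subsingleton_or_nontrivial U with h | h
  · exact Or.inr h
  left
  have h1' := (le_algebraMap_iff_spectrum_le (R := ℝ) (a := x) hx).1 h1
  have h2' := (algebraMap_le_iff_le_spectrum (R := ℝ) (a := x) hx).1 h2
  have hc : 0 ≤ c := by
    obtain ⟨t, ht⟩ := CFC.spectrum_nonempty ℝ x hx
    have := h1' t ht
    have := h2' t ht
    linarith
  rw [← cfc_id' ℝ x hx]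
  refine norm_cfc_le hc fun t ht => ?_
  rw [Real.norm_eq_abs, abs_le]
  exact ⟨h2' t ht, h1' t ht⟩

lemma sq_norm_sub_le {s t : U} (hs : 0 ≤ s) (ht : 0 ≤ t) : ‖s - t‖ ^ 2 ≤ ‖s * s - t * t‖ := by
  have key : ∀ s t : U, 0 ≤ s → 0 ≤ t →
      s ≤ t + algebraMap ℝ U (Real.sqrt ‖s * s - t * t‖) := by
    intro s t hs ht
    set c := ‖s * s - t * t‖ with hc
    set r := Real.sqrt c
    have hr : 0 ≤ r := Real.sqrt_nonneg _
    have hrr : r * r = c := Real.mul_self_sqrt (norm_nonneg _)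
    have hsa : IsSelfAdjoint (s * s - t * t) := by
      rw [isSelfAdjoint_iff]; simp [star_sub, star_mul, sa hs, sa ht]
    have h1 : s * s ≤ t * t + algebraMap ℝ U c := by
      have := hsa.le_algebraMap_norm_self
      rw [← hc] at this
      have h3 := add_le_add_right this (t * t)
      rwa [add_sub_cancel] at h3
    have hA : algebraMap ℝ U r * t = r • t := by rw [Algebra.algebraMap_eq_smul_one, smul_mul_assoc, one_mul]
    have hA' : t * algebraMap ℝ U r = r • t := by rw [Algebra.algebraMap_eq_smul_one, mul_smul_comm, mul_one]
    have h2 : s * s ≤ (t + algebraMap ℝ U r) * (t + algebraMap ℝ U r) := by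
      have e : (t + algebraMap ℝ U r) * (t + algebraMap ℝ U r) =
          (t * t + algebraMap ℝ U c) + (r • t + r • t) := by
        rw [← hrr, map_mul, mul_add, add_mul, add_mul, hA, hA']; abel
      rw [e]
      exact h1.trans (le_add_of_nonneg_right (add_nonneg (smul_nonneg_r ht hr) (smul_nonneg_r ht hr)))
    have h3 := CFC.sqrt_le_sqrt _ _ h2
    have h0 : 0 ≤ t + algebraMap ℝ U r := add_nonneg ht (algebraMap_nonneg U hr)
    rwa [CFC.sqrt_mul_self s hs, CFC.sqrt_mul_self _ h0] at h3
  have k1 := key s t hs ht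
  have k2 := key t s ht hs
  rw [norm_sub_rev] at k2
  have hsa : IsSelfAdjoint (s - t) := by
    rw [isSelfAdjoint_iff]; simp [star_sub, sa hs, sa ht]
  rcases norm_le_of_two_sided hsa (c := Real.sqrt ‖s * s - t * t‖)
    (by rw [sub_le_iff_le_add']; exact k1)
    (by rw [map_neg, neg_le_sub_iff_le_add]; exact k2) with h | h
  · calc ‖s - t‖ ^ 2 ≤ (Real.sqrt ‖s * s - t * t‖) ^ 2 := by gcongr
      _ = _ := Real.sq_sqrt (norm_nonneg _)
  · rw [Subsingleton.elim (s - t) 0]; simp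
end P4u

section P4
variable {V : Type*} [NonUnitalCStarAlgebra V] [PartialOrder V] [StarOrderedRing V]

/-- Elements of the unitization whose `V`-part is in the hereditary subalgebra of `b`. -/
def Ab (b : V) : StarSubalgebra ℂ (Unitization ℂ V) where
  carrier := {m | m.snd ∈ Hb b}
  add_mem' := by
    intro x y hx hy
    have hx' : x.snd ∈ Hb b := hx
    have hy' : y.snd ∈ Hb b := hy
    change (x + y).snd ∈ Hb b
    rw [Unitization.snd_add]
    exact add_mem hx' hy'
  mul_mem' := by
    intro x y hx hy
    change (x * y).snd ∈ Hb b
    rw [Unitization.snd_mul]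
    exact add_mem (add_mem (SMulMemClass.smul_mem _ hy) (SMulMemClass.smul_mem _ hx)) (mul_mem hx hy)
  algebraMap_mem' := by
    intro r
    change (algebraMap ℂ (Unitization ℂ V) r).snd ∈ Hb b
    rw [Unitization.algebraMap_eq_inl]
    simp [Unitization.snd_inl]
  star_mem' := by
    intro x hx
    have hx' : x.snd ∈ Hb b := hx
    change (star x).snd ∈ Hb b
    rw [Unitization.snd_star]
    exact star_mem hx'

lemma mem_Ab {b : V} {m : Unitization ℂ V} : m ∈ Ab b ↔ m.snd ∈ Hb b := Iff.rfl

lemma Ab_closed (b : V) : IsClosed (Ab b : Set (Unitization ℂ V)) :=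
  (Hb_closed b).preimage Unitization.continuous_snd

lemma inr_mem_Ab {b x : V} (h : x ∈ Hb b) : (x : Unitization ℂ V) ∈ Ab b := by
  rw [mem_Ab, Unitization.snd_inr]; exact h

lemma inv_mem_Ab {b : V} {m n : Unitization ℂ V} (hm : m ∈ Ab b) (h1 : m * n = 1) (h2 : n * m = 1) :
    n ∈ Ab b := by
  have f1 : m.fst * n.fst = 1 := by rw [← Unitization.fst_mul, h1, Unitization.fst_one]
  have hne : m.fst ≠ 0 := left_ne_zero_of_mul_eq_one f1
  have s1 : m.fst • n.snd + n.fst • m.snd + m.snd * n.snd = 0 := by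
    rw [← Unitization.snd_mul, h1, Unitization.snd_one]
  have s2 : n.fst • m.snd + m.fst • n.snd + n.snd * m.snd = 0 := by
    rw [← Unitization.snd_mul, h2, Unitization.snd_one]
  have e1 : n.snd = m.fst⁻¹ • (-(n.fst • m.snd + m.snd * n.snd)) := by
    rw [eq_inv_smul_iff₀ hne, eq_neg_iff_add_eq_zero, ← add_assoc, s1]
  have e2 : n.snd = m.fst⁻¹ • (-(n.fst • m.snd + n.snd * m.snd)) := by
    rw [eq_inv_smul_iff₀ hne, eq_neg_iff_add_eq_zero, ← s2]; abel
  refine ⟨?_, ?_⟩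
  · rw [e1]
    exact Submodule.smul_mem _ _ (neg_mem (add_mem (Submodule.smul_mem _ _ hm.1) (mul_mem_Rid hm.1 _)))
  · rw [e2]
    simp only [star_smul, star_neg, star_add, star_mul]
    exact Submodule.smul_mem _ _ (neg_mem (add_mem (Submodule.smul_mem _ _ hm.2) (mul_mem_Rid hm.2 _)))

/-- invertibles with positive scalar part -/
def Gset (b : V) : Set (Unitization ℂ V) :=
  {g | g ∈ Ab b ∧ IsUnit g ∧ ∃ r : ℝ, 0 < r ∧ g.fst = (r : ℂ)}

/-- `1 + v` is a unitary of the unitization of `Her b`. -/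
structure IsU (b v : V) : Prop where
  mem : v ∈ Hb b
  l : v + star v + star v * v = 0
  r : v + star v + v * star v = 0

lemma IsU.gram {b v : V} (h : IsU b v) (x y : V) :
    star (x + v * x) * (y + v * y) = star x * y := by
  have : star (x + v * x) * (y + v * y) = star x * y + star x * (v + star v + star v * v) * y := by
    rw [star_add, star_mul]; noncomm_ring
  rw [this, h.l]; simp

lemma IsU.norm {b v : V} (h : IsU b v) (x : V) : ‖x + v * x‖ = ‖x‖ := by
  have h1 : ‖x + v * x‖ * ‖x + v * x‖ = ‖x‖ * ‖x‖ := by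
    rw [← CStarRing.norm_star_mul_self, h.gram, CStarRing.norm_star_mul_self]
  exact (mul_self_inj_of_nonneg (norm_nonneg _) (norm_nonneg _)).1 h1

lemma IsU.mem_Rid {b v x : V} (h : IsU b v) (hx : x ∈ Rid b) : x + v * x ∈ Rid b :=
  add_mem hx (mul_mem_Rid h.mem.1 _)

lemma IsU.star' {b v : V} (h : IsU b v) : IsU b (star v) :=
  ⟨star_mem h.mem, by rw [star_star, add_comm (star v)]; exact h.r,
    by rw [star_star, add_comm (star v)]; exact h.l⟩

lemma IsU.inv_act {b v : V} (h : IsU b v) (x : V) :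
    (x + v * x) + star v * (x + v * x) = x := by
  have : (x + v * x) + star v * (x + v * x) = x + (v + star v + star v * v) * x := by noncomm_ring
  rw [this, h.l]; simp

lemma IsU.comp {b v w : V} (hv : IsU b v) (hw : IsU b w) : IsU b (v + w + v * w) := by
  refine ⟨add_mem (add_mem hv.mem hw.mem) (mul_mem hv.mem hw.mem), ?_, ?_⟩
  · have : v + w + v * w + star (v + w + v * w) + star (v + w + v * w) * (v + w + v * w) =
      (v + star v + star v * v) + (w + star w + star w * w) + (v + star v + star v * v) * w
        + star w * (v + star v + star v * v) + star w * (v + star v + star v * v) * w := by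
      simp only [star_add, star_mul]; noncomm_ring
    rw [this, hv.l, hw.l]; simp
  · have : v + w + v * w + star (v + w + v * w) + (v + w + v * w) * star (v + w + v * w) =
      (v + star v + v * star v) + (w + star w + w * star w) + v * (w + star w + w * star w)
        + (w + star w + w * star w) * star v + v * (w + star w + w * star w) * star v := by
      simp only [star_add, star_mul]; noncomm_ring
    rw [this, hv.r, hw.r]; simp

lemma comp_act (v w x : V) : x + (v + w + v * w) * x = (x + w * x) + v * (x + w * x) := by
  noncomm_ring

lemma IsU.mono {b b' v : V} (h : IsU b v) (hb : b ∈ Rid b') : IsU b' v :=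
  ⟨⟨Rid_le hb h.mem.1, Rid_le hb h.mem.2⟩, h.l, h.r⟩

/-- polar decomposition of elements of `Gset b` -/
lemma polar {b : V} {g : Unitization ℂ V} (hg : g ∈ Gset b) :
    ∃ v, IsU b v ∧ ((1 : Unitization ℂ V) + v) * CFC.sqrt (star g * g) = g := by
  obtain ⟨hgA, hgu, r, hr, hgr⟩ := hg
  obtain ⟨s, hs⟩ : ∃ s, s = CFC.sqrt (star g * g) := ⟨_, rfl⟩
  have hgg : 0 ≤ star g * g := star_mul_self_nonneg g
  have hs0 : 0 ≤ s := by rw [hs]; exact CFC.sqrt_nonneg _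
  have hss : s * s = star g * g := by rw [hs]; exact CFC.sqrt_mul_sqrt_self _ hgg
  have hsu : IsUnit s := by
    have : IsUnit (s * s) := by rw [hss]; exact hgu.star.mul hgu
    exact (Commute.isUnit_mul_iff (Commute.refl s)).1 this |>.1
  have hsA : s ∈ Ab b := by
    have hcl := Ab_closed b
    rw [hs, CFC.sqrt_eq_real_sqrt _ hgg]
    exact cfcₙ_mem (𝕜' := ℂ) (s := Ab b) _ (mul_mem (star_mem hgA) hgA)
  obtain ⟨k, hsk, hks⟩ : ∃ k, s * k = 1 ∧ k * s = 1 := by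
    obtain ⟨u, hu⟩ := hsu
    exact ⟨↑u⁻¹, by rw [← hu]; simp, by rw [← hu]; simp⟩
  have hkA : k ∈ Ab b := inv_mem_Ab hsA hsk hks
  have hkst : star k = k := by
    have h1 : star k * s = 1 := by
      have := congrArg star hsk
      rwa [star_mul, sa hs0, star_one] at this
    calc star k = star k * (s * k) := by rw [hsk, mul_one]
      _ = k := by rw [← mul_assoc, h1, one_mul]
  have huu : star (g * k) * (g * k) = 1 := by
    rw [star_mul, hkst]
    calc k * star g * (g * k) = k * (star g * g) * k := by noncomm_ring
      _ = (k * s) * (s * k) := by rw [← hss]; noncomm_ring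
      _ = 1 := by rw [hks, hsk, one_mul]
  have huu' : (g * k) * star (g * k) = 1 := by
    have hun : IsUnit (g * k) := hgu.mul (isUnit_iff_exists.2 ⟨s, hks, hsk⟩)
    obtain ⟨w, hw⟩ := hun
    have : star (g * k) = ↑w⁻¹ := by
      rw [← hw] at huu ⊢
      exact Units.eq_inv_of_mul_eq_one_right huu
    rw [this, ← hw]; simp
  have hfs : ∃ c : ℝ, 0 ≤ c ∧ s.fst = (c : ℂ) := by
    have : s.fst = star (CFC.sqrt s).fst * (CFC.sqrt s).fst := by
      rw [← Unitization.fst_star, ← Unitization.fst_mul, sa (CFC.sqrt_nonneg s),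
        CFC.sqrt_mul_sqrt_self s hs0]
    refine ⟨Complex.normSq (CFC.sqrt s).fst, Complex.normSq_nonneg _, ?_⟩
    rw [this, Complex.normSq_eq_conj_mul_self]; rfl
  obtain ⟨c, hc, hsc⟩ := hfs
  have hf1 : s.fst * k.fst = 1 := by rw [← Unitization.fst_mul, hsk, Unitization.fst_one]
  have hc0 : c ≠ 0 := by
    rintro rfl; rw [hsc] at hf1; simp at hf1
  have hkf : k.fst = ((c⁻¹ : ℝ) : ℂ) := by
    rw [hsc] at hf1
    have : (c : ℂ) ≠ 0 := by exact_mod_cast hc0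
    push_cast
    field_simp
    linear_combination hf1
  have huf : (g * k).fst = ((r * c⁻¹ : ℝ) : ℂ) := by
    rw [Unitization.fst_mul, hgr, hkf]; push_cast; ring
  have hpos : 0 < r * c⁻¹ := by
    have : 0 < c := lt_of_le_of_ne hc (Ne.symm hc0)
    positivity
  have hone : r * c⁻¹ = 1 := by
    have : (star (g * k) * (g * k)).fst = (1 : Unitization ℂ V).fst := by rw [huu]
    rw [Unitization.fst_mul, Unitization.fst_star, huf, Unitization.fst_one] at this
    have h2 : ((r * c⁻¹) * (r * c⁻¹) : ℝ) = 1 := by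
      have h3 : (((r * c⁻¹) * (r * c⁻¹) : ℝ) : ℂ) = 1 := by
        rw [← this]; push_cast; simp
      exact_mod_cast h3
    nlinarith
  have hdec : g * k = 1 + ((g * k).snd : Unitization ℂ V) := by
    conv_lhs => rw [← Unitization.inl_fst_add_inr_snd_eq (g * k), huf, hone]
    simp
  obtain ⟨v, hv⟩ : ∃ v, v = (g * k).snd := ⟨_, rfl⟩
  rw [← hv] at hdec
  refine ⟨v, ⟨?_, ?_, ?_⟩, ?_⟩
  · rw [hv]; exact mul_mem hgA hkA
  · rw [hdec] at huu
    apply Unitization.inr_injective (R := ℂ)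
    have : (1 : Unitization ℂ V) + ((v + star v + star v * v : V) : Unitization ℂ V) = 1 := by
      refine Eq.trans (b := star (1 + (v : Unitization ℂ V)) * (1 + (v : Unitization ℂ V))) ?_ huu
      rw [star_add, star_one, ← Unitization.inr_star]
      simp only [Unitization.inr_add, Unitization.inr_mul]
      noncomm_ring
    simpa using this
  · rw [hdec] at huu'
    apply Unitization.inr_injective (R := ℂ)
    have : (1 : Unitization ℂ V) + ((v + star v + v * star v : V) : Unitization ℂ V) = 1 := by
      refine Eq.trans (b := (1 + (v : Unitization ℂ V)) * star (1 + (v : Unitization ℂ V))) ?_ huu'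
      rw [star_add, star_one, ← Unitization.inr_star]
      simp only [Unitization.inr_add, Unitization.inr_mul]
      noncomm_ring
    simpa using this
  · rw [← hdec, ← hs, mul_assoc, hks, mul_one]

end P4

section P5
variable {V : Type*} [NonUnitalCStarAlgebra V] [PartialOrder V] [StarOrderedRing V]

lemma norm_mul_isom {U : Type*} [CStarAlgebra U] {u : U} (hu : star u * u = 1) (m : U) : ‖u * m‖ = ‖m‖ := by
  have h1 : ‖u * m‖ * ‖u * m‖ = ‖m‖ * ‖m‖ := by
    rw [← CStarRing.norm_star_mul_self, ← CStarRing.norm_star_mul_self (x := m), star_mul]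
    rw [show star m * star u * (u * m) = star m * (star u * u) * m by noncomm_ring, hu, mul_one]
  exact (mul_self_inj_of_nonneg (norm_nonneg _) (norm_nonneg _)).1 h1

lemma IsU.unit {b v : V} (h : IsU b v) : 
    star (1 + (v : Unitization ℂ V)) * (1 + (v : Unitization ℂ V)) = 1 := by
  have : star (1 + (v : Unitization ℂ V)) * (1 + (v : Unitization ℂ V)) 
     = 1 + ((v + star v + star v * v : V) : Unitization ℂ V) := by
    rw [star_add, star_one, ← Unitization.inr_star]
    simp only [Unitization.inr_add, Unitization.inr_mul]
    noncomm_ring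
  rw [this, h.l]; simp

lemma norm_inr' (x : V) : ‖(x : Unitization ℂ V)‖ = ‖x‖ := Unitization.norm_inr (𝕜 := ℂ) x

lemma SL_core {b v X Y : V} (hv : IsU b v) {D : ℝ} (hD : ‖star X * X - star Y * Y‖ ≤ D) :
    ‖Y + v * Y - X‖ ^ 4 ≤ 4 * ‖(Y + v * Y - X) * star Y‖ ^ 2 + 2 * D * ‖Y + v * Y - X‖ ^ 2 := by
  obtain ⟨Z, hZ⟩ : ∃ Z, Z = Y + v * Y := ⟨_, rfl⟩
  have hZZ : star Z * Z = star Y * Y := by rw [hZ, hv.gram]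
  rw [← hZ]
  obtain ⟨T, hT⟩ : ∃ T, T = Z - X := ⟨_, rfl⟩
  rw [← hT]
  have h1 : star T * T ≤ (4 : ℝ) • (star Y * Y) + (2 : ℝ) • (star X * X - star Y * Y) := by
    have h2 : 0 ≤ star (Z + X) * (Z + X) := star_mul_self_nonneg _
    have h3 : (4 : ℝ) • (star Y * Y) + (2 : ℝ) • (star X * X - star Y * Y) - star T * T 
        = star (Z + X) * (Z + X) := by
      rw [hT, ← hZZ, show (4 : ℝ) = ((4 : ℕ) : ℝ) by norm_num, show (2 : ℝ) = ((2 : ℕ) : ℝ) by norm_num,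
        Nat.cast_smul_eq_nsmul, Nat.cast_smul_eq_nsmul, star_sub, star_add]
      noncomm_ring
    rw [← sub_nonneg, h3]; exact h2
  have h4 := star_right_conjugate_le_conjugate h1 T
  have h5 : 0 ≤ T * (star T * T) * star T := 
    star_right_conjugate_nonneg (star_mul_self_nonneg _) _
  have h6 := CStarAlgebra.norm_le_norm_of_nonneg_of_le h5 h4
  have h7 : ‖T * (star T * T) * star T‖ = ‖T‖ ^ 4 := by
    rw [show T * (star T * T) * star T = star (T * star T) * (T * star T) by 
      rw [star_mul, star_star]; noncomm_ring, CStarRing.norm_star_mul_self, CStarRing.norm_self_mul_star]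
    ring
  rw [h7] at h6
  refine h6.trans ?_
  have h8 : T * ((4 : ℝ) • (star Y * Y) + (2 : ℝ) • (star X * X - star Y * Y)) * star T 
     = (4 : ℝ) • ((T * star Y) * star (T * star Y)) + (2 : ℝ) • (T * (star X * X - star Y * Y) * star T) := by
    rw [mul_add, add_mul, mul_smul_comm, mul_smul_comm, smul_mul_assoc, smul_mul_assoc, star_mul, star_star]
    congr 2; noncomm_ring
  rw [h8]
  refine (norm_add_le _ _).trans ?_
  rw [norm_smul, norm_smul, CStarRing.norm_self_mul_star]
  have h9 : ‖T * (star X * X - star Y * Y) * star T‖ ≤ D * ‖T‖ ^ 2 := by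
    calc _ ≤ ‖T‖ * ‖star X * X - star Y * Y‖ * ‖star T‖ := 
          (norm_mul_le _ _).trans (by gcongr; exact norm_mul_le _ _)
      _ ≤ ‖T‖ * D * ‖T‖ := by rw [norm_star]; gcongr
      _ = _ := by ring
  norm_num
  nlinarith

lemma SL {M ε : ℝ} (hM : 0 ≤ M) (hε : 0 < ε) : ∃ δ > 0, ∀ b X Y : V, ‖X‖ ≤ M → ‖Y‖ ≤ M →
    ‖star X * X - star Y * Y‖ ≤ δ → ((X * star Y : V) : Unitization ℂ V) ∈ closure (Gset b) →
    ∃ v, IsU b v ∧ ‖Y + v * Y - X‖ < ε := by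
  obtain ⟨δ, hδ0, hδ1, hδ⟩ : ∃ δ : ℝ, 0 < δ ∧ δ ≤ 1 ∧ (16 * M ^ 2 + 16) * δ < ε ^ 4 := by
    have hp : 0 < ε ^ 4 / (16 * M ^ 2 + 17) := by positivity
    refine ⟨min 1 (ε ^ 4 / (16 * M ^ 2 + 17)), lt_min one_pos hp, min_le_left _ _, ?_⟩
    have h1 := min_le_right 1 (ε ^ 4 / (16 * M ^ 2 + 17))
    calc _ ≤ (16 * M ^ 2 + 16) * (ε ^ 4 / (16 * M ^ 2 + 17)) := by gcongr
      _ < (16 * M ^ 2 + 17) * (ε ^ 4 / (16 * M ^ 2 + 17)) := by gcongr; norm_num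
      _ = ε ^ 4 := by field_simp
  refine ⟨δ, hδ0, fun b X Y hX hY hXY hz => ?_⟩
  obtain ⟨γ, hγ0, hγ1, hγ⟩ : ∃ γ : ℝ, 0 < γ ∧ γ ≤ 1 ∧ γ * (2 * M ^ 2 + 1) ≤ δ := by
    have hp : 0 < δ / (2 * M ^ 2 + 1) := by positivity
    refine ⟨min 1 (δ / (2 * M ^ 2 + 1)), lt_min one_pos hp, min_le_left _ _, ?_⟩
    have h1 := min_le_right 1 (δ / (2 * M ^ 2 + 1))
    calc _ ≤ (δ / (2 * M ^ 2 + 1)) * (2 * M ^ 2 + 1) := by gcongr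
      _ = δ := by field_simp
  obtain ⟨g, hg, hgz⟩ := Metric.mem_closure_iff.1 hz γ hγ0
  rw [dist_eq_norm] at hgz
  obtain ⟨v, hv, hpol⟩ := polar hg
  refine ⟨v, hv, ?_⟩
  obtain ⟨s, hs⟩ : ∃ s, s = CFC.sqrt (star g * g) := ⟨_, rfl⟩
  rw [← hs] at hpol
  have hgg : 0 ≤ star g * g := star_mul_self_nonneg g
  have hs0 : 0 ≤ s := by rw [hs]; exact CFC.sqrt_nonneg _
  have hss : s * s = star g * g := by rw [hs]; exact CFC.sqrt_mul_sqrt_self _ hgg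
  obtain ⟨x, hx⟩ : ∃ x, x = (X : Unitization ℂ V) := ⟨_, rfl⟩
  obtain ⟨y, hy⟩ : ∃ y, y = (Y : Unitization ℂ V) := ⟨_, rfl⟩
  obtain ⟨u, hu⟩ : ∃ u, u = 1 + (v : Unitization ℂ V) := ⟨_, rfl⟩
  have huu : star u * u = 1 := by rw [hu]; exact hv.unit
  have hzx : ((X * star Y : V) : Unitization ℂ V) = x * star y := by
    rw [Unitization.inr_mul, Unitization.inr_star, hx, hy]
  rw [hzx] at hgz
  rw [← hu] at hpol
  have nx : ‖x‖ ≤ M := by rw [hx, norm_inr']; exact hX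
  have ny : ‖y‖ ≤ M := by rw [hy, norm_inr']; exact hY
  have nxy : ‖star x * x - star y * y‖ ≤ δ := by
    rw [hx, hy, ← Unitization.inr_star, ← Unitization.inr_star, ← Unitization.inr_mul, ← Unitization.inr_mul,
      ← Unitization.inr_sub, norm_inr']
    exact hXY
  have nz : ‖x * star y‖ ≤ M ^ 2 := by
    calc _ ≤ ‖x‖ * ‖star y‖ := norm_mul_le _ _
      _ ≤ M * M := by rw [norm_star]; gcongr
      _ = _ := by ring
  have ng : ‖g‖ ≤ M ^ 2 + 1 := by
    calc ‖g‖ = ‖x * star y - (x * star y - g)‖ := by congr 1; abel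
      _ ≤ ‖x * star y‖ + ‖x * star y - g‖ := norm_sub_le _ _
      _ ≤ _ := by linarith
  have hyy : 0 ≤ y * star y := mul_star_self_nonneg y
  have e1 : ‖y * star y - s‖ ^ 2 ≤ (M ^ 2 + 1) * δ := by
    refine (sq_norm_sub_le hyy hs0).trans ?_
    rw [hss]
    have : y * star y * (y * star y) - star g * g = 
       - (y * (star x * x - star y * y) * star y) + (star (x * star y) * (x * star y - g) + star (x * star y - g) * g) := by
      rw [star_sub, star_mul, star_star]; noncomm_ring
    rw [this]
    calc _ ≤ ‖y * (star x * x - star y * y) * star y‖ + (‖star (x * star y) * (x * star y - g)‖ + ‖star (x * star y - g) * g‖) := by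
          refine (norm_add_le _ _).trans ?_
          rw [norm_neg]
          gcongr
          exact norm_add_le _ _
      _ ≤ M * δ * M + (M ^ 2 * γ + γ * (M ^ 2 + 1)) := by
          gcongr
          · refine (norm_mul_le _ _).trans ?_
            rw [norm_star]
            gcongr
            exact (norm_mul_le _ _).trans (by gcongr)
          · refine (norm_mul_le _ _).trans ?_
            rw [norm_star]
            gcongr
          · refine (norm_mul_le _ _).trans ?_
            rw [norm_star]
            gcongr
      _ ≤ _ := by nlinarith
  have e2 : ‖(Y + v * Y - X) * star Y‖ ≤ ‖y * star y - s‖ + γ := by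
    rw [← norm_inr' ((Y + v * Y - X) * star Y)]
    have : (((Y + v * Y - X) * star Y : V) : Unitization ℂ V) = u * (y * star y - s) - (x * star y - g) := by
      rw [mul_sub, hpol, Unitization.inr_mul, Unitization.inr_sub, Unitization.inr_add, Unitization.inr_mul, 
         Unitization.inr_star, ← hx, ← hy, hu]
      noncomm_ring
    rw [this]
    refine (norm_sub_le _ _).trans ?_
    rw [norm_mul_isom huu]
    gcongr
  have e3 := SL_core hv hXY
  have nT : ‖Y + v * Y - X‖ ≤ 2 * M := by
    refine (norm_sub_le _ _).trans ?_
    rw [hv.norm]; linarith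
  have e4 : ‖(Y + v * Y - X) * star Y‖ ^ 2 ≤ 2 * ((M ^ 2 + 1) * δ) + 2 * δ := by
    calc _ ≤ (‖y * star y - s‖ + γ) ^ 2 := by gcongr
      _ ≤ 2 * ‖y * star y - s‖ ^ 2 + 2 * γ ^ 2 := by nlinarith [sq_nonneg (‖y * star y - s‖ - γ)]
      _ ≤ 2 * ((M ^ 2 + 1) * δ) + 2 * δ := by
          have : γ ^ 2 ≤ δ := by nlinarith [mul_nonneg hγ0.le (sq_nonneg M)]
          linarith
  have e5 : ‖Y + v * Y - X‖ ^ 2 ≤ 4 * M ^ 2 := by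
    calc _ ≤ (2 * M) ^ 2 := by gcongr
      _ = _ := by ring
  have e6 : ‖Y + v * Y - X‖ ^ 4 < ε ^ 4 := by nlinarith
  exact lt_of_pow_lt_pow_left₀ 4 hε.le e6

lemma mul_star_mem_Hb {b x y : V} (hx : x ∈ Rid b) (hy : y ∈ Rid b) : x * star y ∈ Hb b :=
  ⟨mul_mem_Rid hx _, by rw [star_mul, star_star]; exact mul_mem_Rid hy _⟩

/-- square-zero elements are limits of invertibles -/
lemma nil_mem_closure {b z : V} (hz : z ∈ Hb b) (h : z * z = 0) : 
    (z : Unitization ℂ V) ∈ closure (Gset b) := by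
  rw [Metric.mem_closure_iff]
  intro ε hε
  have hz2 : (z : Unitization ℂ V) * z = 0 := by rw [← Unitization.inr_mul, h, Unitization.inr_zero]
  have hc : ((ε / 2 : ℝ) : ℂ) ≠ 0 := by exact_mod_cast (by positivity : ε / 2 ≠ 0)
  obtain ⟨c, hcd⟩ : ∃ c : ℂ, c = ((ε / 2 : ℝ) : ℂ) := ⟨_, rfl⟩
  rw [← hcd] at hc
  refine ⟨algebraMap ℂ _ c + z, ⟨?_, ?_, ε / 2, by positivity, ?_⟩, ?_⟩
  · exact add_mem (algebraMap_mem _ _) (inr_mem_Ab hz)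
  · refine isUnit_iff_exists.2 ⟨algebraMap ℂ _ c⁻¹ - (c⁻¹ * c⁻¹) • (z : Unitization ℂ V), ?_, ?_⟩
    · rw [Algebra.algebraMap_eq_smul_one, Algebra.algebraMap_eq_smul_one]
      simp only [add_mul, mul_sub, smul_mul_assoc, mul_smul_comm, one_mul, mul_one, hz2, smul_zero, smul_smul, smul_add, smul_sub, add_zero]
      rw [inv_mul_cancel₀ hc, show c⁻¹ * c⁻¹ * c = c⁻¹ by field_simp]; simp
    · rw [Algebra.algebraMap_eq_smul_one, Algebra.algebraMap_eq_smul_one]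
      simp only [sub_mul, mul_add, smul_mul_assoc, mul_smul_comm, one_mul, mul_one, hz2, smul_zero, smul_smul, smul_add, smul_sub, sub_zero]
      rw [mul_inv_cancel₀ hc, show c * (c⁻¹ * c⁻¹) = c⁻¹ by field_simp]; simp
  · rw [Unitization.algebraMap_eq_inl, hcd]; simp
  · rw [dist_eq_norm, sub_add_cancel_right, norm_neg, norm_algebraMap', hcd, Complex.norm_real, Real.norm_eq_abs,
      abs_of_pos (by positivity)]
    linarith

lemma rotation {M ε : ℝ} (hM : 0 ≤ M) (hε : 0 < ε) : ∃ δ > 0, ∀ b x y : V, x ∈ Rid b → y ∈ Rid b → 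
    ‖x‖ ≤ M → ‖y‖ ≤ M → ‖star x * x - star y * y‖ ≤ δ → star x * y = 0 → 
    ∃ v, IsU b v ∧ ‖x + v * x - y‖ < ε := by
  obtain ⟨δ, h0, hδ⟩ := SL (V := V) hM hε
  refine ⟨δ, h0, fun b x y hx hy nx ny h1 h2 => ?_⟩
  refine hδ b y x ny nx (by rw [norm_sub_rev]; exact h1) (nil_mem_closure (mul_star_mem_Hb hy hx) ?_)
  rw [show y * star x * (y * star x) = y * (star x * y) * star x by noncomm_ring, h2]; simp

/-- Cuntz subequivalence, in the form needed below -/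
lemma cuntz_approx {p q : V} (hp : 0 ≤ p) (hq : 0 ≤ q) (h : CuntzLE p q) {δ : ℝ} (hδ : 0 < δ) :
    ∃ y ∈ Rid q, star y ∈ Rid p ∧ ‖star y * y - p‖ < δ := by
  obtain ⟨w, hw⟩ := h
  have h1 : ∀ᶠ n in atTop, ‖p - star (w n) * q * w n‖ < δ / 4 := by
    have := hw.eventually (gt_mem_nhds (show (0:ℝ) < δ / 4 by positivity)); exact this
  obtain ⟨n, hn⟩ := h1.exists
  obtain ⟨η, hη0, hη⟩ : ∃ η : ℝ, 0 < η ∧ η ≤ δ / 8 := ⟨δ / 8, by positivity, le_rfl⟩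
  obtain ⟨e, he⟩ : ∃ e, e = fEps η p := ⟨_, rfl⟩
  have hes : star e = e := by rw [he]; exact fEps_star _ _
  have hen : ‖e‖ ≤ 1 := by rw [he]; exact fEps_norm _ _
  refine ⟨CFC.sqrt q * w n * e, ?_, ?_, ?_⟩
  · exact mul_mem_Rid (mul_mem_Rid (sqrt_mem_Rid hq (mem_Rid_self hq)) _) _
  · rw [star_mul, hes]
    exact mul_mem_Rid (by rw [he]; exact fEps_mem_Rid hp (mem_Rid_self hp) _) _
  · have e1 : star (CFC.sqrt q * w n * e) * (CFC.sqrt q * w n * e) = e * (star (w n) * q * w n) * e := by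
      rw [star_mul, star_mul, hes, sqrt_star]
      conv_rhs => rw [← sqrt_mul hq]
      noncomm_ring
    rw [e1]
    have e2 : e * (star (w n) * q * w n) * e - p = 
        - (e * (p - star (w n) * q * w n) * e) - (p - e * p) - e * star (p - e * p) := by
      rw [star_sub, star_mul, hes, sa hp]; noncomm_ring
    rw [e2]
    have e3 : ‖p - e * p‖ ≤ η := by rw [he]; exact fEps_sub_norm hp hη0
    have e4 : ‖e * star (p - e * p)‖ ≤ η := by
      calc _ ≤ ‖e‖ * ‖p - e * p‖ := (norm_mul_le _ _).trans (by rw [norm_star])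
        _ ≤ 1 * η := by gcongr
        _ = η := one_mul _
    have e5 : ‖e * (p - star (w n) * q * w n) * e‖ ≤ δ / 4 := by
      calc _ ≤ ‖e‖ * ‖p - star (w n) * q * w n‖ * ‖e‖ := (norm_mul_le _ _).trans (by gcongr; exact norm_mul_le _ _)
        _ ≤ 1 * (δ / 4) * 1 := by gcongr
        _ = _ := by ring
    calc _ ≤ ‖e * (p - star (w n) * q * w n) * e‖ + ‖p - e * p‖ + ‖e * star (p - e * p)‖ := by
          refine (norm_sub_le _ _).trans ?_
          gcongr
          refine (norm_sub_le _ _).trans ?_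
          rw [norm_neg]
      _ < δ := by linarith

end P5

section P6
variable {V : Type*} [NonUnitalCStarAlgebra V] [PartialOrder V] [StarOrderedRing V]

lemma mul_cutc_zero {φ E : V} (h : φ * E = φ) (b : V) : φ * cutc E b = 0 := by
  have : φ * cutc E b = (φ - φ * E) * (b - b * E) := by unfold cutc; noncomm_ring
  rw [this, h]; simp

lemma gram_close {x x' : V} {M μ : ℝ} (hx : ‖x‖ ≤ M) (hx' : ‖x'‖ ≤ M) (h : ‖x - x'‖ ≤ μ) :
    ‖star x * x - star x' * x'‖ ≤ 2 * M * μ := by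
  have hM : 0 ≤ M := (norm_nonneg _).trans hx
  rw [show star x * x - star x' * x' = star x * (x - x') + star (x - x') * x' by rw [star_sub]; noncomm_ring]
  calc _ ≤ ‖star x * (x - x')‖ + ‖star (x - x') * x'‖ := norm_add_le _ _
    _ ≤ M * μ + μ * M := by
        gcongr
        · exact (norm_mul_le _ _).trans (by rw [norm_star]; gcongr)
        · exact (norm_mul_le _ _).trans (by rw [norm_star]; gcongr; exact (norm_nonneg _).trans h)
    _ = _ := by ring

lemma norm_fEps_mul_le' (η : ℝ) (e x : V) : ‖fEps η e * x‖ ≤ ‖x‖ := by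
  calc _ ≤ ‖fEps η e‖ * ‖x‖ := norm_mul_le _ _
    _ ≤ 1 * ‖x‖ := by gcongr; exact fEps_norm _ _
    _ = _ := one_mul _

lemma norm_fEps_mul_sq {e : V} (he : 0 ≤ e) {η : ℝ} (hη : 0 < η) (z : V) : 
    ‖fEps η e * z‖ ^ 2 ≤ 2 / η * ‖star z * e * z‖ := by
  obtain ⟨E, hE⟩ : ∃ E, E = fEps η e := ⟨_, rfl⟩
  have hE0 : 0 ≤ E := by rw [hE]; exact fEps_nonneg _ _
  have hE1 : ‖E‖ ≤ 1 := by rw [hE]; exact fEps_norm _ _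
  rw [← hE]
  have h1 : ‖CFC.sqrt E‖ ≤ 1 := by
    have : ‖CFC.sqrt E‖ * ‖CFC.sqrt E‖ ≤ 1 := by
      rw [← CStarRing.norm_star_mul_self, sqrt_star, sqrt_mul hE0]; exact hE1
    nlinarith [norm_nonneg (CFC.sqrt E)]
  have h2 : ‖E * z‖ ≤ ‖CFC.sqrt E * z‖ := by
    conv_lhs => rw [← sqrt_mul hE0, mul_assoc]
    calc _ ≤ ‖CFC.sqrt E‖ * ‖CFC.sqrt E * z‖ := norm_mul_le _ _
      _ ≤ 1 * ‖CFC.sqrt E * z‖ := by gcongr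
      _ = _ := one_mul _
  have h3 : ‖CFC.sqrt E * z‖ ^ 2 = ‖star z * E * z‖ := by
    rw [sq, ← CStarRing.norm_star_mul_self, star_mul, sqrt_star]
    conv_rhs => rw [← sqrt_mul hE0]
    congr 1; noncomm_ring
  have h4 : star z * E * z ≤ star z * ((2 / η) • e) * z := 
    star_left_conjugate_le_conjugate (by rw [hE]; exact fEps_le_smul he hη) z
  have h5 := CStarAlgebra.norm_le_norm_of_nonneg_of_le (star_left_conjugate_nonneg hE0 z) h4
  rw [mul_smul_comm, smul_mul_assoc, norm_smul, Real.norm_of_nonneg (by positivity)] at h5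
  calc ‖E * z‖ ^ 2 ≤ ‖CFC.sqrt E * z‖ ^ 2 := by gcongr
    _ ≤ _ := by rw [h3]; exact h5

lemma star_mul_self_mem {y p : V} (h : star y ∈ Rid p) : star y * y ∈ Rid p := mul_mem_Rid h _

variable {L : ℕ → V → V}

lemma LemS (hL : IsCopies L) (hsc : StrictComparison V) {M ε : ℝ} (hM : 0 ≤ M) (hε : 0 < ε) : 
    ∃ δ > 0, ∀ b x1 x2 : V, 0 ≤ b → x1 ∈ Rid b → x2 ∈ Rid b → ‖x1‖ ≤ M → ‖x2‖ ≤ M → 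
    ‖star x1 * x1 - star x2 * x2‖ ≤ δ → 
    (∀ τ : QuasiTrace V, ¬ τ.IsZero → 
      dTau τ (star x1 * x1) + dTau τ (star x2 * x2) + dTau τ (star x1 * x1) < dTau τ b) → 
    ∃ v, IsU b v ∧ ‖x1 + v * x1 - x2‖ < ε := by
  obtain ⟨δ₀, h0, hrot⟩ := rotation (V := V) (show 0 ≤ M + 1 by linarith) (show 0 < ε / 4 by positivity)
  refine ⟨δ₀ / 4, by positivity, fun b x1 x2 hb h1 h2 n1 n2 hδ hd => ?_⟩
  obtain ⟨μ, hμ0, hμε, hμM⟩ : ∃ μ : ℝ, 0 < μ ∧ μ ≤ ε / 4 ∧ 2 * M * μ ≤ δ₀ / 4 := by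
    have hp : 0 < δ₀ / 4 / (2 * M + 1) := by positivity
    refine ⟨min (ε / 4) (δ₀ / 4 / (2 * M + 1)), lt_min (by positivity) hp, min_le_left _ _, ?_⟩
    have h1 := min_le_right (ε / 4) (δ₀ / 4 / (2 * M + 1))
    calc _ ≤ (2 * M + 1) * (δ₀ / 4 / (2 * M + 1)) := by gcongr; linarith
      _ = _ := by field_simp
  obtain ⟨e, he⟩ : ∃ e, e = x1 * star x1 + x2 * star x2 := ⟨_, rfl⟩
  have he0 : 0 ≤ e := by rw [he]; exact add_nonneg (mul_star_self_nonneg _) (mul_star_self_nonneg _)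
  have heb : e ∈ Rid b := by rw [he]; exact add_mem (mul_mem_Rid h1 _) (mul_mem_Rid h2 _)
  obtain ⟨η, hη⟩ : ∃ η : ℝ, η = μ ^ 2 / 2 := ⟨_, rfl⟩
  have hη0 : 0 < η := by rw [hη]; positivity
  obtain ⟨E, hE⟩ : ∃ E, E = fEps η e := ⟨_, rfl⟩
  obtain ⟨φ, hφ⟩ : ∃ φ, φ = fEps (2 * η) e := ⟨_, rfl⟩
  have hφE : φ * E = φ := by rw [hφ, hE]; exact fEps_mul' e hη0 (by linarith)
  have hφs : star φ = φ := by rw [hφ]; exact fEps_star _ _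
  have hEs : star E = E := by rw [hE]; exact fEps_star _ _
  have hEb : E ∈ Rid b := by rw [hE]; exact fEps_mem_Rid he0 heb _
  have hφb : φ ∈ Rid b := by rw [hφ]; exact fEps_mem_Rid he0 heb _
  obtain ⟨t, ht⟩ : ∃ t, t = cutc E b := ⟨_, rfl⟩
  have ht0 : 0 ≤ t := by rw [ht]; exact cutc_nonneg hEs hb
  have htb : t ∈ Rid b := by rw [ht]; exact cutc_mem hb hEb
  have hφt : φ * t = 0 := by rw [ht]; exact mul_cutc_zero hφE b
  have a1 : ‖x1 - φ * x1‖ ≤ μ := by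
    rw [hφ]
    exact norm_sub_fEps_mul' (by rw [he]; exact le_add_of_nonneg_right (mul_star_self_nonneg _)) hμ0 
      (by linarith) (by rw [hη]; linarith)
  have a2 : ‖x2 - φ * x2‖ ≤ μ := by
    rw [hφ]
    exact norm_sub_fEps_mul' (by rw [he]; exact le_add_of_nonneg_left (mul_star_self_nonneg _)) hμ0 
      (by linarith) (by rw [hη]; linarith)
  have m1 : ‖φ * x1‖ ≤ M := by rw [hφ]; exact (norm_fEps_mul_le' _ _ _).trans n1
  have m2 : ‖φ * x2‖ ≤ M := by rw [hφ]; exact (norm_fEps_mul_le' _ _ _).trans n2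
  have g1 := (gram_close n1 m1 a1).trans hμM
  have g2 := (gram_close n2 m2 a2).trans hμM
  have hcu : CuntzLE (star x1 * x1) t := by
    refine hsc _ _ (star_mul_self_nonneg _) ht0 fun τ hτ => ?_
    by_contra hc
    rw [not_lt] at hc
    refine absurd (hd τ hτ) (not_lt.2 ?_)
    calc dTau τ b ≤ dTau τ e + dTau τ t := by rw [ht, hE]; exact d_cutc τ hL hb he0 η
      _ ≤ (dTau τ (x1 * star x1) + dTau τ (x2 * star x2)) + dTau τ (star x1 * x1) := by
          gcongr
          rw [he]; exact d_add_le τ hL (mul_star_self_nonneg _) (mul_star_self_nonneg _)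
      _ = _ := by rw [d_star_eq, d_star_eq]
  obtain ⟨y, hyt, -, hyd⟩ := cuntz_approx (star_mul_self_nonneg _) ht0 hcu 
    (show 0 < min (δ₀ / 4) 1 by positivity)
  have hy1 := hyd.trans_le (min_le_left _ _)
  have hy2 := hyd.trans_le (min_le_right _ _)
  have hyb : y ∈ Rid b := Rid_le htb hyt
  have hφy : φ * y = 0 := Rid_mul_zero hφt hyt
  have ny : ‖y‖ ≤ M + 1 := by
    have h3 : ‖y‖ * ‖y‖ ≤ (M + 1) * (M + 1) := by
      rw [← CStarRing.norm_star_mul_self]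
      calc ‖star y * y‖ = ‖(star y * y - star x1 * x1) + star x1 * x1‖ := by congr 1; abel
        _ ≤ ‖star y * y - star x1 * x1‖ + ‖star x1 * x1‖ := norm_add_le _ _
        _ ≤ 1 + M * M := by 
          rw [CStarRing.norm_star_mul_self]
          gcongr
        _ ≤ _ := by nlinarith
    exact le_of_sq_le_sq (by rw [sq, sq]; exact h3) (by linarith)
  obtain ⟨v1, hv1, e1⟩ := hrot b (φ * x1) y (mul_mem_Rid hφb _) hyb (by linarith) ny (by
      calc _ = ‖-(star x1 * x1 - star (φ * x1) * (φ * x1)) - (star y * y - star x1 * x1)‖ := by congr 1; abel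
        _ ≤ δ₀ / 4 + δ₀ / 4 := by
          refine (norm_sub_le _ _).trans ?_
          rw [norm_neg]; gcongr
        _ ≤ _ := by linarith) (by rw [star_mul, hφs, mul_assoc, hφy, mul_zero])
  obtain ⟨v2, hv2, e2⟩ := hrot b y (φ * x2) hyb (mul_mem_Rid hφb _) ny (by linarith) (by
      calc _ = ‖(star x2 * x2 - star (φ * x2) * (φ * x2)) + ((star y * y - star x1 * x1) + (star x1 * x1 - star x2 * x2))‖ := by congr 1; abel
        _ ≤ δ₀ / 4 + (δ₀ / 4 + δ₀ / 4) := by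
          refine (norm_add_le _ _).trans ?_
          gcongr
          refine (norm_add_le _ _).trans ?_
          gcongr
        _ ≤ _ := by linarith) (by 
        have := congrArg star hφy
        rw [star_mul, hφs, star_zero] at this
        rw [← mul_assoc, this, zero_mul])
  refine ⟨_, hv2.comp hv1, ?_⟩
  rw [comp_act]
  have e3 : (x1 + v1 * x1) + v2 * (x1 + v1 * x1) - x2 = 
      (((x1 - φ * x1) + v1 * (x1 - φ * x1)) + v2 * ((x1 - φ * x1) + v1 * (x1 - φ * x1)))
      + ((φ * x1 + v1 * (φ * x1) - y) + v2 * (φ * x1 + v1 * (φ * x1) - y)) 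
      + (y + v2 * y - φ * x2) - (x2 - φ * x2) := by noncomm_ring
  rw [e3]
  calc _ ≤ ‖x1 - φ * x1‖ + ‖φ * x1 + v1 * (φ * x1) - y‖ + ‖y + v2 * y - φ * x2‖ + ‖x2 - φ * x2‖ := by
        refine (norm_sub_le _ _).trans ?_
        gcongr
        refine (norm_add_le _ _).trans ?_
        gcongr
        refine (norm_add_le _ _).trans ?_
        rw [hv2.norm, hv2.norm, hv1.norm]
    _ < _ := by linarith

lemma LU (hL : IsCopies L) (hsc : StrictComparison V) {M : ℝ} (hM : 0 ≤ M) (m : ℕ) :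
    ∀ ε > 0, ∃ δ > 0, ∀ (b : V) (x y : ℕ → V) (κ : QuasiTrace V → ℕ → ℝ≥0∞), 0 ≤ b → 
    (∀ i < m, x i ∈ Rid b ∧ y i ∈ Rid b ∧ ‖x i‖ ≤ M ∧ ‖y i‖ ≤ M ∧ 
        ‖star (x i) * x i - star (y i) * y i‖ ≤ δ) → 
    (∀ i < m, ∀ j < m, i ≠ j → star (x i) * x j = 0 ∧ star (y i) * y j = 0) → 
    (∀ τ : QuasiTrace V, ¬ τ.IsZero → ∀ i < m, dTau τ (star (x i) * x i) ≤ κ τ i ∧ 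
      dTau τ (star (y i) * y i) ≤ κ τ i ∧ (∑ j ∈ Finset.range i, κ τ j) + 3 * κ τ i < dTau τ b) →
    ∃ v, IsU b v ∧ ∀ i < m, ‖y i + v * y i - x i‖ < ε := by
  induction m with
  | zero => 
    intro ε hε
    refine ⟨1, one_pos, fun b x y κ hb _ _ _ => ⟨0, ⟨zero_mem _, by simp, by simp⟩, ?_⟩⟩
    intro i hi; omega
  | succ m ih =>
    intro ε hε
    obtain ⟨δS, hδS0, hS⟩ := LemS hL hsc (show 0 ≤ 2 * M by linarith) (show 0 < ε / 2 by positivity)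
    obtain ⟨η, hη⟩ : ∃ η : ℝ, η = (ε / 8) ^ 2 / 2 := ⟨_, rfl⟩
    have hη0 : 0 < η := by rw [hη]; positivity
    obtain ⟨μ, hμ0, hμε, hμM⟩ : ∃ μ : ℝ, 0 < μ ∧ μ ≤ ε / 4 ∧ 2 * (2 * M) * μ ≤ δS / 2 := by
      have hp : 0 < δS / 2 / (2 * (2 * M) + 1) := by positivity
      refine ⟨min (ε / 4) (δS / 2 / (2 * (2 * M) + 1)), lt_min (by positivity) hp, min_le_left _ _, ?_⟩
      have h1 := min_le_right (ε / 4) (δS / 2 / (2 * (2 * M) + 1))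
      calc _ ≤ (2 * (2 * M) + 1) * (δS / 2 / (2 * (2 * M) + 1)) := by gcongr; linarith
        _ = _ := by field_simp
    obtain ⟨ε', hε'0, hε'ε, hε'μ⟩ : ∃ ε' : ℝ, 0 < ε' ∧ ε' ≤ ε / 4 ∧ 2 / η * (M * (m * (M * (ε' * M)))) ≤ μ ^ 2 := by
      have hp : 0 < μ ^ 2 / (2 / η * (M * (m * (M * M))) + 1) := by positivity
      refine ⟨min (ε / 4) (μ ^ 2 / (2 / η * (M * (m * (M * M))) + 1)), lt_min (by positivity) hp, min_le_left _ _, ?_⟩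
      have h1 := min_le_right (ε / 4) (μ ^ 2 / (2 / η * (M * (m * (M * M))) + 1))
      calc _ = (2 / η * (M * (m * (M * M)))) * min (ε / 4) (μ ^ 2 / (2 / η * (M * (m * (M * M))) + 1)) := by ring
        _ ≤ (2 / η * (M * (m * (M * M))) + 1) * (μ ^ 2 / (2 / η * (M * (m * (M * M))) + 1)) := by gcongr; linarith
        _ = _ := by field_simp
    obtain ⟨δ', hδ'0, hI⟩ := ih ε' hε'0
    refine ⟨min δ' (δS / 2), by positivity, fun b x y κ hb hxy horth hd => ?_⟩
    obtain ⟨v', hv', hv'e⟩ := hI b x y κ hb 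
      (fun i hi => by
        obtain ⟨h1, h2, h3, h4, h5⟩ := hxy i (by omega)
        exact ⟨h1, h2, h3, h4, h5.trans (min_le_left _ _)⟩)
      (fun i hi j hj => horth i (by omega) j (by omega)) (fun τ hτ i hi => hd τ hτ i (by omega))
    obtain ⟨xm, ym, nxm, nym, hxym⟩ := hxy m (by omega)
    have hxym' := hxym.trans (min_le_right _ _)
    obtain ⟨e, he⟩ : ∃ e, e = ∑ i ∈ Finset.range m, x i * star (x i) := ⟨_, rfl⟩
    have he0 : 0 ≤ e := by rw [he]; exact Finset.sum_nonneg fun i _ => mul_star_self_nonneg _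
    have heb : e ∈ Rid b := by 
      rw [he]
      exact sum_mem fun i hi => mul_mem_Rid (hxy i (by have := Finset.mem_range.1 hi; omega)).1 _
    obtain ⟨E, hE⟩ : ∃ E, E = fEps η e := ⟨_, rfl⟩
    obtain ⟨φ, hφ⟩ : ∃ φ, φ = fEps (2 * η) e := ⟨_, rfl⟩
    have hφE : φ * E = φ := by rw [hφ, hE]; exact fEps_mul' e hη0 (by linarith)
    have hφs : star φ = φ := by rw [hφ]; exact fEps_star _ _
    have hEs : star E = E := by rw [hE]; exact fEps_star _ _
    have hEb : E ∈ Rid b := by rw [hE]; exact fEps_mem_Rid he0 heb _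
    obtain ⟨t, ht⟩ : ∃ t, t = cutc E b := ⟨_, rfl⟩
    have ht0 : 0 ≤ t := by rw [ht]; exact cutc_nonneg hEs hb
    have htb : t ∈ Rid b := by rw [ht]; exact cutc_mem hb hEb
    have hφt : φ * t = 0 := by rw [ht]; exact mul_cutc_zero hφE b
    have hEx : E * x m = 0 := by
      have h1 : star (x m) * e = 0 := by
        rw [he, Finset.mul_sum]
        refine Finset.sum_eq_zero fun i hi => ?_
        have := Finset.mem_range.1 hi
        rw [← mul_assoc, (horth m (by omega) i (by omega) (by omega)).1, zero_mul]
      have h2 : star (x m) * E = 0 := Rid_mul_zero h1 (by rw [hE]; exact fEps_mem_Rid he0 (mem_Rid_self he0) _)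
      have := congrArg star h2
      rwa [star_mul, star_star, hEs, star_zero] at this
    obtain ⟨y1, hy1⟩ : ∃ y1, y1 = y m + v' * y m := ⟨_, rfl⟩
    have ny1 : ‖y1‖ ≤ M := by rw [hy1, hv'.norm]; exact nym
    have hy1b : y1 ∈ Rid b := by rw [hy1]; exact hv'.mem_Rid ym
    have hEy : ‖E * y1‖ ≤ μ := by
      have h1 : ‖e * y1‖ ≤ m * (M * (ε' * M)) := by
        rw [he, Finset.sum_mul]
        calc _ ≤ ∑ i ∈ Finset.range m, ‖x i * star (x i) * y1‖ := norm_sum_le _ _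
          _ ≤ ∑ i ∈ Finset.range m, (M * (ε' * M)) := by
            refine Finset.sum_le_sum fun i hi => ?_
            have hi' := Finset.mem_range.1 hi
            have h2 : star (x i) * y1 = star (- (y i + v' * y i - x i)) * y1 := by
              have : star (y i + v' * y i) * y1 = 0 := by
                rw [hy1, hv'.gram, (horth i (by omega) m (by omega) (by omega)).2]
              rw [neg_sub, star_sub, sub_mul, this, sub_zero]
            rw [mul_assoc, h2]
            refine (norm_mul_le _ _).trans ?_
            gcongr
            · exact (hxy i (by omega)).2.2.1
            · refine (norm_mul_le _ _).trans ?_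
              rw [norm_star, norm_neg]
              gcongr
              exact (hv'e i hi').le
          _ = _ := by simp
      have h3 : ‖E * y1‖ ^ 2 ≤ μ ^ 2 := by
        rw [hE]
        refine (norm_fEps_mul_sq he0 hη0 y1).trans (le_trans ?_ hε'μ)
        gcongr
        rw [mul_assoc]
        refine (norm_mul_le _ _).trans ?_
        rw [norm_star]
        gcongr
      exact le_of_sq_le_sq h3 hμ0.le
    obtain ⟨y2, hy2⟩ : ∃ y2, y2 = y1 - E * y1 := ⟨_, rfl⟩
    have hy2t : y2 ∈ Rid t := by rw [hy2, ht]; exact sub_mul_mem_cutc hEs hb hy1b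
    have hxt : x m ∈ Rid t := by
      have := sub_mul_mem_cutc hEs hb xm
      rwa [hEx, sub_zero, ← ht] at this
    have ny2 : ‖y2‖ ≤ 2 * M := by
      rw [hy2, hE]
      refine (norm_sub_le _ _).trans ?_
      have := norm_fEps_mul_le' η e y1
      linarith
    have hy12 : ‖y2 - y1‖ ≤ μ := by
      rw [hy2, sub_sub_cancel_left, norm_neg]; exact hEy
    obtain ⟨v2, hv2, e2⟩ := hS t y2 (x m) ht0 hy2t hxt ny2 (by linarith) (by
      have h1 := gram_close ny2 (by linarith : ‖y1‖ ≤ 2 * M) hy12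
      have h2 : star y1 * y1 = star (y m) * y m := by rw [hy1, hv'.gram]
      rw [h2] at h1
      calc _ = ‖(star y2 * y2 - star (y m) * y m) - (star (x m) * x m - star (y m) * y m)‖ := by congr 1; abel
        _ ≤ _ := norm_sub_le _ _
        _ ≤ _ := by linarith) (fun τ hτ => by
      by_contra hc
      rw [not_lt] at hc
      obtain ⟨d1, d2, d3⟩ := hd τ hτ m (by omega)
      refine absurd d3 (not_lt.2 ?_)
      have d4 : dTau τ (star y2 * y2) ≤ κ τ m := by
        refine le_trans ?_ d2
        have h2 : star y1 * y1 = star (y m) * y m := by rw [hy1, hv'.gram]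
        rw [← h2]
        refine d_le_d τ (star_mul_self_nonneg _) (star_mul_self_nonneg _) (star_mul_self_mem ?_)
        have h3 : star y1 ∈ Rid (star y1 * y1) := by
          have := mem_Rid_mul_star (star y1); rwa [star_star] at this
        rw [hy2, star_sub, star_mul]
        exact sub_mem h3 (mul_mem_Rid h3 _)
      calc dTau τ b ≤ dTau τ e + dTau τ t := by rw [ht, hE]; exact d_cutc τ hL hb he0 η
        _ ≤ (∑ j ∈ Finset.range m, κ τ j) + (κ τ m + κ τ m + κ τ m) := by
            gcongr
            · rw [he]
              refine (d_sum_le τ hL _ _ fun i _ => mul_star_self_nonneg _).trans ?_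
              refine Finset.sum_le_sum fun i hi => ?_
              rw [d_star_eq]
              exact (hd τ hτ i (by have := Finset.mem_range.1 hi; omega)).1
            · exact hc.trans (by gcongr)
        _ = _ := by ring)
    have hv2b : IsU b v2 := hv2.mono htb
    refine ⟨_, hv2b.comp hv', fun i hi => ?_⟩
    rw [comp_act]
    rcases Nat.lt_succ_iff_lt_or_eq.1 hi with hi' | rfl
    · have hφx : ‖x i - φ * x i‖ ≤ ε / 8 := by
        rw [hφ]
        refine norm_sub_fEps_mul' ?_ (by positivity) (by linarith) (by rw [hη]; linarith)
        rw [he]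
        exact Finset.single_le_sum (f := fun i => x i * star (x i)) (fun j _ => mul_star_self_nonneg _) 
          (Finset.mem_range.2 hi')
      have hvφ : v2 * φ = 0 := by
        have h1 : φ * star v2 = 0 := Rid_mul_zero hφt hv2.mem.2
        have := congrArg star h1
        rwa [star_mul, star_star, hφs, star_zero] at this
      have e3 : (y i + v' * y i) + v2 * (y i + v' * y i) - x i = 
         ((y i + v' * y i - x i) + v2 * (y i + v' * y i - x i)) 
         + ((x i - φ * x i) + v2 * (x i - φ * x i)) - (x i - φ * x i) + v2 * φ * x i := by noncomm_ring
      rw [e3, hvφ, zero_mul, add_zero]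
      have := hv'e i hi'
      calc _ ≤ ‖y i + v' * y i - x i‖ + ‖x i - φ * x i‖ + ‖x i - φ * x i‖ := by
            refine (norm_sub_le _ _).trans ?_
            gcongr
            refine (norm_add_le _ _).trans ?_
            rw [hv2.norm, hv2.norm]
        _ < ε := by linarith
    · rw [← hy1]
      have e3 : y1 + v2 * y1 - x i = (y2 + v2 * y2 - x i) - ((y2 - y1) + v2 * (y2 - y1)) := by noncomm_ring
      rw [e3]
      refine (norm_sub_le _ _).trans_lt ?_
      rw [hv2.norm]; linarith

lemma exist_family (hL : IsCopies L) (hsc : StrictComparison V) (m : ℕ) :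
    ∀ (b : V) (d : ℕ → V), 0 ≤ b → (∀ i < m, 0 ≤ d i) → 
    (∀ τ : QuasiTrace V, ¬ τ.IsZero → ∑ i ∈ Finset.range m, dTau τ (d i) < dTau τ b) → 
    ∀ δ > 0, ∃ y : ℕ → V, (∀ i < m, y i ∈ Rid b ∧ star (y i) ∈ Rid (d i) ∧ ‖star (y i) * y i - d i‖ < δ) ∧ 
      ∀ i < m, ∀ j < m, i ≠ j → star (y i) * y j = 0 := by
  induction m with
  | zero => 
    intro b d hb hd hlt δ hδ
    exact ⟨0, by intro i hi; omega, by intro i hi; omega⟩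
  | succ m ih =>
    intro b d hb hd hlt δ hδ
    have hdm := hd m (by omega)
    have hcu : CuntzLE (d m) b := hsc _ _ hdm hb fun τ hτ => by
      refine lt_of_le_of_lt ?_ (hlt τ hτ)
      rw [Finset.sum_range_succ]; exact le_add_self
    obtain ⟨y, hyb, hyd, hyn⟩ := cuntz_approx hdm hb hcu (show 0 < δ / 2 by positivity)
    obtain ⟨μ, hμ0, hμ⟩ : ∃ μ : ℝ, 0 < μ ∧ 2 * ‖y‖ * μ ≤ δ / 2 := by
      refine ⟨δ / 2 / (2 * ‖y‖ + 1), by positivity, ?_⟩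
      calc _ ≤ (2 * ‖y‖ + 1) * (δ / 2 / (2 * ‖y‖ + 1)) := by gcongr; linarith
        _ = _ := by field_simp
    obtain ⟨e, he⟩ : ∃ e, e = y * star y := ⟨_, rfl⟩
    have he0 : 0 ≤ e := by rw [he]; exact mul_star_self_nonneg _
    have heb : e ∈ Rid b := by rw [he]; exact mul_mem_Rid hyb _
    obtain ⟨η, hη⟩ : ∃ η : ℝ, η = μ ^ 2 / 2 := ⟨_, rfl⟩
    have hη0 : 0 < η := by rw [hη]; positivity
    obtain ⟨E, hE⟩ : ∃ E, E = fEps η e := ⟨_, rfl⟩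
    obtain ⟨φ, hφ⟩ : ∃ φ, φ = fEps (2 * η) e := ⟨_, rfl⟩
    have hφE : φ * E = φ := by rw [hφ, hE]; exact fEps_mul' e hη0 (by linarith)
    have hφs : star φ = φ := by rw [hφ]; exact fEps_star _ _
    have hEs : star E = E := by rw [hE]; exact fEps_star _ _
    have hEb : E ∈ Rid b := by rw [hE]; exact fEps_mem_Rid he0 heb _
    have hφb : φ ∈ Rid b := by rw [hφ]; exact fEps_mem_Rid he0 heb _
    obtain ⟨t, ht⟩ : ∃ t, t = cutc E b := ⟨_, rfl⟩
    have ht0 : 0 ≤ t := by rw [ht]; exact cutc_nonneg hEs hb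
    have htb : t ∈ Rid b := by rw [ht]; exact cutc_mem hb hEb
    have hφt : φ * t = 0 := by rw [ht]; exact mul_cutc_zero hφE b
    obtain ⟨z, hz1, hz2⟩ := ih t d ht0 (fun i hi => hd i (by omega)) (fun τ hτ => by
      by_contra hc
      rw [not_lt] at hc
      refine absurd (hlt τ hτ) (not_lt.2 ?_)
      rw [Finset.sum_range_succ]
      calc dTau τ b ≤ dTau τ e + dTau τ t := by rw [ht, hE]; exact d_cutc τ hL hb he0 η
        _ ≤ dTau τ (d m) + _ := by
            gcongr
            rw [he, d_star_eq]
            exact d_le_d τ (star_mul_self_nonneg _) hdm (star_mul_self_mem hyd)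
        _ = _ := add_comm _ _) δ hδ
    have hφz : ∀ i < m, φ * z i = 0 := fun i hi => Rid_mul_zero hφt (hz1 i hi).1
    refine ⟨fun i => if i = m then φ * y else z i, fun i hi => ?_, fun i hi j hj hij => ?_⟩
    · by_cases h : i = m
      · subst h
        simp only [if_true]
        refine ⟨mul_mem_Rid hφb _, by rw [star_mul]; exact mul_mem_Rid hyd _, ?_⟩
        have a1 : ‖y - φ * y‖ ≤ μ := by
          rw [hφ]
          exact norm_sub_fEps_mul' (by rw [he]) hμ0 (by linarith) (by rw [hη]; linarith)
        have g1 := (gram_close le_rfl (by rw [hφ]; exact norm_fEps_mul_le' _ _ _) a1).trans hμ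
        calc _ = ‖(star y * y - d i) - (star y * y - star (φ * y) * (φ * y))‖ := by congr 1; abel
          _ ≤ _ := norm_sub_le _ _
          _ < δ := by linarith
      · simp only [h, if_false]
        obtain ⟨h1, h2, h3⟩ := hz1 i (by omega)
        exact ⟨Rid_le htb h1, h2, h3⟩
    · by_cases h : i = m
      · subst h
        have : ¬ j = i := fun h => hij h.symm
        simp only [if_true, this, if_false]
        rw [star_mul, hφs, mul_assoc, hφz j (by omega), mul_zero]
      · by_cases h' : j = m
        · subst h'
          simp only [if_true, h, if_false]
          have := congrArg star (hφz i (by omega))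
          rw [star_mul, hφs, star_zero] at this
          rw [← mul_assoc, this, zero_mul]
        · simp only [h, h', if_false]
          exact hz2 i (by omega) j (by omega) hij

end P6

section P7
variable {V : Type*} [NonUnitalCStarAlgebra V] [PartialOrder V] [StarOrderedRing V]

/-- each block `d` is twice dominated by the sum of the later blocks and the remainder -/
def Good (ρ : V) : List V → Prop
  | [] => True
  | d :: l => 0 ≤ d ∧ d * (l.sum + ρ) = 0 ∧ 
      (∀ τ : QuasiTrace V, ¬ τ.IsZero → 2 * dTau τ d < dTau τ (l.sum + ρ)) ∧ Good ρ l

lemma Good.sum_nonneg {ρ : V} : ∀ {l : List V}, Good ρ l → 0 ≤ l.sum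
  | [], _ => by simp
  | d :: l, h => by rw [List.sum_cons]; exact add_nonneg h.1 (Good.sum_nonneg h.2.2.2)

lemma Hb_mul_zero {b c x y : V} (hb : star b = b) (h : b * c = 0) (hx : x ∈ Hb b) (hy : y ∈ Rid c) : x * y = 0 := by
  have h1 : star y * b = 0 := by
    have h2 : b * y = 0 := Rid_mul_zero h hy
    have := congrArg star h2
    rwa [star_mul, hb, star_zero] at this
  have h3 : star y * star x = 0 := Rid_mul_zero h1 hx.2
  have := congrArg star h3
  rwa [star_mul, star_star, star_star, star_zero] at this

lemma triangular {b' D r : V} {g' : Unitization ℂ V} {c : ℝ} (hc : 0 < c) (hgu : IsUnit g') (hg : g'.fst = (c : ℂ))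
    (hD : 0 ≤ D) (h1 : D * g'.snd = 0) (h2 : g'.snd * D = 0) (h3 : g'.snd * r = 0) (h4 : r * D = 0) (h5 : r * r = 0) :
    IsUnit (g' + (D : Unitization ℂ V) + (r : Unitization ℂ V)) := by
  obtain ⟨B, hB⟩ : ∃ B : Unitization ℂ V, B = (g'.snd : Unitization ℂ V) := ⟨_, rfl⟩
  obtain ⟨δ, hδ⟩ : ∃ δ : Unitization ℂ V, δ = (D : Unitization ℂ V) := ⟨_, rfl⟩
  obtain ⟨R, hR⟩ : ∃ R : Unitization ℂ V, R = (r : Unitization ℂ V) := ⟨_, rfl⟩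
  have e1 : δ * B = 0 := by rw [hδ, hB, ← Unitization.inr_mul, h1, Unitization.inr_zero]
  have e2 : B * δ = 0 := by rw [hδ, hB, ← Unitization.inr_mul, h2, Unitization.inr_zero]
  have e3 : B * R = 0 := by rw [hR, hB, ← Unitization.inr_mul, h3, Unitization.inr_zero]
  have e4 : R * δ = 0 := by rw [hδ, hR, ← Unitization.inr_mul, h4, Unitization.inr_zero]
  have e5 : R * R = 0 := by rw [hR, ← Unitization.inr_mul, h5, Unitization.inr_zero]
  rw [← hδ, ← hR]
  have hδ0 : 0 ≤ δ := by
    rw [hδ]; exact Unitization.inr_nonneg_iff.2 hD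
  have hgd : g' = c • 1 + B := by
    conv_lhs => rw [← Unitization.inl_fst_add_inr_snd_eq g', hg]
    rw [hB, ← Algebra.algebraMap_eq_smul_one]; congr 1
  obtain ⟨k, hgk, hkg⟩ : ∃ k, g' * k = 1 ∧ k * g' = 1 := by
    obtain ⟨u, hu⟩ := hgu
    exact ⟨↑u⁻¹, by rw [← hu]; simp, by rw [← hu]; simp⟩
  have k1 : ∀ q : Unitization ℂ V, B * q = 0 → k * q = c⁻¹ • q := by
    intro q hq
    have : q = c • (k * q) := by
      calc q = k * g' * q := by rw [hkg, one_mul]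
        _ = k * (c • q) := by rw [hgd, mul_assoc, add_mul, hq, add_zero, smul_mul_assoc, one_mul]
        _ = _ := mul_smul_comm _ _ _
    rw [eq_inv_smul_iff₀ hc.ne']; exact this.symm
  have u1 : IsUnit (1 + c⁻¹ • δ) := by
    refine CStarAlgebra.isUnit_of_le (1 : Unitization ℂ V) (le_add_of_nonneg_right (smul_nonneg_r hδ0 (by positivity))) ?_
    first | exact isStrictlyPositive_one | cfc_tac
  have u2 : IsUnit (1 + R * k) := by
    have hs : R * k * (R * k) = 0 := by
      rw [show R * k * (R * k) = R * (k * R) * k by noncomm_ring, k1 R e3, mul_smul_comm, e5]; simp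
    refine isUnit_iff_exists.2 ⟨1 - R * k, ?_, ?_⟩
    · rw [show (1 + R * k) * (1 - R * k) = 1 - R * k * (R * k) by noncomm_ring, hs, sub_zero]
    · rw [show (1 - R * k) * (1 + R * k) = 1 - R * k * (R * k) by noncomm_ring, hs, sub_zero]
  have : g' + δ + R = (1 + R * k) * ((1 + c⁻¹ • δ) * g') := by
    have f1 : (1 + c⁻¹ • δ) * g' = g' + δ := by
      rw [add_mul, one_mul, smul_mul_assoc]
      congr 1
      conv_lhs => rw [hgd]
      rw [mul_add, e1, add_zero, mul_smul_comm, mul_one, smul_smul, inv_mul_cancel₀ hc.ne', one_smul]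
    rw [f1, add_mul, one_mul, mul_add, mul_assoc, hkg, mul_one, mul_assoc, k1 δ e2, mul_smul_comm, e4, smul_zero, add_zero]
  rw [this]
  exact u2.mul (u1.mul hgu)

variable {L : ℕ → V → V}

lemma KL (hL : IsCopies L) (hsc : StrictComparison V) {ρ : V} (hρ : 0 ≤ ρ) : ∀ (l : List V), Good ρ l → 
    ∀ w, (((l.sum + ρ) * w * l.sum : V) : Unitization ℂ V) ∈ closure (Gset (l.sum + ρ))
  | [], _ => by
    intro w
    simp only [List.sum_nil, mul_zero]
    exact nil_mem_closure (zero_mem _) (by simp)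
  | d :: l, hgood => by
    intro w
    obtain ⟨hd0, hdo, hdd, hgl⟩ := hgood
    have ih := KL hL hsc hρ l hgl
    have hn0 := hgl.sum_nonneg
    rw [List.sum_cons]
    obtain ⟨n', hn'⟩ : ∃ n', n' = l.sum := ⟨_, rfl⟩
    rw [← hn'] at hdo hdd ih hn0 ⊢
    obtain ⟨b', hb'⟩ : ∃ b', b' = n' + ρ := ⟨_, rfl⟩
    rw [← hb'] at hdo hdd ih
    have hb'0 : 0 ≤ b' := by rw [hb']; exact add_nonneg hn0 hρ
    rw [add_assoc, ← hb']
    obtain ⟨b, hb⟩ : ∃ b, b = d + b' := ⟨_, rfl⟩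
    rw [← hb]
    have hbp : 0 ≤ b := by rw [hb]; exact add_nonneg hd0 hb'0
    have hdb : d ∈ Rid b := mem_Rid_of_le' hd0 (by rw [hb]; exact le_add_of_nonneg_right hb'0)
    have hb'b : b' ∈ Rid b := mem_Rid_of_le' hb'0 (by rw [hb]; exact le_add_of_nonneg_left hd0)
    have hn'b' : n' ∈ Rid b' := mem_Rid_of_le' hn0 (by rw [hb']; exact le_add_of_nonneg_right hρ)
    have hdn : d * n' = 0 := Rid_mul_zero hdo hn'b'
    have hnd : n' * d = 0 := orth_comm hd0 hn0 hdn
    have hb'd : b' * d = 0 := orth_comm hd0 hb'0 hdo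
    obtain ⟨z1, hz1⟩ : ∃ z1, z1 = b * w * d := ⟨_, rfl⟩
    have hz1b : z1 ∈ Rid b := by rw [hz1, mul_assoc]; exact mul_mem_Rid_self _ _
    have hz1d : star z1 ∈ Rid d := by rw [hz1, star_mul, sa hd0]; exact mul_mem_Rid_self _ _
    have hzz : 0 ≤ star z1 * z1 := star_mul_self_nonneg _
    obtain ⟨D, hD⟩ : ∃ D, D = CFC.sqrt (star z1 * z1) := ⟨_, rfl⟩
    have hD0 : 0 ≤ D := by rw [hD]; exact sqrt_nonneg' _
    have hDD : D * D = star z1 * z1 := by rw [hD]; exact sqrt_mul hzz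
    have hDd : D ∈ Rid d := by rw [hD]; exact sqrt_mem_Rid hzz (star_mul_self_mem hz1d)
    have hDH : D ∈ Hb d := ⟨hDd, by rw [sa hD0]; exact hDd⟩
    have hDb : D ∈ Rid b := Rid_le hdb hDd
    have hDgram : star D * D = star z1 * z1 := by rw [sa hD0, hDD]
    rw [Metric.mem_closure_iff]
    intro ε hε
    obtain ⟨δ, hδ0, hS⟩ := LemS hL hsc (show 0 ≤ max ‖z1‖ ‖D‖ from le_max_of_le_left (norm_nonneg _)) 
      (show 0 < ε / 4 by positivity)
    obtain ⟨v, hv, e1⟩ := hS b z1 D hbp hz1b hDb (le_max_left _ _) (le_max_right _ _) 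
      (by rw [hDgram, sub_self, norm_zero]; exact hδ0.le) (fun τ hτ => by
        have h1 : dTau τ (star z1 * z1) ≤ dTau τ d := d_le_d τ hzz hd0 (star_mul_self_mem hz1d)
        have h2 := hdd τ hτ
        have h3 : dTau τ d ≠ ∞ := by
          intro h; rw [h] at h2
          rw [ENNReal.mul_top (by norm_num)] at h2
          exact not_top_lt h2
        rw [hDgram, hb, d_orth τ hd0 hb'0 hdo]
        calc _ ≤ dTau τ d + dTau τ d + dTau τ d := by gcongr
          _ = dTau τ d + 2 * dTau τ d := by ring
          _ < _ := ENNReal.add_lt_add_left h3 h2)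
    obtain ⟨x, hx⟩ : ∃ x, x = (b * w) + v * (b * w) := ⟨_, rfl⟩
    have hxb : x ∈ Rid b := by rw [hx]; exact hv.mem_Rid (mul_mem_Rid_self _ _)
    obtain ⟨w', hw'⟩ := Rid_approx hxb (show 0 < ε / (4 * (‖n'‖ + 1)) by positivity)
    obtain ⟨g', hg', e2⟩ := Metric.mem_closure_iff.1 (ih w') (ε / 4) (by positivity)
    rw [dist_eq_norm] at e2
    obtain ⟨hgA, hgu, c, hc, hgc⟩ := hg'
    obtain ⟨r, hr⟩ : ∃ r, r = d * w' * n' := ⟨_, rfl⟩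
    have hrb : r ∈ Hb b := by
      rw [hr]
      refine ⟨mul_mem_Rid (mul_mem_Rid hdb _) _, ?_⟩
      rw [star_mul, sa hn0]
      exact mul_mem_Rid (Rid_le hb'b hn'b') _
    have hg'H : g'.snd ∈ Hb b' := hgA
    have hgu2 : IsUnit (g' + (D : Unitization ℂ V) + (r : Unitization ℂ V)) := by
      refine triangular (b' := b') hc hgu hgc hD0 ?_ ?_ ?_ ?_ ?_
      · exact Hb_mul_zero (sa hd0) hdo hDH hg'H.1
      · exact Hb_mul_zero (sa hb'0) hb'd hg'H hDd
      · rw [hr]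
        exact Hb_mul_zero (sa hb'0) hb'd hg'H (by rw [mul_assoc]; exact mul_mem_Rid_self _ _)
      · rw [hr, mul_assoc, Rid_mul_zero hnd hDd, mul_zero]
      · rw [hr, show d * w' * n' * (d * w' * n') = d * w' * (n' * d) * (w' * n') by noncomm_ring, hnd]; simp
    obtain ⟨g, hg⟩ : ∃ g, g = g' + (D : Unitization ℂ V) + (r : Unitization ℂ V) := ⟨_, rfl⟩
    rw [← hg] at hgu2
    have hgAb : g ∈ Ab b := by
      rw [hg]
      refine add_mem (add_mem ?_ (inr_mem_Ab ⟨hDb, by rw [sa hD0]; exact hDb⟩)) (inr_mem_Ab hrb)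
      exact ⟨Rid_le hb'b hg'H.1, Rid_le hb'b hg'H.2⟩
    have hgf : g.fst = (c : ℂ) := by rw [hg]; simp [hgc]
    refine ⟨(1 + ((star v : V) : Unitization ℂ V)) * g, ⟨?_, ?_, c, hc, ?_⟩, ?_⟩
    · exact mul_mem (add_mem (one_mem _) (inr_mem_Ab hv.star'.mem)) hgAb
    · refine IsUnit.mul ?_ hgu2
      have h1 := hv.star'.unit
      have h2 := hv.unit
      have h3 : star (1 + (v : Unitization ℂ V)) = 1 + ((star v : V) : Unitization ℂ V) := by
        rw [star_add, star_one, Unitization.inr_star]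
      refine isUnit_iff_exists.2 ⟨1 + (v : Unitization ℂ V), by rw [← h3]; exact h2, ?_⟩
      rw [← h3, star_star] at h1; rw [← h3]; exact h1
    · rw [Unitization.fst_mul, hgf]; simp
    · rw [dist_eq_norm]
      obtain ⟨z, hz⟩ : ∃ z, z = b * w * (d + n') := ⟨_, rfl⟩
      rw [← hz]
      have e3 : (z : Unitization ℂ V) = (1 + ((star v : V) : Unitization ℂ V)) * ((z + v * z : V) : Unitization ℂ V) := by
        conv_lhs => rw [← hv.inv_act z]
        obtain ⟨y, hy⟩ : ∃ y, y = z + v * z := ⟨_, rfl⟩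
        rw [← hy, add_mul, one_mul, Unitization.inr_add, Unitization.inr_mul]
      rw [e3, ← mul_sub, norm_mul_isom hv.star'.unit]
      have e4 : z + v * z = (z1 + v * z1) + x * n' := by rw [hz, hz1, hx]; noncomm_ring
      have e5 : ((z + v * z : V) : Unitization ℂ V) - g = ((z1 + v * z1 - D : V) : Unitization ℂ V) 
          + (((x - b * w') * n' : V) : Unitization ℂ V) + (((b' * w' * n' : V) : Unitization ℂ V) - g') := by
        rw [e4, hg, show (x - b * w') * n' = x * n' - (r + b' * w' * n') by rw [hr, hb]; noncomm_ring]
        simp only [Unitization.inr_add, Unitization.inr_sub]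
        abel
      rw [e5]
      have e6 : ‖(x - b * w') * n'‖ ≤ ε / 4 := by
        calc _ ≤ ‖x - b * w'‖ * ‖n'‖ := norm_mul_le _ _
          _ ≤ (ε / (4 * (‖n'‖ + 1))) * (‖n'‖ + 1) := by gcongr; linarith
          _ = _ := by field_simp
      calc _ ≤ ‖z1 + v * z1 - D‖ + ‖(x - b * w') * n'‖ + ‖((b' * w' * n' : V) : Unitization ℂ V) - g'‖ := by
            refine (norm_add_le _ _).trans ?_
            gcongr
            refine (norm_add_le _ _).trans ?_
            rw [norm_inr', norm_inr']
        _ < ε := by linarith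

lemma KL' (hL : IsCopies L) (hsc : StrictComparison V) {ρ : V} (hρ : 0 ≤ ρ) {l : List V} (hl : Good ρ l) 
    {x y : V} (hx : x ∈ Rid (l.sum + ρ)) (hy : y ∈ Rid l.sum) : 
    ((x * star y : V) : Unitization ℂ V) ∈ closure (Gset (l.sum + ρ)) := by
  have hn := hl.sum_nonneg
  have hc : IsClosed (closure (Gset (l.sum + ρ))) := isClosed_closure
  refine Rid_induction (p := fun x => ((x * star y : V) : Unitization ℂ V) ∈ closure (Gset (l.sum + ρ))) ?_ (fun s => ?_) hx
  · exact hc.preimage ((Unitization.continuous_inr).comp (by fun_prop))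
  refine Rid_induction (p := fun y => (((l.sum + ρ) * s * star y : V) : Unitization ℂ V) ∈ closure (Gset (l.sum + ρ))) ?_ (fun t => ?_) hy
  · exact hc.preimage ((Unitization.continuous_inr).comp (by fun_prop))
  rw [star_mul, sa hn, ← mul_assoc, mul_assoc _ s]
  exact KL hL hsc hρ l hl _

end P7

section P8
variable {V : Type*} [NonUnitalCStarAlgebra V] [PartialOrder V] [StarOrderedRing V]

lemma intertwine {P : ℕ → V → Prop} (h0 : ∃ x, P 0 x) {C : ℝ}
    (hs : ∀ k x, P k x → ∃ x', P (k + 1) x' ∧ ‖x - x'‖ ≤ C * (1 / 2) ^ k) : 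
    ∃ (u : ℕ → V) (X : V), (∀ k, P k (u k)) ∧ Tendsto u atTop (𝓝 X) := by
  obtain ⟨x0, hx0⟩ := h0
  choose! f hf1 hf2 using hs
  let u : ℕ → V := fun n => Nat.rec x0 (fun k x => f k x) n
  have hu : ∀ k, P k (u k) := by
    intro k
    induction k with
    | zero => exact hx0
    | succ k ih => exact hf1 k _ ih
  have hc : CauchySeq u := by
    refine cauchySeq_of_le_geometric (1 / 2) C (by norm_num) fun n => ?_
    rw [dist_eq_norm]
    exact hf2 n _ (hu n)
  obtain ⟨X, hX⟩ := cauchySeq_tendsto_of_complete hc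
  exact ⟨u, X, hu, hX⟩

lemma d_sum_orth (τ : QuasiTrace V) {d : ℕ → V} (hd : ∀ i, 0 ≤ d i) (ho : ∀ i j, i ≠ j → d i * d j = 0) (s : Finset ℕ) :
    dTau τ (∑ i ∈ s, d i) = ∑ i ∈ s, dTau τ (d i) := by
  induction s using Finset.induction_on with
  | empty => simp [d_zero]
  | insert i s hi ih =>
    rw [Finset.sum_insert hi, Finset.sum_insert hi, ← ih]
    refine d_orth τ (hd i) (Finset.sum_nonneg fun j _ => hd j) ?_
    rw [Finset.mul_sum]
    exact Finset.sum_eq_zero fun j hj => ho i j (fun h => hi (h ▸ hj))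

lemma sum_map_range' (d : ℕ → V) (len : ℕ) : ∀ s, ((List.range' s len).map d).sum = ∑ j ∈ Finset.Ico s (s + len), d j := by
  induction len with
  | zero => intro s; simp
  | succ len ih =>
    intro s
    rw [List.range'_succ, List.map_cons, List.sum_cons, ih (s + 1), 
      Finset.sum_eq_sum_Ico_succ_bot (a := s) (b := s + (len + 1)) (by omega), show s + 1 + len = s + (len + 1) by ring]

lemma good_list {d : ℕ → V} (hd : ∀ i, 0 ≤ d i) (ho : ∀ i j, i ≠ j → d i * d j = 0) {n r : ℕ} (hnr : n ≤ r) 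
    (h : ∀ i < n, ∀ τ : QuasiTrace V, ¬ τ.IsZero → 2 * dTau τ (d i) < ∑ j ∈ Finset.Ico (i + 1) r, dTau τ (d j)) 
    (len : ℕ) : ∀ s, s + len = n → Good (∑ j ∈ Finset.Ico n r, d j) ((List.range' s len).map d) := by
  induction len with
  | zero => intro s _; trivial
  | succ len ih =>
    intro s hs
    have hsum : ((List.range' (s + 1) len).map d).sum + ∑ j ∈ Finset.Ico n r, d j = ∑ j ∈ Finset.Ico (s + 1) r, d j := by
      rw [sum_map_range', show s + 1 + len = n by omega, Finset.sum_Ico_consecutive _ (by omega) hnr]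
    rw [List.range'_succ, List.map_cons]
    refine ⟨hd s, ?_, fun τ hτ => ?_, ih (s + 1) (by omega)⟩
    · rw [hsum, Finset.mul_sum]
      exact Finset.sum_eq_zero fun j hj => ho s j (by have := Finset.mem_Ico.1 hj; omega)
    · rw [hsum, d_sum_orth τ hd ho]
      exact h s (by omega) τ hτ

lemma mem_Rid_sum_mono {d : ℕ → V} (hd : ∀ i, 0 ≤ d i) {m n : ℕ} (h : m ≤ n) {x : V} 
    (hx : x ∈ Rid (∑ i ∈ Finset.range m, d i)) : x ∈ Rid (∑ i ∈ Finset.range n, d i) := by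
  refine Rid_le (mem_Rid_of_le' (Finset.sum_nonneg fun j _ => hd j) ?_) hx
  exact Finset.sum_le_sum_of_subset_of_nonneg (Finset.range_mono h) fun j _ _ => hd j

variable {L : ℕ → V → V}

lemma thm1 (hL : IsCopies L) (hsc : StrictComparison V) {a : V} (ha : 0 ≤ a) {d : ℕ → V} (hd : ∀ i, 0 ≤ d i) 
    (ho : ∀ i j, i ≠ j → d i * d j = 0) 
    (H : ∀ δ > 0, ∀ n0 : ℕ, ∃ (n r : ℕ) (a' : V), n ≤ r ∧ n0 ≤ r ∧ 0 ≤ a' ∧ ‖a - a'‖ < δ ∧ 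
      (∀ τ : QuasiTrace V, ¬ τ.IsZero → dTau τ a' < ∑ i ∈ Finset.range n, dTau τ (d i)) ∧ 
      ∀ i < n, ∀ τ : QuasiTrace V, ¬ τ.IsZero → 2 * dTau τ (d i) < ∑ j ∈ Finset.Ico (i + 1) r, dTau τ (d j)) :
    ∃ X, star X * X = a ∧ X ∈ closure {x | ∃ n, x ∈ Rid (∑ i ∈ Finset.range n, d i)} := by
  obtain ⟨M, hM⟩ : ∃ M : ℝ, M = ‖a‖ + 1 := ⟨_, rfl⟩
  have hM0 : 0 ≤ M := by rw [hM]; positivity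
  have nb : ∀ X : V, ‖star X * X - a‖ ≤ 1 → ‖X‖ ≤ M := by
    intro X hX
    refine le_of_sq_le_sq ?_ hM0
    rw [sq, ← CStarRing.norm_star_mul_self]
    calc ‖star X * X‖ = ‖(star X * X - a) + a‖ := by congr 1; abel
      _ ≤ 1 + ‖a‖ := (norm_add_le _ _).trans (by gcongr)
      _ ≤ _ := by rw [hM]; nlinarith [norm_nonneg a]
  have hSL : ∀ k : ℕ, ∃ δ > 0, ∀ b X Y : V, ‖X‖ ≤ M → ‖Y‖ ≤ M →
    ‖star X * X - star Y * Y‖ ≤ δ → ((X * star Y : V) : Unitization ℂ V) ∈ closure (Gset b) →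
    ∃ v, IsU b v ∧ ‖Y + v * Y - X‖ < (1 / 2) ^ k := fun k => SL hM0 (by positivity)
  choose σ hσ0 hσ using hSL
  obtain ⟨θ, hθ⟩ : ∃ θ : ℕ → ℝ, θ = fun k => min (min 1 (σ k / 2)) (1 / ((k : ℝ) + 1)) := ⟨_, rfl⟩
  have hθ0 : ∀ k, 0 < θ k := fun k => by
    have := hσ0 k
    rw [hθ]; positivity
  have hθ1 : ∀ k, θ k ≤ 1 := fun k => by rw [hθ]; exact (min_le_left _ _).trans (min_le_left _ _)
  have hθ2 : ∀ k, θ k ≤ σ k / 2 := fun k => by rw [hθ]; exact (min_le_left _ _).trans (min_le_right _ _)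
  have hθ3 : ∀ k, θ k ≤ 1 / ((k : ℝ) + 1) := fun k => by rw [hθ]; exact (min_le_right _ _)
  -- existence of approximants
  have hex : ∀ δ > 0, ∀ n0 : ℕ, ∃ (n r : ℕ) (Y : V), n ≤ r ∧ n0 ≤ r ∧ Y ∈ Rid (∑ i ∈ Finset.range n, d i) ∧ 
      ‖star Y * Y - a‖ ≤ δ ∧ 
      ∀ i < n, ∀ τ : QuasiTrace V, ¬ τ.IsZero → 2 * dTau τ (d i) < ∑ j ∈ Finset.Ico (i + 1) r, dTau τ (d j) := by
    intro δ hδ n0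
    obtain ⟨n, r, a', h1, h2, h3, h4, h5, h6⟩ := H (δ / 2) (by positivity) n0
    have hs0 : 0 ≤ ∑ i ∈ Finset.range n, d i := Finset.sum_nonneg fun j _ => hd j
    have hcu : CuntzLE a' (∑ i ∈ Finset.range n, d i) := hsc _ _ h3 hs0 fun τ hτ => by
      rw [d_sum_orth τ hd ho]; exact h5 τ hτ
    obtain ⟨Y, hY1, -, hY2⟩ := cuntz_approx h3 hs0 hcu (show 0 < δ / 2 by positivity)
    refine ⟨n, r, Y, h1, h2, hY1, ?_, h6⟩
    calc _ = ‖(star Y * Y - a') - (a - a')‖ := by congr 1; abel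
      _ ≤ _ := norm_sub_le _ _
      _ ≤ δ := by linarith
  obtain ⟨u, X, hu, hX⟩ := intertwine (V := V) (C := 1) 
    (P := fun k x => (∃ n, x ∈ Rid (∑ i ∈ Finset.range n, d i)) ∧ ‖star x * x - a‖ ≤ θ k) 
    (by
      obtain ⟨n, r, Y, h1, h2, h3, h4, h5⟩ := hex (θ 0) (hθ0 0) 0
      exact ⟨Y, ⟨n, h3⟩, h4⟩) 
    (by
      rintro k x ⟨⟨n0, hx⟩, hxa⟩
      obtain ⟨n, r, Y, h1, h2, h3, h4, h5⟩ := hex (min (θ k) (θ (k + 1))) (lt_min (hθ0 _) (hθ0 _)) n0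
      have h4a := h4.trans (min_le_left _ _)
      have h4b := h4.trans (min_le_right _ _)
      have hg := good_list hd ho h1 h5 n 0 (by simp)
      have hs1 := sum_map_range' d n 0
      rw [zero_add, ← Finset.range_eq_Ico] at hs1
      have hs2 : ((List.range' 0 n).map d).sum + ∑ j ∈ Finset.Ico n r, d j = ∑ j ∈ Finset.range r, d j := by
        rw [hs1, Finset.range_eq_Ico, Finset.sum_Ico_consecutive _ (by omega) h1, Finset.range_eq_Ico]
      have hk := KL' hL hsc (Finset.sum_nonneg fun j _ => hd j) hg (x := x) (y := Y)
        (by rw [hs2]; exact mem_Rid_sum_mono hd h2 hx) (by rw [hs1]; exact h3)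
      rw [hs2] at hk
      obtain ⟨v, hv, hve⟩ := hσ k _ x Y (nb x (hxa.trans (hθ1 k))) (nb Y (h4a.trans (hθ1 k))) (by
        calc _ = ‖(star x * x - a) - (star Y * Y - a)‖ := by congr 1; abel
          _ ≤ _ := norm_sub_le _ _
          _ ≤ _ := by linarith [hθ2 k]) hk
      refine ⟨Y + v * Y, ⟨⟨r, hv.mem_Rid (mem_Rid_sum_mono hd h1 h3)⟩, by rw [hv.gram]; exact h4b⟩, ?_⟩
      rw [norm_sub_rev, one_mul]; exact hve.le)
  refine ⟨X, ?_, mem_closure_of_tendsto hX (Eventually.of_forall fun k => (hu k).1)⟩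
  have h1 : Tendsto (fun k => star (u k) * u k) atTop (𝓝 (star X * X)) := (hX.star).mul hX
  have h2 : Tendsto (fun k => star (u k) * u k) atTop (𝓝 a) := by
    rw [tendsto_iff_norm_sub_tendsto_zero]
    exact squeeze_zero (fun _ => norm_nonneg _) (fun k => (hu k).2.trans (hθ3 k)) tendsto_one_div_add_atTop_nhds_zero_nat
  exact tendsto_nhds_unique h1 h2

lemma thm2 (hL : IsCopies L) (hsc : StrictComparison V) {b D : V} (hb : 0 ≤ b) {d : ℕ → V} (hd : ∀ i, 0 ≤ d i) 
    (hn : ∀ i, ‖d i‖ ≤ (1 / 4) ^ i) (hD : Tendsto (fun n => ∑ i ∈ Finset.range n, d i) atTop (𝓝 D))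
    (H1 : ∀ m, ∀ τ : QuasiTrace V, ¬ τ.IsZero → ∑ i ∈ Finset.range m, dTau τ (d i) < dTau τ b) 
    (H2 : ∀ i, ∀ τ : QuasiTrace V, ¬ τ.IsZero → ∑ j ∈ Finset.range i, dTau τ (d j) + 3 * dTau τ (d i) < dTau τ b) :
    ∃ T, star T * T = D ∧ T ∈ Rid b := by
  have hLU := fun k : ℕ => LU hL hsc (show (0:ℝ) ≤ 2 by norm_num) k ((1 / 2) ^ k / ((k : ℝ) + 1)) (by positivity)
  choose δ hδ0 hδ using hLU
  obtain ⟨θ, hθ⟩ : ∃ θ : ℕ → ℝ, θ = fun k => min (min ((1/4) ^ k) (δ k / 2)) (1 / ((k : ℝ) + 1)^2) := ⟨_, rfl⟩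
  have hθ0 : ∀ k, 0 < θ k := fun k => by
    have := hδ0 k
    rw [hθ]; positivity
  have hθ1 : ∀ k, θ k ≤ (1/4) ^ k := fun k => by rw [hθ]; exact (min_le_left _ _).trans (min_le_left _ _)
  have hθ2 : ∀ k, θ k ≤ δ k / 2 := fun k => by rw [hθ]; exact (min_le_left _ _).trans (min_le_right _ _)
  have hθ3 : ∀ k, θ k ≤ 1 / ((k : ℝ) + 1)^2 := fun k => by rw [hθ]; exact (min_le_right _ _)
  have h4 : ∀ k : ℕ, ((1:ℝ)/4)^k ≤ 1 := fun k => pow_le_one₀ (by norm_num) (by norm_num)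
  have nb : ∀ (y : V) (i : ℕ), ‖star y * y - d i‖ ≤ 1 → ‖y‖ ≤ 2 := by
    intro X i hX
    refine le_of_sq_le_sq ?_ (by norm_num)
    rw [sq, ← CStarRing.norm_star_mul_self]
    calc ‖star X * X‖ = ‖(star X * X - d i) + d i‖ := by congr 1; abel
      _ ≤ 1 + 1 := (norm_add_le _ _).trans (by gcongr; exact (hn i).trans (h4 i))
      _ ≤ _ := by norm_num
  let Q : ℕ → (ℕ → V) → Prop := fun k y => 
    (∀ i < k, y i ∈ Rid b ∧ star (y i) ∈ Rid (d i) ∧ ‖star (y i) * y i - d i‖ ≤ θ k) ∧ 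
      ∀ i < k, ∀ j < k, i ≠ j → star (y i) * y j = 0
  obtain ⟨u, T, hu, hT⟩ := intertwine (V := V) (C := 3) 
    (P := fun k x => ∃ y, Q k y ∧ x = ∑ i ∈ Finset.range k, y i) 
    ⟨0, 0, ⟨by intro i hi; omega, by intro i hi; omega⟩, by simp⟩
    (by
      rintro k x ⟨y, ⟨hy1, hy2⟩, rfl⟩
      obtain ⟨z, hz1, hz2⟩ := exist_family hL hsc (k + 1) b d hb (fun i _ => hd i) (fun τ hτ => H1 _ τ hτ) 
        (min (θ k) (θ (k + 1))) (lt_min (hθ0 _) (hθ0 _))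
      have hza : ∀ i < k + 1, ‖star (z i) * z i - d i‖ ≤ θ k := fun i hi => 
        (hz1 i hi).2.2.le.trans (min_le_left _ _)
      have hzb : ∀ i < k + 1, ‖star (z i) * z i - d i‖ ≤ θ (k + 1) := fun i hi => 
        (hz1 i hi).2.2.le.trans (min_le_right _ _)
      obtain ⟨v, hv, hve⟩ := hδ k b y z (fun τ i => dTau τ (d i)) hb 
        (fun i hi => by
          obtain ⟨a1, a2, a3⟩ := hy1 i hi
          obtain ⟨c1, c2, c3⟩ := hz1 i (by omega)
          refine ⟨a1, c1, nb _ i (a3.trans ((hθ1 k).trans (h4 k))), nb _ i ((hza i (by omega)).trans ((hθ1 k).trans (h4 k))), ?_⟩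
          calc _ = ‖(star (y i) * y i - d i) - (star (z i) * z i - d i)‖ := by congr 1; abel
            _ ≤ _ := norm_sub_le _ _
            _ ≤ _ := by linarith [hθ2 k, hza i (by omega)]) 
        (fun i hi j hj hij => ⟨hy2 i hi j hj hij, hz2 i (by omega) j (by omega) hij⟩) 
        (fun τ hτ i hi => ⟨d_le_d τ (star_mul_self_nonneg _) (hd i) (star_mul_self_mem (hy1 i hi).2.1), 
          d_le_d τ (star_mul_self_nonneg _) (hd i) (star_mul_self_mem (hz1 i (by omega)).2.1), H2 i τ hτ⟩)
      refine ⟨_, ⟨fun i => z i + v * z i, ⟨fun i hi => ?_, fun i hi j hj hij => ?_⟩, rfl⟩, ?_⟩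
      · obtain ⟨c1, c2, c3⟩ := hz1 i hi
        refine ⟨hv.mem_Rid c1, ?_, by rw [hv.gram]; exact hzb i hi⟩
        rw [star_add, star_mul]; exact add_mem c2 (mul_mem_Rid c2 _)
      · rw [hv.gram]; exact hz2 i hi j hj hij
      · rw [Finset.sum_range_succ]
        have e1 : ‖z k + v * z k‖ ≤ 2 * (1 / 2) ^ k := by
          rw [hv.norm]
          refine le_of_sq_le_sq ?_ (by positivity)
          rw [sq, ← CStarRing.norm_star_mul_self]
          calc ‖star (z k) * z k‖ = ‖(star (z k) * z k - d k) + d k‖ := by congr 1; abel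
            _ ≤ (1 / 4) ^ k + (1 / 4) ^ k := (norm_add_le _ _).trans (by
                gcongr
                · exact (hza k (by omega)).trans (hθ1 k)
                · exact hn k)
            _ ≤ 4 * (1 / 4) ^ k := by nlinarith [show (0:ℝ) < (1/4)^k by positivity]
            _ = _ := by rw [mul_pow, ← pow_mul, mul_comm k 2, pow_mul]; norm_num
        have e2 : ‖∑ i ∈ Finset.range k, y i - ∑ i ∈ Finset.range k, (z i + v * z i)‖ ≤ (1 / 2) ^ k := by
          rw [← Finset.sum_sub_distrib]
          calc _ ≤ ∑ i ∈ Finset.range k, ‖y i - (z i + v * z i)‖ := norm_sum_le _ _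
            _ ≤ ∑ i ∈ Finset.range k, (1 / 2) ^ k / ((k : ℝ) + 1) := Finset.sum_le_sum fun i hi => by
                rw [norm_sub_rev]; exact (hve i (Finset.mem_range.1 hi)).le
            _ = k * ((1 / 2) ^ k / ((k : ℝ) + 1)) := by simp
            _ ≤ (k + 1) * ((1 / 2) ^ k / ((k : ℝ) + 1)) := by gcongr; linarith
            _ = _ := by field_simp
        rw [← sub_sub]
        refine (norm_sub_le _ _).trans ?_
        linarith)
  refine ⟨T, ?_, ?_⟩
  · have h1 : Tendsto (fun k => star (u k) * u k) atTop (𝓝 (star T * T)) := (hT.star).mul hT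
    have h2 : Tendsto (fun k => star (u k) * u k - ∑ i ∈ Finset.range k, d i) atTop (𝓝 0) := by
      rw [tendsto_zero_iff_norm_tendsto_zero]
      refine squeeze_zero (fun _ => norm_nonneg _) (fun k => ?_) tendsto_one_div_add_atTop_nhds_zero_nat
      obtain ⟨y, ⟨hy1, hy2⟩, hy3⟩ := hu k
      have e1 : star (u k) * u k = ∑ i ∈ Finset.range k, star (y i) * y i := by
        rw [hy3, star_sum, Finset.sum_mul]
        refine Finset.sum_congr rfl fun i hi => ?_
        rw [Finset.mul_sum]
        refine Finset.sum_eq_single_of_mem i hi fun j hj hij => ?_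
        exact hy2 i (Finset.mem_range.1 hi) j (Finset.mem_range.1 hj) hij.symm
      rw [e1, ← Finset.sum_sub_distrib]
      calc _ ≤ ∑ i ∈ Finset.range k, ‖star (y i) * y i - d i‖ := norm_sum_le _ _
        _ ≤ ∑ i ∈ Finset.range k, 1 / ((k : ℝ) + 1)^2 := Finset.sum_le_sum fun i hi => 
            ((hy1 i (Finset.mem_range.1 hi)).2.2).trans (hθ3 k)
        _ = k * (1 / ((k : ℝ) + 1)^2) := by simp
        _ ≤ (k + 1) * (1 / ((k : ℝ) + 1)^2) := by gcongr; linarith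
        _ = _ := by field_simp
    have h3 := h2.add hD
    simp only [sub_add_cancel, zero_add] at h3
    exact tendsto_nhds_unique h1 h3
  · refine Rid_of_tendsto (fun k => ?_) hT
    obtain ⟨y, ⟨hy1, hy2⟩, hy3⟩ := hu k
    rw [hy3]
    exact sum_mem fun i hi => (hy1 i (Finset.mem_range.1 hi)).1

lemma compose {b D X T : V} (hD : 0 ≤ D) (hX : X ∈ Rid D) (hT : star T * T = D) (hTb : T ∈ Rid b) : 
    ∃ Z ∈ Rid b, star Z * Z = star X * X := by
  have h := fun n : ℕ => Rid_approx hX (show (0:ℝ) < 1 / ((n : ℝ) + 1) by positivity)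
  choose w hw using h
  have hlim : Tendsto (fun n => D * w n) atTop (𝓝 X) := by
    rw [tendsto_iff_norm_sub_tendsto_zero]
    refine squeeze_zero (fun _ => norm_nonneg _) (fun n => ?_) tendsto_one_div_add_atTop_nhds_zero_nat
    rw [norm_sub_rev]; exact (hw n).le
  have gram : ∀ p q : V, star (T * (CFC.sqrt D * p)) * (T * (CFC.sqrt D * q)) = star (D * p) * (D * q) := by
    intro p q
    rw [star_mul, star_mul, star_mul, sqrt_star, sa hD]
    calc _ = star p * CFC.sqrt D * (star T * T) * (CFC.sqrt D * q) := by noncomm_ring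
      _ = star p * CFC.sqrt D * (CFC.sqrt D * CFC.sqrt D) * (CFC.sqrt D * q) := by rw [hT, sqrt_mul hD]
      _ = star p * (CFC.sqrt D * CFC.sqrt D) * ((CFC.sqrt D * CFC.sqrt D) * q) := by noncomm_ring
      _ = _ := by rw [sqrt_mul hD]
  have hc : CauchySeq (fun n => T * (CFC.sqrt D * w n)) := by
    have hc' := hlim.cauchySeq
    rw [Metric.cauchySeq_iff] at hc' ⊢
    intro ε hε
    obtain ⟨N, hN⟩ := hc' ε hε
    refine ⟨N, fun m hm n hn => ?_⟩
    have := hN m hm n hn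
    rw [dist_eq_norm] at this ⊢
    rw [← mul_sub] at this
    rw [← mul_sub, ← mul_sub]
    have e : ‖T * (CFC.sqrt D * (w m - w n))‖ = ‖D * (w m - w n)‖ := by
      have h1 : ‖T * (CFC.sqrt D * (w m - w n))‖ * ‖T * (CFC.sqrt D * (w m - w n))‖ = ‖D * (w m - w n)‖ * ‖D * (w m - w n)‖ := by
        rw [← CStarRing.norm_star_mul_self, gram, CStarRing.norm_star_mul_self]
      exact (mul_self_inj_of_nonneg (norm_nonneg _) (norm_nonneg _)).1 h1
    rw [e]; exact this
  obtain ⟨Z, hZ⟩ := cauchySeq_tendsto_of_complete hc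
  refine ⟨Z, Rid_of_tendsto (fun n => mul_mem_Rid hTb _) hZ, ?_⟩
  have h1 : Tendsto (fun n => star (T * (CFC.sqrt D * w n)) * (T * (CFC.sqrt D * w n))) atTop (𝓝 (star Z * Z)) := hZ.star.mul hZ
  simp only [gram] at h1
  exact tendsto_nhds_unique h1 (hlim.star.mul hlim)

/-- the engine: reduces the theorem to a suitable sequence of orthogonal blocks -/
lemma engine (hL : IsCopies L) (hsc : StrictComparison V) {a b : V} (ha : 0 ≤ a) (hb : 0 ≤ b) {d : ℕ → V} 
    (hd : ∀ i, 0 ≤ d i) (ho : ∀ i j, i ≠ j → d i * d j = 0) (hn : ∀ i, ‖d i‖ ≤ (1 / 4) ^ i)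
    (H : ∀ δ > 0, ∀ n0 : ℕ, ∃ (n r : ℕ) (a' : V), n0 ≤ n ∧ n ≤ r ∧ 0 ≤ a' ∧ ‖a - a'‖ < δ ∧ 
      (∀ τ : QuasiTrace V, ¬ τ.IsZero → dTau τ a' < ∑ i ∈ Finset.range n, dTau τ (d i)) ∧ 
      ∀ i < n, ∀ τ : QuasiTrace V, ¬ τ.IsZero → 2 * dTau τ (d i) < ∑ j ∈ Finset.Ico (i + 1) r, dTau τ (d j))
    (H1 : ∀ m, ∀ τ : QuasiTrace V, ¬ τ.IsZero → ∑ i ∈ Finset.range m, dTau τ (d i) < dTau τ b) :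
    ∃ x : V, star x * x = a ∧ x * star x ∈ her b := by
  have hsum : Summable d := by
    refine Summable.of_norm_bounded (g := fun i : ℕ => ((1:ℝ) / 4) ^ i) (summable_geometric_of_lt_one (by norm_num) (by norm_num)) hn
  obtain ⟨D, hD⟩ := hsum
  have hDt := hD.tendsto_sum_nat
  have hD0 : 0 ≤ D := ge_of_tendsto' hDt fun n => Finset.sum_nonneg fun j _ => hd j
  have hle : ∀ n, ∑ i ∈ Finset.range n, d i ≤ D := fun n => 
    ge_of_tendsto hDt (by
      filter_upwards [eventually_ge_atTop n] with k hk
      exact Finset.sum_le_sum_of_subset_of_nonneg (Finset.range_mono hk) fun j _ _ => hd j)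
  obtain ⟨X, hX, hXc⟩ := thm1 hL hsc ha hd ho (fun δ hδ n0 => by
    obtain ⟨n, r, a', h1, h2, h3⟩ := H δ hδ n0
    exact ⟨n, r, a', h2, h1.trans h2, h3⟩)
  have hXD : X ∈ Rid D := by
    refine closure_minimal ?_ (Rid_closed D) hXc
    rintro x ⟨n, hx⟩
    exact Rid_le (mem_Rid_of_le' (Finset.sum_nonneg fun j _ => hd j) (hle n)) hx
  obtain ⟨T, hT, hTb⟩ := thm2 hL hsc hb hd hn hDt H1 (fun i τ hτ => by
    obtain ⟨n, r, a', h1, h2, h3, h4, h5, h6⟩ := H 1 one_pos (i + 1)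
    refine lt_of_le_of_lt ?_ (H1 r τ hτ)
    calc _ = ∑ j ∈ Finset.range (i + 1), dTau τ (d j) + 2 * dTau τ (d i) := by
          rw [Finset.sum_range_succ]; ring
      _ ≤ ∑ j ∈ Finset.range (i + 1), dTau τ (d j) + ∑ j ∈ Finset.Ico (i + 1) r, dTau τ (d j) := by
          gcongr; exact (h6 i (by omega) τ hτ).le
      _ = _ := by rw [Finset.range_eq_Ico, Finset.sum_Ico_consecutive _ (by omega) (by omega), Finset.range_eq_Ico])
  obtain ⟨Z, hZ, hZZ⟩ := compose hD0 hXD hT hTb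
  exact ⟨Z, by rw [hZZ, hX], mem_her_of_Rid (sa hb) hZ⟩

end P8

section P9
variable {A W : Type*} [NonUnitalCStarAlgebra A] [PartialOrder A] [StarOrderedRing A]
  [NonUnitalCStarAlgebra W] [PartialOrder W] [StarOrderedRing W]

def PS (SB : Stabilization A W) : Submodule ℂ (W × (ℕ → W)) :=
  Submodule.span ℂ {z | ∃ (p q : ℕ) (a : A), z = (SB.emb p q a, fun i => SB.emb (Nat.pair i p) q a)}

lemma PS_gram (SB : Stabilization A W) {x y : W × (ℕ → W)} (hx : x ∈ PS SB) (hy : y ∈ PS SB) (i j : ℕ) :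
    star (x.2 i) * y.2 j = if i = j then star x.1 * y.1 else 0 := by
  induction hx using Submodule.span_induction with
  | mem x h =>
    induction hy using Submodule.span_induction with
    | mem y h' =>
      obtain ⟨p, q, a, rfl⟩ := h
      obtain ⟨p', q', a', rfl⟩ := h'
      simp only [SB.emb_star, SB.emb_mul, Nat.pair_eq_pair]
      by_cases h1 : i = j <;> by_cases h2 : p = p' <;> simp [h1, h2]
    | zero => simp
    | add y z _ _ h1 h2 =>
      simp only [Prod.fst_add, Prod.snd_add, Pi.add_apply, mul_add, h1, h2]
      split_ifs <;> simp
    | smul c y _ h1 =>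
      simp only [Prod.smul_fst, Prod.smul_snd, Pi.smul_apply, mul_smul_comm, h1]
      split_ifs <;> simp
  | zero => simp
  | add y z _ _ h1 h2 =>
    simp only [Prod.fst_add, Prod.snd_add, Pi.add_apply, star_add, add_mul, h1, h2]
    split_ifs <;> simp
  | smul c y _ h1 =>
    simp only [Prod.smul_fst, Prod.smul_snd, Pi.smul_apply, star_smul, smul_mul_assoc, h1]
    split_ifs <;> simp

lemma PS_dense (SB : Stabilization A W) (x : W) :
    ∃ u : ℕ → W × (ℕ → W), (∀ n, u n ∈ PS SB) ∧ Tendsto (fun n => (u n).1) atTop (𝓝 x) := by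
  have hd := SB.dense_span x
  rw [mem_closure_iff_seq_limit] at hd
  obtain ⟨s, hs, hl⟩ := hd
  have key : ∀ w ∈ Submodule.span ℂ {w : W | ∃ (i j : ℕ) (a : A), w = SB.emb i j a}, ∃ z ∈ PS SB, z.1 = w := by
    intro w hw
    induction hw using Submodule.span_induction with
    | mem x h =>
      obtain ⟨p, q, a, rfl⟩ := h
      exact ⟨_, Submodule.subset_span ⟨p, q, a, rfl⟩, rfl⟩
    | zero => exact ⟨0, Submodule.zero_mem _, rfl⟩
    | add y z _ _ h1 h2 =>
      obtain ⟨u, hu, rfl⟩ := h1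
      obtain ⟨v, hv, rfl⟩ := h2
      exact ⟨_, Submodule.add_mem _ hu hv, rfl⟩
    | smul c y _ h1 =>
      obtain ⟨u, hu, rfl⟩ := h1
      exact ⟨_, Submodule.smul_mem _ c hu, rfl⟩
  choose u hu hu' using fun n => key (s n) (hs n)
  exact ⟨u, hu, by simpa [hu'] using hl⟩

lemma exists_copies (SB : Stabilization A W) : ∃ L : ℕ → W → W, IsCopies L := by
  choose u hu hul using PS_dense SB
  have norm_eq : ∀ z ∈ PS SB, ∀ i, ‖z.2 i‖ = ‖z.1‖ := by
    intro z hz i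
    have h := PS_gram SB hz hz i i
    rw [if_pos rfl] at h
    have h1 : ‖z.2 i‖ * ‖z.2 i‖ = ‖z.1‖ * ‖z.1‖ := by
      rw [← CStarRing.norm_star_mul_self, h, CStarRing.norm_star_mul_self]
    exact (mul_self_inj_of_nonneg (norm_nonneg _) (norm_nonneg _)).1 h1
  have hc : ∀ i x, ∃ l, Tendsto (fun n => (u x n).2 i) atTop (𝓝 l) := by
    intro i x
    refine cauchySeq_tendsto_of_complete ?_
    have hc' := (hul x).cauchySeq
    rw [Metric.cauchySeq_iff] at hc' ⊢
    intro ε hε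
    obtain ⟨N, hN⟩ := hc' ε hε
    refine ⟨N, fun m hm n hn => ?_⟩
    have := hN m hm n hn
    rw [dist_eq_norm] at this ⊢
    have h := norm_eq _ (Submodule.sub_mem _ (hu x m) (hu x n)) i
    simp only [Prod.snd_sub, Pi.sub_apply, Prod.fst_sub] at h
    rwa [h]
  choose L hL using hc
  refine ⟨L, fun i j x y => ?_⟩
  have h1 := ((hL i x).star).mul (hL j y)
  have h2 : Tendsto (fun n => star ((u x n).2 i) * (u y n).2 j) atTop (𝓝 (if i = j then star x * y else 0)) := by
    simp only [PS_gram SB (hu x _) (hu y _)]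
    split_ifs
    · exact ((hul x).star).mul (hul y)
    · exact tendsto_const_nhds
  exact tendsto_nhds_unique h1 h2

/-- algebraic ideal generated by `e` -/
def Idl (e : W) : Submodule ℂ W := Submodule.span ℂ {z | ∃ y y' : W, z = y * e * y'}

lemma Idl_mul_left {e z : W} (w : W) (h : z ∈ Idl e) : w * z ∈ Idl e := by
  induction h using Submodule.span_induction with
  | mem x h =>
    obtain ⟨y, y', rfl⟩ := h
    exact Submodule.subset_span ⟨w * y, y', by simp only [mul_assoc]⟩
  | zero => simp
  | add y z _ _ h1 h2 => rw [mul_add]; exact Submodule.add_mem _ h1 h2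
  | smul c y _ h1 => rw [mul_smul_comm]; exact Submodule.smul_mem _ c h1

lemma Idl_mul_right {e z : W} (w : W) (h : z ∈ Idl e) : z * w ∈ Idl e := by
  induction h using Submodule.span_induction with
  | mem x h =>
    obtain ⟨y, y', rfl⟩ := h
    exact Submodule.subset_span ⟨y, y' * w, by simp only [mul_assoc]⟩
  | zero => simp
  | add y z _ _ h1 h2 => rw [add_mul]; exact Submodule.add_mem _ h1 h2
  | smul c y _ h1 => rw [smul_mul_assoc]; exact Submodule.smul_mem _ c h1

abbrev IC (e : W) : Submodule ℂ W := (Idl e).topologicalClosure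

lemma IC_mul_left {e z : W} (w : W) (h : z ∈ IC e) : w * z ∈ IC e := by
  have : Set.MapsTo (fun z => w * z) (Idl e : Set W) (Idl e : Set W) := fun z hz => Idl_mul_left w hz
  exact this.closure (by fun_prop) h

lemma IC_mul_right {e z : W} (w : W) (h : z ∈ IC e) : z * w ∈ IC e := by
  have : Set.MapsTo (fun z => z * w) (Idl e : Set W) (Idl e : Set W) := fun z hz => Idl_mul_right w hz
  exact this.closure (by fun_prop) h

lemma emb_cont (SB : Stabilization A W) (i j : ℕ) : Continuous (SB.emb i j) :=
  (AddMonoidHomClass.isometry_of_norm (SB.emb i j) (SB.norm_emb i j)).continuous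

lemma emb_corner (SB : Stabilization A W) (i j : ℕ) (a b : A) (w : W) :
    ∃ c : A, SB.emb 0 i a * w * SB.emb j 0 b = SB.emb 0 0 c := by
  have hiso := AddMonoidHomClass.isometry_of_norm (SB.emb 0 0) (SB.norm_emb 0 0)
  have hcl : IsClosed (Set.range (SB.emb 0 0)) := hiso.isClosedEmbedding.isClosed_range
  have : Set.MapsTo (fun w => SB.emb 0 i a * w * SB.emb j 0 b)
      (Submodule.span ℂ {w : W | ∃ (i j : ℕ) (a : A), w = SB.emb i j a} : Set W) (Set.range (SB.emb 0 0)) := by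
    intro z hz
    induction hz using Submodule.span_induction with
    | mem x h =>
      obtain ⟨p, q, c, rfl⟩ := h
      simp only [SB.emb_mul]
      split_ifs
      · simp only [SB.emb_mul]; split_ifs
        · exact ⟨_, rfl⟩
        · exact ⟨0, by simp⟩
      · exact ⟨0, by simp⟩
    | zero => exact ⟨0, by simp⟩
    | add y z _ _ h1 h2 =>
      obtain ⟨u, hu⟩ := h1
      obtain ⟨v, hv⟩ := h2
      exact ⟨u + v, by simp only at hu hv; simp [hu, hv, mul_add, add_mul]⟩
    | smul c y _ h1 =>
      obtain ⟨u, hu⟩ := h1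
      exact ⟨c • u, by simp only at hu; simp [hu, mul_smul_comm, smul_mul_assoc]⟩
  have h := this.closure (by fun_prop) (SB.dense_span w)
  rw [hcl.closure_eq] at h
  obtain ⟨c, hc⟩ := h
  exact ⟨c, hc.symm⟩

lemma zero_of_emb (SB : Stabilization A W) {w : W} (h : ∀ i j a b, SB.emb 0 i a * w * SB.emb j 0 b = 0) : w = 0 := by
  -- first remove the zero indices
  have hR : ∀ (z : W), (∀ j b, z * SB.emb j 0 b = 0) → z = 0 := by
    intro z hz
    have h1 : ∀ j k b, z * SB.emb j k b = 0 := by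
      intro j k b
      have hb : b ∈ closure {c : A | z * SB.emb j k c = 0} := by
        refine Rid_induction (b := b * star b) (p := fun c => c ∈ closure {c : A | z * SB.emb j k c = 0}) isClosed_closure ?_ (mem_Rid_mul_star b)
        intro y
        apply subset_closure
        have : SB.emb j k (b * star b * y) = SB.emb j 0 (b * star b) * SB.emb 0 k y := by
          rw [SB.emb_mul, if_pos rfl]
        show z * _ = 0
        rw [this, ← mul_assoc, hz, zero_mul]
      rwa [IsClosed.closure_eq] at hb
      exact isClosed_eq (by have := emb_cont SB j k; fun_prop) continuous_const
    have h2 : Set.MapsTo (fun w => z * w) (Submodule.span ℂ {w : W | ∃ (i j : ℕ) (a : A), w = SB.emb i j a} : Set W) {0} := by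
      intro y hy
      induction hy using Submodule.span_induction with
      | mem x h => obtain ⟨p, q, c, rfl⟩ := h; exact h1 p q c
      | zero => simp
      | add y z _ _ h1 h2 => simp at h1 h2 ⊢; simp [mul_add, h1, h2]
      | smul c y _ h1 => simp at h1 ⊢; simp [mul_smul_comm, h1]
    have h3 := h2.closure (by fun_prop) (SB.dense_span (star z))
    simp only [closure_singleton, Set.mem_singleton_iff] at h3
    exact (CStarRing.mul_star_self_eq_zero_iff z).1 h3
  have h1 : ∀ i a, SB.emb 0 i a * w = 0 := fun i a => hR _ fun j b => h i j a b
  have h2 : star w = 0 := hR _ fun j b => by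
    have := congrArg star (h1 j (star b))
    rw [star_mul, SB.emb_star, star_star, star_zero] at this
    exact this
  rw [← star_star w, h2, star_zero]

lemma simple_dense (SB : Stabilization A W) (hs : IsSimpleCStar A) {e : W} (he : e ≠ 0) (x : W) : x ∈ IC e := by
  let J : TwoSidedIdeal A := TwoSidedIdeal.mk' {a : A | SB.emb 0 0 a ∈ IC e}
    (by simp) (by intro x y hx hy; simp only [Set.mem_setOf_eq, map_add] at *; exact Submodule.add_mem _ hx hy)
    (by intro x hx; simp only [Set.mem_setOf_eq, map_neg] at *; exact Submodule.neg_mem _ hx)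
    (by
      intro x y hx
      simp only [Set.mem_setOf_eq] at *
      have : SB.emb 0 0 (x * y) = SB.emb 0 0 x * SB.emb 0 0 y := by rw [SB.emb_mul, if_pos rfl]
      rw [this]; exact IC_mul_left _ hx)
    (by
      intro x y hx
      simp only [Set.mem_setOf_eq] at *
      have : SB.emb 0 0 (x * y) = SB.emb 0 0 x * SB.emb 0 0 y := by rw [SB.emb_mul, if_pos rfl]
      rw [this]; exact IC_mul_right _ hx)
  have hJ : (J : Set A) = {a : A | SB.emb 0 0 a ∈ IC e} := by
    ext a; simp [J, TwoSidedIdeal.mem_mk']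
  have hIcl : IsClosed (IC e : Set W) := Submodule.isClosed_topologicalClosure _
  have hcl : IsClosed (J : Set A) := by
    rw [hJ]
    exact hIcl.preimage (emb_cont SB 0 0)
  have hne : ∃ c : A, c ≠ 0 ∧ c ∈ (J : Set A) := by
    by_contra hcon
    push Not at hcon
    apply he
    have hee : e * star e * e = 0 := by
      refine zero_of_emb SB fun i j a b => ?_
      have : SB.emb 0 i a * (e * star e * e) * SB.emb j 0 b ∈ IC e := by
        apply IC_mul_right; apply IC_mul_left
        have h2 : e * star e * e ∈ Rid (e * star e * e * star (e * star e * e)) := mem_Rid_mul_star _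
        refine Rid_induction (p := fun z => z ∈ IC e) hIcl ?_ h2
        intro y
        apply IC_mul_right
        exact Submodule.le_topologicalClosure _ (Submodule.subset_span ⟨e * star e, star (e * star e * e), rfl⟩)
      obtain ⟨c, hc⟩ := emb_corner SB i j a b (e * star e * e)
      rw [hc] at this ⊢
      by_cases h0 : c = 0
      · simp [h0]
      · exact absurd (by rw [hJ]; exact this) (hcon c h0)
    have h4 : (e * star e) * star (e * star e) = 0 := by
      rw [star_mul, star_star, ← mul_assoc, hee, zero_mul]
    exact (CStarRing.mul_star_self_eq_zero_iff e).1 ((CStarRing.mul_star_self_eq_zero_iff _).1 h4)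
  have hall : ∀ a : A, SB.emb 0 0 a ∈ IC e := by
    rcases hs.2 J hcl with h | h
    · obtain ⟨c, hc, hc'⟩ := hne
      rw [h] at hc'
      exact absurd hc' hc
    · intro a
      have : a ∈ (J : Set A) := by rw [h]; trivial
      rwa [hJ] at this
  have hij : ∀ i j a, SB.emb i j a ∈ IC e := by
    intro i j a
    refine Rid_induction (p := fun z => SB.emb i j z ∈ IC e) (hIcl.preimage (emb_cont SB i j)) ?_ (mem_Rid_mul_star a)
    intro y
    have : SB.emb i j (a * star a * y) = SB.emb i 0 a * SB.emb 0 0 (star a) * SB.emb 0 j y := by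
      rw [SB.emb_mul, if_pos rfl, SB.emb_mul, if_pos rfl]
    show SB.emb i j (a * star a * y) ∈ IC e
    rw [this]
    exact IC_mul_right _ (IC_mul_left _ (hall _))
  have : Submodule.span ℂ {w : W | ∃ (i j : ℕ) (a : A), w = SB.emb i j a} ≤ IC e := by
    rw [Submodule.span_le]
    rintro w ⟨i, j, a, rfl⟩
    exact hij i j a
  exact closure_minimal this hIcl (SB.dense_span x)
end P9

section P10
variable {V : Type*} [NonUnitalCStarAlgebra V] [PartialOrder V] [StarOrderedRing V]

lemma unit_trick {f h x : V} (hf : f * h = f) (hx : ‖h - x‖ < 1) : ∃ y : V, f = f * x * y := by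
  have h1 : ‖((h - x : V) : Unitization ℂ V)‖ < 1 := by rw [norm_inr']; exact hx
  obtain ⟨u, hu⟩ := (isUnit_one_sub_of_norm_lt_one h1)
  have h2 : (f : Unitization ℂ V) * u = (f * x : V) := by
    rw [hu, mul_sub, mul_one, ← Unitization.inr_mul, mul_sub, hf, ← Unitization.inr_sub]
    congr 1; abel
  have h3 : (f : Unitization ℂ V) = (f * x : V) * (↑u⁻¹ : Unitization ℂ V) := by
    rw [← h2, mul_assoc, Units.mul_inv, mul_one]
  obtain ⟨v, hv⟩ : ∃ v : Unitization ℂ V, v = ↑u⁻¹ := ⟨_, rfl⟩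
  rw [← hv] at h3
  obtain ⟨y, hy⟩ : ∃ y : V, v * (h : Unitization ℂ V) = (y : Unitization ℂ V) := by
    refine ⟨(v * (h : Unitization ℂ V)).snd, ?_⟩
    ext <;> simp
  refine ⟨y, Unitization.inr_injective (R := ℂ) ?_⟩
  rw [Unitization.inr_mul, ← hy, ← mul_assoc, ← h3, ← Unitization.inr_mul, hf]

lemma fEps_mem_pedersen (a : V) {ε : ℝ} (hε : 0 < ε) : fEps ε a ∈ pedersen V := by
  simp only [pedersen, pedersenIn, Set.mem_iInter]
  rintro I ⟨⟨-, -, -, -, hI⟩, hd⟩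
  have := hd (Set.mem_univ (fEps (ε / 2) a))
  rw [Metric.mem_closure_iff] at this
  obtain ⟨x, hx, hxd⟩ := this 1 one_pos
  rw [dist_eq_norm] at hxd
  obtain ⟨y, hy⟩ := unit_trick (fEps_mul' a (half_pos hε) le_rfl) hxd
  rw [hy]
  exact (hI _ (hI x hx (fEps ε a) trivial).2 y trivial).1

lemma tau_fEps_fin (τ : QuasiTrace V) (a : V) {ε : ℝ} (hε : 0 < ε) : τ.toFun (fEps ε a) < ∞ :=
  τ.finite_on_pedersen _ (fEps_mem_pedersen a hε) (fEps_nonneg ε a)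

lemma tau_cont {p : V} (hp : p ∈ pedersen V) : Continuous (fun τ : QuasiTrace V => τ.toFun p) := by
  have h : Continuous (fun τ : QuasiTrace V => fun a : pedersen V => τ.toFun a) := continuous_induced_dom
  exact (continuous_apply (⟨p, hp⟩ : pedersen V)).comp h

lemma tau_le_self (τ : QuasiTrace V) {a : V} {ε : ℝ} : τ.toFun (fEps ε a) ≤ dTau τ (fEps ε a) :=
  tau_le_d τ (fEps_nonneg _ _) (fEps_nonneg _ _) (mem_Rid_self (fEps_nonneg _ _)) (fEps_norm _ _)

/-- factorization bounds dimension -/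
lemma d_le_of_factor (τ : QuasiTrace V) {f g y : V} (hf : 0 ≤ f) (h : f = star y * g) : dTau τ f ≤ dTau τ (g * star g) := by
  -- f = f* = g* y ∈ Rid (g* g)
  have h1 : f ∈ Rid (star g * g) := by
    have : f = star g * y := by rw [← sa hf, h, star_mul, star_star]
    rw [this]
    refine mul_mem_Rid ?_ y
    have := mem_Rid_mul_star (star g)
    rwa [star_star] at this
  refine (d_le_d τ hf (star_mul_self_nonneg g) h1).trans ?_
  exact (d_star_eq τ g).ge

lemma Idl_sum {e z : V} (h : z ∈ Idl e) : ∃ (n : ℕ) (y y' : Fin n → V), z = ∑ i, y i * e * y' i := by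
  rw [Idl, Submodule.mem_span_set'] at h
  obtain ⟨n, f, g, rfl⟩ := h
  choose y y' hy using fun i => (g i).2
  refine ⟨n, fun i => f i • y i, y', ?_⟩
  refine Finset.sum_congr rfl fun i _ => ?_
  rw [hy, smul_mul_assoc, smul_mul_assoc]

lemma N_bound {L : ℕ → V → V} (hL : IsCopies L) {e : V} (he : 0 ≤ e) (hd : ∀ x : V, x ∈ IC e) (a : V) {ε : ℝ} (hε : 0 < ε) :
    ∃ n : ℕ, 0 < n ∧ ∀ τ : QuasiTrace V, τ.toFun (fEps ε a) ≤ n * dTau τ e := by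
  have := hd (fEps (ε / 2) a)
  rw [← SetLike.mem_coe, Submodule.topologicalClosure_coe, Metric.mem_closure_iff] at this
  obtain ⟨x, hx, hxd⟩ := this 1 one_pos
  rw [dist_eq_norm] at hxd
  obtain ⟨y, hy⟩ := unit_trick (fEps_mul' a (half_pos hε) le_rfl) hxd
  obtain ⟨n, u, u', rfl⟩ := Idl_sum hx
  refine ⟨n + 1, by omega, fun τ => ?_⟩
  obtain ⟨B, hB⟩ : ∃ B : Fin n → V, B = fun i => star (u' i * y) * e := ⟨_, rfl⟩
  have hf : fEps ε a = ∑ i, B i * star (fEps ε a * u i) := by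
    rw [← fEps_star ε a]
    conv_lhs => rw [hy]
    rw [Finset.mul_sum, Finset.sum_mul, star_sum]
    refine Finset.sum_congr rfl fun i _ => ?_
    simp only [hB, star_mul, fEps_star, sa he, mul_assoc]
  have hmem : fEps ε a ∈ Rid (∑ i, B i * star (B i)) := by
    rw [hf]
    refine Submodule.sum_mem _ fun i _ => mul_mem_Rid ?_ _
    refine mem_Rid_of_le ?_
    exact Finset.single_le_sum (f := fun i => B i * star (B i)) (fun i _ => mul_star_self_nonneg (B i)) (Finset.mem_univ i)
  calc τ.toFun (fEps ε a) ≤ dTau τ (∑ i, B i * star (B i)) :=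
        tau_le_d τ (fEps_nonneg _ _) (Finset.sum_nonneg fun i _ => mul_star_self_nonneg (B i)) hmem (fEps_norm _ _)
    _ ≤ ∑ i, dTau τ (B i * star (B i)) := d_sum_le τ hL _ _ fun i _ => mul_star_self_nonneg (B i)
    _ ≤ ∑ i : Fin n, dTau τ e := by
        refine Finset.sum_le_sum fun i _ => ?_
        rw [d_star_eq]
        refine d_le_d τ (star_mul_self_nonneg _) he ?_
        rw [hB]
        simp only [star_mul, sa he, star_star, mul_assoc]
        exact mul_mem_Rid_self _ _
    _ = n * dTau τ e := by simp
    _ ≤ _ := by gcongr; simp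

lemma nonzero_fEps {τ : QuasiTrace V} (hτ : ¬ τ.IsZero) : ∃ a : V, 0 ≤ a ∧ ∃ ε : ℝ, 0 < ε ∧ τ.toFun (fEps ε a) ≠ 0 := by
  by_contra hcon
  push Not at hcon
  apply hτ
  intro a
  by_cases ha : 0 ≤ a
  · by_contra h0
    -- scale a to norm ≤ 1
    have hr : 0 < 1 / (‖a‖ + 1) := by positivity
    have h1 : τ.toFun ((1 / (‖a‖ + 1)) • a) = 0 := by
      refine le_antisymm ?_ bot_le
      refine (tau_le_d τ (smul_nonneg_r ha hr.le) ha (Submodule.smul_of_tower_mem _ _ (mem_Rid_self ha)) ?_).trans ?_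
      · rw [norm_smul, Real.norm_of_nonneg hr.le, one_div, inv_mul_le_iff₀ (by positivity)]; linarith
      · exact d_le τ fun δ hδ => (hcon a ha δ hδ).le
    rw [τ.map_smul _ _ hr ha, mul_eq_zero] at h1
    rcases h1 with h1 | h1
    · rw [ENNReal.ofReal_eq_zero] at h1; linarith
    · exact h0 h1
  · exact τ.zero_of_not_nonneg a ha

lemma d_pos {L : ℕ → V → V} (hL : IsCopies L) {e : V} (he : 0 ≤ e) (hd : ∀ x : V, x ∈ IC e) {τ : QuasiTrace V} (hτ : ¬ τ.IsZero) :
    0 < dTau τ e := by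
  obtain ⟨a, ha, ε, hε, h⟩ := nonzero_fEps hτ
  obtain ⟨n, -, hn⟩ := N_bound hL he hd a hε
  rw [pos_iff_ne_zero]
  intro h0
  have := hn τ
  rw [h0, mul_zero] at this
  exact h (le_antisymm this bot_le)
end P10

section P11
variable {V : Type*} [NonUnitalCStarAlgebra V] [PartialOrder V] [StarOrderedRing V]

lemma ex_near {b y a : V} (hb : 0 ≤ b) (hy : y ∈ Rid b) {r : ℝ} (h : ‖star y * y - a‖ < r) :
    ∃ δ : ℝ, 0 < δ ∧ ‖star (fEps δ b * y) * (fEps δ b * y) - a‖ < r := by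
  have h1 := fEps_mul_tendsto hb hy
  have h2 := (((h1.star).mul h1).sub_const a).norm
  obtain ⟨n, hn⟩ := (h2.eventually (gt_mem_nhds h)).exists
  exact ⟨1 / (n + 1), by positivity, hn⟩

lemma lemP {L : ℕ → V → V} (hL : IsCopies L) (hsc : StrictComparison V) (hd : ∀ e : V, e ≠ 0 → ∀ x : V, x ∈ IC e)
    (hqt : ∃ τ : QuasiTrace V, ¬ τ.IsZero) {a b : V} (ha : 0 ≤ a) (hb : 0 ≤ b)
    (hlt : ∀ τ : QuasiTrace V, ¬ τ.IsZero → dTau τ a < dTau τ b) {ε : ℝ} (hε : 0 < ε) :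
    ∃ δ : ℝ, 0 < δ ∧ ∃ N : ℕ, 0 < N ∧ (∀ τ : QuasiTrace V, (N + 1) * τ.toFun (fEps ε a) ≤ N * τ.toFun (fEps δ b)) ∧
      ∀ τ : QuasiTrace V, ¬ τ.IsZero → 0 < τ.toFun (fEps δ b) := by
  obtain ⟨τ0, hτ0⟩ := hqt
  obtain ⟨k, hk⟩ : ∃ k : V, k = cfcₙ (kfun (ε / 2)) a := ⟨_, rfl⟩
  have hkc : k * a * k = fEps (ε / 2) a := by rw [hk]; exact kfun_conj ha (half_pos hε)
  obtain ⟨r, hr⟩ : ∃ r : ℝ, r = 1 / (‖k‖ * ‖k‖ + 1) := ⟨_, rfl⟩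
  have hr0 : 0 < r := by rw [hr]; positivity
  obtain ⟨y0, hy0, hy0', hy0n⟩ := cuntz_approx ha hb (hsc a b ha hb hlt) hr0
  obtain ⟨δ1, hδ1, h1⟩ := ex_near hb hy0 hy0n
  obtain ⟨y, hy⟩ : ∃ y, y = fEps δ1 b * y0 := ⟨_, rfl⟩
  rw [← hy] at h1
  have hys : star y ∈ Rid a := by rw [hy, star_mul]; exact mul_mem_Rid hy0' _
  obtain ⟨p, hp⟩ : ∃ p, p = y * star y := ⟨_, rfl⟩
  have hp0 : 0 ≤ p := by rw [hp]; exact mul_star_self_nonneg y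
  have hyp : y ∈ Rid p := by rw [hp]; exact mem_Rid_mul_star y
  obtain ⟨η, hη, h2⟩ := ex_near hp0 hyp h1
  obtain ⟨φ, hφ⟩ : ∃ φ, φ = fEps η p := ⟨_, rfl⟩
  obtain ⟨E, hE⟩ : ∃ E, E = fEps (η / 2) p := ⟨_, rfl⟩
  rw [← hφ] at h2
  have hφ0 : 0 ≤ φ := by rw [hφ]; exact fEps_nonneg _ _
  have hφs : star φ = φ := sa hφ0
  have hEs : star E = E := by rw [hE]; exact fEps_star _ _
  have hφE : φ * E = φ := by rw [hφ, hE]; exact fEps_mul' p (half_pos hη) le_rfl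
  have hEp : E ∈ Rid p := by rw [hE]; exact fEps_mem_Rid hp0 (mem_Rid_self hp0) _
  have hφp : φ ∈ Rid p := by rw [hφ]; exact fEps_mem_Rid hp0 (mem_Rid_self hp0) _
  -- dimension of f_ε(a)
  have hfφ : ∀ τ : QuasiTrace V, τ.toFun (fEps ε a) ≤ dTau τ φ := by
    intro τ
    refine (tau_le_self τ).trans ?_
    have hn : ‖fEps (ε / 2) a - k * (star (φ * y) * (φ * y)) * k‖ < 1 := by
      rw [← hkc, show k * a * k - k * (star (φ * y) * (φ * y)) * k = k * (a - star (φ * y) * (φ * y)) * k by noncomm_ring]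
      calc _ ≤ ‖k‖ * ‖a - star (φ * y) * (φ * y)‖ * ‖k‖ := by
            refine (norm_mul_le _ _).trans ?_
            gcongr
            exact norm_mul_le _ _
        _ ≤ ‖k‖ * r * ‖k‖ := by gcongr; rw [norm_sub_rev]; exact h2.le
        _ < 1 := by
            rw [show ‖k‖ * r * ‖k‖ = (‖k‖ * ‖k‖) / (‖k‖ * ‖k‖ + 1) by rw [hr]; ring, div_lt_one (by positivity)]
            linarith
    obtain ⟨z, hz⟩ := unit_trick (fEps_mul' a (half_pos hε) le_rfl) hn
    have hfac : fEps ε a = star (star (fEps ε a * k * star y)) * (φ * (φ * y * k * z)) := by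
      conv_lhs => rw [hz]
      rw [star_star, star_mul, hφs]; noncomm_ring
    refine (d_le_of_factor τ (fEps_nonneg _ _) hfac).trans ?_
    refine d_le_d τ (mul_star_self_nonneg _) hφ0 ?_
    exact mul_mem_Rid (mul_mem_Rid (mem_Rid_self hφ0) _) _
  have hpb : ∀ δ, 0 < δ → δ ≤ δ1 / 2 → p ∈ Rid (fEps δ b) := by
    intro δ h0 h
    rw [hp, hy, ← fEps_mul b h0 h, mul_assoc, mul_assoc]
    exact mul_mem_Rid_self _ _
  have hEb : ∀ δ, 0 < δ → δ ≤ δ1 / 2 → E ∈ Rid (fEps δ b) := fun δ h0 h => Rid_le (hpb δ h0 h) hEp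
  have hφb : ∀ δ, 0 < δ → δ ≤ δ1 / 2 → φ ∈ Rid (fEps δ b) := fun δ h0 h => Rid_le (hpb δ h0 h) hφp
  -- choice of δ
  obtain ⟨δ, hδ, hδ', ht⟩ : ∃ δ, 0 < δ ∧ δ ≤ δ1 / 2 ∧ cutc E (fEps δ b) ≠ 0 := by
    by_contra hcon
    push Not at hcon
    have hb1 : E * b = b := by
      have hl := fEps_mul_tendsto hb (mem_Rid_self hb)
      have hl2 : Tendsto (fun n : ℕ => E * (fEps (1 / (n + 1)) b * b)) atTop (𝓝 (E * b)) := hl.const_mul E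
      refine tendsto_nhds_unique (hl2.congr' ?_) hl
      have h0 : Tendsto (fun n : ℕ => (1:ℝ) / (n + 1)) atTop (𝓝 0) := tendsto_one_div_add_atTop_nhds_zero_nat
      filter_upwards [h0.eventually (gt_mem_nhds (half_pos hδ1))] with n hn
      have h3 := hcon (1 / (n + 1)) (by positivity) hn.le
      have h4 := sub_mul_mem_cutc hEs (fEps_nonneg (1 / ((n:ℝ) + 1)) b) (mul_mem_Rid (mem_Rid_self (fEps_nonneg _ b)) b)
      rw [h3] at h4
      have h6 : fEps (1 / ((n:ℝ) + 1)) b * b - E * (fEps (1 / ((n:ℝ) + 1)) b * b) = 0 := by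
        refine Rid_induction (p := fun x : V => x = 0) isClosed_singleton (fun y => by simp) h4
      exact (sub_eq_zero.1 h6).symm
    have hbp : b ∈ Rid p := by rw [← hb1]; exact mul_mem_Rid hEp _
    have h3 := d_le_d τ0 hb hp0 hbp
    have h4 : dTau τ0 p ≤ dTau τ0 a := by
      rw [hp, d_star_eq]
      exact d_le_d τ0 (star_mul_self_nonneg y) ha (star_mul_self_mem hys)
    exact absurd (h3.trans h4) (not_le.2 (hlt τ0 hτ0))
  obtain ⟨t, ht'⟩ : ∃ t, t = cutc E (fEps δ b) := ⟨_, rfl⟩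
  rw [← ht'] at ht
  have ht0 : 0 ≤ t := by rw [ht']; exact cutc_nonneg hEs (fEps_nonneg _ _)
  have hβ : ∀ τ : QuasiTrace V, dTau τ φ + dTau τ t ≤ τ.toFun (fEps (δ / 2) b) := by
    intro τ
    refine (d_orth_ge τ hφ0 ht0 (fEps_nonneg δ b) (by rw [ht']; exact mul_cutc_zero hφE _) (hφb δ hδ hδ') (by rw [ht']; exact cutc_mem (fEps_nonneg _ _) (hEb δ hδ hδ'))).trans ?_
    exact d_le_tau τ (fEps_nonneg _ _) (fEps_norm _ _) (fEps_nonneg _ _) (fEps_mul b (half_pos hδ) le_rfl)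
  obtain ⟨N, hN, hN'⟩ := N_bound hL ht0 (hd t ht) a hε
  refine ⟨δ / 2, half_pos hδ, N, hN, fun τ => ?_, fun τ hτ => ?_⟩
  · calc (N + 1) * τ.toFun (fEps ε a) = N * τ.toFun (fEps ε a) + τ.toFun (fEps ε a) := by rw [add_mul, one_mul]
      _ ≤ N * dTau τ φ + N * dTau τ t := by gcongr; exact hfφ τ; exact hN' τ
      _ = N * (dTau τ φ + dTau τ t) := by rw [mul_add]
      _ ≤ _ := by gcongr; exact hβ τ
  · exact ((d_pos hL ht0 (hd t ht) hτ).trans_le le_add_self).trans_le (hβ τ)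
end P11

section P12
variable {V : Type*} [NonUnitalCStarAlgebra V] [PartialOrder V] [StarOrderedRing V]

def Nice (g : QuasiTrace V → ℝ≥0∞) : Prop :=
  Continuous g ∧ IsAffineQT V g ∧ (∀ τ, g τ < ∞) ∧ ∀ τ : QuasiTrace V, τ.IsZero → g τ = 0

lemma Nice.tau {p : V} (hp : 0 ≤ p) (h : p ∈ pedersen V) : Nice (fun τ : QuasiTrace V => τ.toFun p) :=
  ⟨tau_cont h, fun t _ _ τ σ ρ hc => hc p hp, fun τ => τ.finite_on_pedersen p h hp, fun τ hτ => hτ p⟩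

lemma Nice.add {f g : QuasiTrace V → ℝ≥0∞} (hf : Nice f) (hg : Nice g) : Nice (fun τ => f τ + g τ) := by
  refine ⟨hf.1.add hg.1, fun t h0 h1 τ σ ρ hc => ?_, fun τ => ENNReal.add_lt_top.2 ⟨hf.2.2.1 τ, hg.2.2.1 τ⟩, fun τ hτ => ?_⟩
  · simp only [hf.2.1 t h0 h1 τ σ ρ hc, hg.2.1 t h0 h1 τ σ ρ hc]; ring
  · simp [hf.2.2.2 τ hτ, hg.2.2.2 τ hτ]

lemma Nice.smul {f : QuasiTrace V → ℝ≥0∞} (hf : Nice f) (c : NNReal) : Nice (fun τ => (c : ℝ≥0∞) * f τ) := by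
  refine ⟨ENNReal.continuous_const_mul ENNReal.coe_ne_top |>.comp hf.1, fun t h0 h1 τ σ ρ hc => ?_, fun τ => ENNReal.mul_lt_top ENNReal.coe_lt_top (hf.2.2.1 τ), fun τ hτ => ?_⟩
  · simp only [hf.2.1 t h0 h1 τ σ ρ hc]; ring
  · simp [hf.2.2.2 τ hτ]

lemma Nice.mem {f : QuasiTrace V → ℝ≥0∞} (hf : Nice f) (h : ∀ τ : QuasiTrace V, ¬ τ.IsZero → 0 < f τ) : MemLAffPlus V f :=
  ⟨fun _ => f, fun _ => Or.inr ⟨hf.1, hf.2.1, hf.2.2.1, h, hf.2.2.2⟩, fun _ _ => le_rfl, fun τ => by simp⟩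

lemma pedersen_sub {x y : V} (hx : x ∈ pedersen V) (hy : y ∈ pedersen V) : x - y ∈ pedersen V := by
  simp only [pedersen, pedersenIn, Set.mem_iInter] at *
  intro I hI
  have h1 := hI.1
  rw [sub_eq_add_neg]
  exact h1.2.2.1 _ (hx I hI) _ (h1.2.2.2.1 _ (hy I hI))

lemma tau_diff (τ : QuasiTrace V) {a : V} (ha : 0 ≤ a) {δ ε : ℝ} (hδ : 0 < δ) (h : δ ≤ ε) :
    τ.toFun (fEps δ a) = τ.toFun (fEps δ a - fEps ε a) + τ.toFun (fEps ε a) := by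
  rw [← τ.map_add_of_commute _ _ (sub_nonneg.2 (fEps_anti ha hδ h)) (fEps_nonneg _ _), sub_add_cancel]
  rw [sub_mul, mul_sub, fEps_comm a δ ε]

lemma real_ineq {α β γ θ n : ℝ} {N M : ℝ} (hα : 0 ≤ α) (hβ : 0 < β) (hN : 1 ≤ N) (hM : N ≤ M) (h : (N + 1) * α ≤ N * β)
    (hθ : θ = 1 / (8 * (M + 1))) (hn0 : 0 < n) (hn : 4 / n ≤ θ) (hγ : γ ≤ (1 - θ) / 2 * (α + β)) :
    α + 4 * (γ / n) < (1 - θ) / 2 * (α + β) := by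
  have hM0 : 0 < M := by linarith
  have hθ0 : 0 < θ := by rw [hθ]; positivity
  have hθ1 : θ ≤ 1 / (8 * (N + 1)) := by rw [hθ]; gcongr
  have hθN : θ * (8 * (N + 1)) ≤ 1 := by rwa [le_div_iff₀ (by positivity)] at hθ1
  have hθ2 : θ < 1 := by nlinarith
  obtain ⟨G, hG⟩ : ∃ G, G = (1 - θ) / 2 * (α + β) := ⟨_, rfl⟩
  have hG0 : 0 < G := by rw [hG]; apply mul_pos <;> linarith
  have h1 : 4 * (γ / n) ≤ θ * G := by
    rw [← hG] at hγ
    calc 4 * (γ / n) = 4 / n * γ := by ring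
      _ ≤ 4 / n * G := by gcongr
      _ ≤ θ * G := by gcongr
  rw [← hG]
  suffices α < (1 - θ) * G by nlinarith
  have h2 : (1 - 2 * θ) / 2 * (α + β) ≤ (1 - θ) * G := by rw [hG]; nlinarith [mul_nonneg (sq_nonneg θ) (by linarith : 0 ≤ α + β)]
  refine lt_of_lt_of_le ?_ h2
  have h3 : (2 * N + 1) * α ≤ N * (α + β) := by linarith
  have h4 : (4 * N + 3) ≤ (1 - 2 * θ) * (4 * (N + 1)) := by nlinarith
  have h5 : (4 * N + 3) * (α + β) ≤ (1 - 2 * θ) * (4 * (N + 1)) * (α + β) := by gcongr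
  have h6 : (2 * N + 1) * (8 * (N + 1) * α) < (2 * N + 1) * ((4 * N + 3) * (α + β)) := by
    have : 8 * (N + 1) * ((2 * N + 1) * α) ≤ 8 * (N + 1) * (N * (α + β)) := by gcongr
    nlinarith [mul_pos (by linarith : 0 < N) (by linarith : 0 < α + β)]
  have h7 := lt_of_mul_lt_mul_left h6 (by positivity)
  have h8 : (4 * (N + 1)) * (2 * α) < (4 * (N + 1)) * ((1 - 2 * θ) * (α + β)) := by nlinarith
  have h9 := lt_of_mul_lt_mul_left h8 (by positivity)
  linarith

/-- sequence bookkeeping -/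
lemma exists_seqs (N m : ℕ → ℕ) (hN : ∀ k, 0 < N k) : ∃ (t : ℕ → NNReal) (M : ℕ → ℝ) (μ : ℕ → ℕ) (n : ℕ → ℕ),
    (∀ k, (N k : ℝ) ≤ M k) ∧ (∀ k, (t k : ℝ) = 1 - 1 / (8 * (M k + 1))) ∧ (∀ k, t k < t (k + 1)) ∧ (∀ k, 0 < t k) ∧ (∀ k, t k < 1) ∧
    (∀ k, 5 ≤ n k) ∧ (∀ k, 4 / (n k : ℝ) ≤ 1 / (8 * (M k + 1))) ∧ (∀ k, 2 / (n k : ℝ) < (t (k + 1) : ℝ) - t k) ∧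
    (∀ k, m k ≤ μ k) ∧ (∀ k, μ k ≤ μ (k + 1)) := by
  obtain ⟨M, hM⟩ : ∃ M : ℕ → ℝ, M = fun k => ∑ j ∈ Finset.range (k + 1), (N j : ℝ) := ⟨_, rfl⟩
  have hMN : ∀ k, (N k : ℝ) ≤ M k := fun k => by
    rw [hM]
    exact Finset.single_le_sum (f := fun j => (N j : ℝ)) (fun j _ => by positivity) (Finset.mem_range.2 (Nat.lt_succ_self k))
  have hN1 : ∀ k, (1 : ℝ) ≤ N k := fun k => by exact_mod_cast hN k
  have hM1 : ∀ k, M k < M (k + 1) := fun k => by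
    simp only [hM]; rw [Finset.sum_range_succ _ (k + 1)]; linarith [hN1 (k + 1)]
  have hMp : ∀ k, 1 ≤ M k := fun k => (hN1 k).trans (hMN k)
  have hle : ∀ k, 1 / (8 * (M k + 1)) ≤ 1 / 16 := fun k => by
    have := hMp k
    gcongr; linarith
  have hpos : ∀ k, 0 < 1 / (8 * (M k + 1)) := fun k => by have := hMp k; positivity
  obtain ⟨t, ht⟩ : ∃ t : ℕ → NNReal, ∀ k, (t k : ℝ) = 1 - 1 / (8 * (M k + 1)) :=
    ⟨fun k => ⟨1 - 1 / (8 * (M k + 1)), by linarith [hle k]⟩, fun k => rfl⟩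
  have htm : ∀ k, t k < t (k + 1) := fun k => by
    rw [← NNReal.coe_lt_coe, ht, ht]
    have := hMp k
    have : 1 / (8 * (M (k + 1) + 1)) < 1 / (8 * (M k + 1)) := by
      apply one_div_lt_one_div_of_lt (by positivity); linarith [hM1 k]
    linarith
  have hn : ∀ k, ∃ n : ℕ, 5 ≤ n ∧ 4 / (n : ℝ) ≤ 1 / (8 * (M k + 1)) ∧ 2 / (n : ℝ) < (t (k + 1) : ℝ) - t k := by
    intro k
    have hd : 0 < (t (k + 1) : ℝ) - t k := sub_pos.2 (NNReal.coe_lt_coe.2 (htm k))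
    obtain ⟨n, hn⟩ := exists_nat_gt (5 + 4 * (8 * (M k + 1)) + 2 / ((t (k + 1) : ℝ) - t k))
    have h1 : 0 < 2 / ((t (k + 1) : ℝ) - t k) := by positivity
    have h2 : 0 < 8 * (M k + 1) := by linarith [hMp k]
    have hn0 : (0:ℝ) < n := by linarith
    refine ⟨n, by have : (5:ℝ) < n := by linarith
                  exact_mod_cast this.le, ?_, ?_⟩
    · rw [div_le_div_iff₀ hn0 h2]; linarith
    · rw [div_lt_iff₀ hn0]
      have : 2 / ((t (k + 1) : ℝ) - t k) < n := by linarith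
      rw [div_lt_iff₀ hd] at this
      linarith
  choose n hn1 hn2 hn3 using hn
  refine ⟨t, M, fun k => ∑ j ∈ Finset.range (k + 1), m j, n, hMN, ht, htm, ?_, ?_, hn1, hn2, hn3, ?_, ?_⟩
  · intro k; rw [← NNReal.coe_lt_coe, ht]; push_cast; linarith [hle k]
  · intro k; rw [← NNReal.coe_lt_coe, ht]; push_cast; linarith [hpos k]
  · intro k; exact Finset.single_le_sum (f := m) (fun j _ => Nat.zero_le _) (Finset.mem_range.2 (Nat.lt_succ_self k))
  · intro k; simp only; rw [Finset.sum_range_succ _ (k + 1)]; omega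
end P12

section P13
variable {V : Type*} [NonUnitalCStarAlgebra V] [PartialOrder V] [StarOrderedRing V]

lemma choose_dims {a b : V} (ha : 0 ≤ a) (hb : 0 ≤ b)
    (hP : ∀ ε : ℝ, 0 < ε → ∃ δ : ℝ, 0 < δ ∧ ∃ N : ℕ, 0 < N ∧ (∀ τ : QuasiTrace V, (N + 1) * τ.toFun (fEps ε a) ≤ N * τ.toFun (fEps δ b)) ∧
      ∀ τ : QuasiTrace V, ¬ τ.IsZero → 0 < τ.toFun (fEps δ b)) :
    ∃ (F : ℕ → QuasiTrace V → ℝ≥0∞) (n : ℕ → ℕ), (∀ k, Nice (F k)) ∧ (∀ k, ∀ τ : QuasiTrace V, ¬ τ.IsZero → 0 < F k τ) ∧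
      (∀ k, 5 ≤ n k) ∧
      (∀ k : ℕ, ∀ τ : QuasiTrace V, ¬ τ.IsZero → τ.toFun (fEps (1 / (k + 1)) a) + 4 * F k τ < ∑ j ∈ Finset.range (k + 1), n j * F j τ) ∧
      (∀ k, ∀ τ : QuasiTrace V, ¬ τ.IsZero → 2 * F k τ < n (k + 1) * F (k + 1) τ) ∧
      (∀ k, ∀ τ : QuasiTrace V, ¬ τ.IsZero → ∑ j ∈ Finset.range (k + 1), n j * F j τ < dTau τ b) := by
  have hP' : ∀ k : ℕ, ∃ (m N : ℕ), 0 < N ∧ ∀ μ : ℕ, m ≤ μ → (∀ τ : QuasiTrace V, (N + 1) * τ.toFun (fEps (1 / (k + 1)) a) ≤ N * τ.toFun (fEps (1 / (μ + 1)) b)) ∧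
      ∀ τ : QuasiTrace V, ¬ τ.IsZero → 0 < τ.toFun (fEps (1 / (μ + 1)) b) := by
    intro k
    obtain ⟨δ, hδ, N, hN, h1, h2⟩ := hP (1 / (k + 1)) (by positivity)
    obtain ⟨m, hm⟩ := exists_nat_one_div_lt hδ
    refine ⟨m, N, hN, fun μ hμ => ?_⟩
    have hle : (1 : ℝ) / (μ + 1) ≤ δ := by
      refine le_trans ?_ hm.le
      gcongr
    have hmo : ∀ τ : QuasiTrace V, τ.toFun (fEps δ b) ≤ τ.toFun (fEps (1 / (μ + 1)) b) := fun τ => tau_fEps_anti τ hb (by positivity) hle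
    exact ⟨fun τ => (h1 τ).trans (by gcongr; exact hmo τ), fun τ hτ => (h2 τ hτ).trans_le (hmo τ)⟩
  choose m N hN hmN using hP'
  obtain ⟨t, M, μ, n, hNM, htM, htm, ht0, ht1, hn5, hn4, hn2, hmμ, hμ⟩ := exists_seqs N m hN
  obtain ⟨f, hf⟩ : ∃ f : ℕ → V, f = fun k : ℕ => fEps (1 / ((k : ℝ) + 1)) a := ⟨_, rfl⟩
  obtain ⟨h, hh⟩ : ∃ h : ℕ → V, h = fun k => fEps (1 / ((μ k : ℝ) + 1)) b := ⟨_, rfl⟩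
  have hfp : ∀ k, f k ∈ pedersen V := fun k => by rw [hf]; exact fEps_mem_pedersen a (by positivity)
  have hhp : ∀ k, h k ∈ pedersen V := fun k => by rw [hh]; exact fEps_mem_pedersen b (by positivity)
  have hf0 : ∀ k, 0 ≤ f k := fun k => by rw [hf]; exact fEps_nonneg _ _
  have hh0 : ∀ k, 0 ≤ h k := fun k => by rw [hh]; exact fEps_nonneg _ _
  have e1 : ∀ k : ℕ, (1 : ℝ) / ((k + 1 : ℕ) + 1) ≤ 1 / (k + 1) := fun k => by gcongr; simp
  have e2 : ∀ k : ℕ, (1 : ℝ) / (μ (k + 1) + 1) ≤ 1 / (μ k + 1) := fun k => by gcongr; exact_mod_cast hμ k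
  have hfd0 : ∀ k, 0 ≤ f (k + 1) - f k := fun k => sub_nonneg.2 (by simp only [hf]; exact fEps_anti ha (by positivity) (e1 k))
  have hhd0 : ∀ k, 0 ≤ h (k + 1) - h k := fun k => sub_nonneg.2 (by simp only [hh]; exact fEps_anti hb (by positivity) (e2 k))
  have hfd : ∀ k (τ : QuasiTrace V), τ.toFun (f (k + 1)) = τ.toFun (f (k + 1) - f k) + τ.toFun (f k) := fun k τ => by
    simp only [hf]; exact tau_diff τ ha (by positivity) (e1 k)
  have hhd : ∀ k (τ : QuasiTrace V), τ.toFun (h (k + 1)) = τ.toFun (h (k + 1) - h k) + τ.toFun (h k) := fun k τ => by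
    simp only [hh]; exact tau_diff τ hb (by positivity) (e2 k)
  have hαβ : ∀ k (τ : QuasiTrace V), (N k + 1) * τ.toFun (f k) ≤ N k * τ.toFun (h k) := fun k τ => by
    simp only [hf, hh]; exact (hmN k (μ k) (hmμ k)).1 τ
  have hβ : ∀ k (τ : QuasiTrace V), ¬ τ.IsZero → 0 < τ.toFun (h k) := fun k τ hτ => by
    simp only [hh]; exact (hmN k (μ k) (hmμ k)).2 τ hτ
  have hβd : ∀ k (τ : QuasiTrace V), τ.toFun (h k) ≤ dTau τ b := fun k τ => by
    simp only [hh]; exact tau_fEps_le τ hb (by positivity)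
  obtain ⟨γ, hγ0, hγs⟩ : ∃ γ : ℕ → QuasiTrace V → ℝ≥0∞, 
      (γ 0 = fun τ => ((t 0 / 2 : NNReal) : ℝ≥0∞) * (τ.toFun (f 0) + τ.toFun (h 0))) ∧
      ∀ k, γ (k + 1) = fun τ => ((t (k + 1) / 2 : NNReal) : ℝ≥0∞) * (τ.toFun (f (k + 1) - f k) + τ.toFun (h (k + 1) - h k)) +
        (((t (k + 1) - t k) / 2 : NNReal) : ℝ≥0∞) * (τ.toFun (f k) + τ.toFun (h k)) :=
    ⟨fun k => match k with
      | 0 => fun τ => ((t 0 / 2 : NNReal) : ℝ≥0∞) * (τ.toFun (f 0) + τ.toFun (h 0))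
      | k + 1 => fun τ => ((t (k + 1) / 2 : NNReal) : ℝ≥0∞) * (τ.toFun (f (k + 1) - f k) + τ.toFun (h (k + 1) - h k)) +
        (((t (k + 1) - t k) / 2 : NNReal) : ℝ≥0∞) * (τ.toFun (f k) + τ.toFun (h k)), rfl, fun _ => rfl⟩
  have hnice : ∀ k, Nice (γ k) := by
    intro k
    cases k with
    | zero =>
      rw [hγ0]
      exact ((Nice.tau (hf0 0) (hfp 0)).add (Nice.tau (hh0 0) (hhp 0))).smul _
    | succ k =>
      rw [hγs]
      exact (((Nice.tau (hfd0 k) (pedersen_sub (hfp _) (hfp _))).add (Nice.tau (hhd0 k) (pedersen_sub (hhp _) (hhp _)))).smul _).add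
        (((Nice.tau (hf0 k) (hfp k)).add (Nice.tau (hh0 k) (hhp k))).smul _)
  -- partial sums
  have hn0 : ∀ k, (n k : NNReal) ≠ 0 := fun k => by have := hn5 k; positivity
  have hnF : ∀ k τ, (n k : ℝ≥0∞) * ((((n k : NNReal)⁻¹ : NNReal) : ℝ≥0∞) * γ k τ) = γ k τ := by
    intro k τ
    rw [← mul_assoc, ← ENNReal.coe_natCast, ← ENNReal.coe_mul, mul_inv_cancel₀ (hn0 k), ENNReal.coe_one, one_mul]
  have hsum : ∀ k τ, ∑ j ∈ Finset.range (k + 1), γ j τ = ((t k / 2 : NNReal) : ℝ≥0∞) * (τ.toFun (f k) + τ.toFun (h k)) := by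
    intro k τ
    induction k with
    | zero => simp [hγ0]
    | succ k ih =>
      rw [Finset.sum_range_succ, ih, hγs, hfd, hhd]
      have : ((t (k + 1) / 2 : NNReal) : ℝ≥0∞) = ((t k / 2 : NNReal) : ℝ≥0∞) + (((t (k + 1) - t k) / 2 : NNReal) : ℝ≥0∞) := by
        rw [← ENNReal.coe_add, ← add_div, add_tsub_cancel_of_le (htm k).le]
      simp only
      rw [this]; ring
  have hfin : ∀ k (τ : QuasiTrace V), τ.toFun (f k) ≠ ∞ := fun k τ => (τ.finite_on_pedersen _ (hfp k) (hf0 k)).ne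
  have hhfin : ∀ k (τ : QuasiTrace V), τ.toFun (h k) ≠ ∞ := fun k τ => (τ.finite_on_pedersen _ (hhp k) (hh0 k)).ne
  have hγpos : ∀ k, ∀ τ : QuasiTrace V, ¬ τ.IsZero → 0 < γ k τ := by
    intro k τ hτ
    cases k with
    | zero =>
      rw [hγ0]
      refine ENNReal.mul_pos ?_ ((hβ 0 τ hτ).trans_le le_add_self).ne'
      rw [ENNReal.coe_ne_zero]; exact (half_pos (ht0 0)).ne'
    | succ k =>
      rw [hγs]
      refine lt_of_lt_of_le ?_ le_add_self
      refine ENNReal.mul_pos ?_ ((hβ k τ hτ).trans_le le_add_self).ne'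
      rw [ENNReal.coe_ne_zero]; exact (half_pos (tsub_pos_of_lt (htm k))).ne'
  refine ⟨fun k τ => (((n k : NNReal)⁻¹ : NNReal) : ℝ≥0∞) * γ k τ, n, fun k => (hnice k).smul _, ?_, hn5, ?_, ?_, ?_⟩
  · intro k τ hτ
    exact ENNReal.mul_pos (by rw [ENNReal.coe_ne_zero]; exact inv_ne_zero (hn0 k)) (hγpos k τ hτ).ne'
  · intro k τ hτ
    simp only [hnF, hsum]
    have hle : γ k τ ≤ ((t k / 2 : NNReal) : ℝ≥0∞) * (τ.toFun (f k) + τ.toFun (h k)) := by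
      rw [← hsum]; exact Finset.single_le_sum (f := fun j => γ j τ) (fun j _ => bot_le) (Finset.mem_range.2 (Nat.lt_succ_self k))
    have e : τ.toFun (fEps (1 / (k + 1)) a) = τ.toFun (f k) := by rw [hf]
    rw [e]
    have hab := hαβ k τ
    have hb0 := hβ k τ hτ
    have hgt := ((hnice k).2.2.1 τ).ne
    revert hle hab hb0
    generalize γ k τ = g at hgt ⊢
    have h1 := hfin k τ
    have h2 := hhfin k τ
    generalize τ.toFun (f k) = α at h1 ⊢
    generalize τ.toFun (h k) = β at h2 ⊢
    lift g to NNReal using hgt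
    lift α to NNReal using h1
    lift β to NNReal using h2
    intro hle hab hb0
    have hle' : g ≤ t k / 2 * (α + β) := by exact_mod_cast hle
    have hab' : ((N k : NNReal) + 1) * α ≤ N k * β := by exact_mod_cast hab
    have hb0' : 0 < β := by exact_mod_cast hb0
    have key : α + 4 * ((n k : NNReal)⁻¹ * g) < t k / 2 * (α + β) := by
      rw [← NNReal.coe_lt_coe]
      have r1 : (g : ℝ) ≤ t k / 2 * (α + β) := by exact_mod_cast hle'
      have r2 : ((N k : ℝ) + 1) * α ≤ N k * β := by exact_mod_cast hab'
      have r3 : (0 : ℝ) < β := by exact_mod_cast hb0'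
      have := real_ineq (α := α) (β := β) (γ := g) (θ := 1 / (8 * (M k + 1))) (n := n k) (N := N k) (M := M k) α.2 r3
        (by exact_mod_cast hN k) (hNM k) r2 rfl (by have := hn5 k; positivity) (hn4 k) (by rw [← htM]; exact r1)
      rw [← htM] at this
      push_cast
      rw [div_eq_inv_mul] at this
      exact this
    exact_mod_cast key
  · intro k τ hτ
    simp only [hnF]
    have hle : γ k τ ≤ ((t k / 2 : NNReal) : ℝ≥0∞) * (τ.toFun (f k) + τ.toFun (h k)) := by
      rw [← hsum]; exact Finset.single_le_sum (f := fun j => γ j τ) (fun j _ => bot_le) (Finset.mem_range.2 (Nat.lt_succ_self k))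
    have hge : (((t (k + 1) - t k) / 2 : NNReal) : ℝ≥0∞) * (τ.toFun (f k) + τ.toFun (h k)) ≤ γ (k + 1) τ := by
      rw [hγs]; exact le_add_self
    refine lt_of_lt_of_le ?_ hge
    have hgt := ((hnice k).2.2.1 τ).ne
    have hg0 := hγpos k τ hτ
    revert hle hg0
    generalize γ k τ = g at hgt ⊢
    have h1 := hfin k τ
    have h2 := hhfin k τ
    generalize τ.toFun (f k) = α at h1 ⊢
    generalize τ.toFun (h k) = β at h2 ⊢
    lift g to NNReal using hgt
    lift α to NNReal using h1
    lift β to NNReal using h2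
    intro hle hg0
    have hle' : g ≤ t k / 2 * (α + β) := by exact_mod_cast hle
    have hg0' : 0 < g := by exact_mod_cast hg0
    have key : 2 * ((n k : NNReal)⁻¹ * g) < (t (k + 1) - t k) / 2 * (α + β) := by
      rw [← NNReal.coe_lt_coe]
      have r1 : (g : ℝ) ≤ t k / 2 * (α + β) := by exact_mod_cast hle'
      have r2 : (0 : ℝ) < g := by exact_mod_cast hg0'
      have r3 : (t k : ℝ) < 1 := by exact_mod_cast ht1 k
      have r4 : (0 : ℝ) ≤ α := α.2
      have r5 : (0 : ℝ) ≤ β := β.2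
      push_cast [NNReal.coe_sub (htm k).le]
      have r6 : (g : ℝ) ≤ (α + β) / 2 := by nlinarith
      have r7 : 0 < (t (k + 1) : ℝ) - t k := sub_pos.2 (NNReal.coe_lt_coe.2 (htm k))
      calc (2 : ℝ) * ((n k : ℝ)⁻¹ * g) = 2 / n k * g := by ring
        _ < ((t (k + 1) : ℝ) - t k) * g := by gcongr; exact hn2 k
        _ ≤ ((t (k + 1) : ℝ) - t k) * ((α + β) / 2) := by gcongr
        _ = _ := by ring
    exact_mod_cast key
  · intro k τ hτ
    simp only [hnF, hsum]
    refine lt_of_lt_of_le ?_ (hβd k τ)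
    have hab := hαβ k τ
    have hb0 := hβ k τ hτ
    revert hab hb0
    have h1 := hfin k τ
    have h2 := hhfin k τ
    generalize τ.toFun (f k) = α at h1 ⊢
    generalize τ.toFun (h k) = β at h2 ⊢
    lift α to NNReal using h1
    lift β to NNReal using h2
    intro hab hb0
    have hab' : ((N k : NNReal) + 1) * α ≤ N k * β := by exact_mod_cast hab
    have hb0' : 0 < β := by exact_mod_cast hb0
    have key : t k / 2 * (α + β) < β := by
      rw [← NNReal.coe_lt_coe]
      push_cast
      have r2 : ((N k : ℝ) + 1) * α ≤ N k * β := by exact_mod_cast hab'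
      have r3 : (0 : ℝ) < β := by exact_mod_cast hb0'
      have r4 : (0 : ℝ) ≤ α := α.2
      have r5 : (t k : ℝ) < 1 := by exact_mod_cast ht1 k
      have r6 : (1 : ℝ) ≤ N k := by exact_mod_cast hN k
      have r7 : (α : ℝ) ≤ β := by nlinarith
      nlinarith [(t k).2]
    exact_mod_cast key
end P13

section P14
variable {V : Type*} [NonUnitalCStarAlgebra V] [PartialOrder V] [StarOrderedRing V]

lemma d_smul (τ : QuasiTrace V) {x : V} (hx : 0 ≤ x) {s : ℝ} (hs : 0 < s) : dTau τ (s • x) = dTau τ x := by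
  refine le_antisymm (d_le_d τ (smul_nonneg_r hx hs.le) hx (Submodule.smul_of_tower_mem _ _ (mem_Rid_self hx))) ?_
  refine d_le_d τ hx (smul_nonneg_r hx hs.le) ?_
  have := Submodule.smul_of_tower_mem (Rid (s • x)) s⁻¹ (mem_Rid_self (smul_nonneg_r hx hs.le))
  rwa [smul_smul, inv_mul_cancel₀ hs.ne', one_smul] at this

lemma exists_blocks {L : ℕ → V → V} (hL : IsCopies L) (c : ℕ → V) (hc : ∀ i, 0 ≤ c i) :
    ∃ d : ℕ → V, (∀ i, 0 ≤ d i) ∧ (∀ i j, i ≠ j → d i * d j = 0) ∧ (∀ i, ‖d i‖ ≤ (1 / 4) ^ i) ∧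
      ∀ i (τ : QuasiTrace V), dTau τ (d i) = dTau τ (c i) := by
  obtain ⟨x, hx⟩ : ∃ x : ℕ → V, x = fun i => L i (CFC.sqrt (c i)) := ⟨_, rfl⟩
  obtain ⟨s, hs⟩ : ∃ s : ℕ → ℝ, s = fun i => (1 / 4) ^ i / (‖x i * star (x i)‖ + 1) := ⟨_, rfl⟩
  have hs0 : ∀ i, 0 < s i := fun i => by rw [hs]; positivity
  refine ⟨fun i => s i • (x i * star (x i)), fun i => smul_nonneg_r (mul_star_self_nonneg _) (hs0 i).le, ?_, ?_, ?_⟩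
  · intro i j hij
    have : star (x i) * x j = 0 := by rw [hx]; simp only; rw [hL, if_neg hij]
    rw [smul_mul_assoc, mul_smul_comm, mul_assoc, ← mul_assoc (star (x i)), this]; simp
  · intro i
    rw [norm_smul, Real.norm_of_nonneg (hs0 i).le, hs]
    simp only
    rw [div_mul_eq_mul_div, div_le_iff₀ (by positivity)]
    gcongr; linarith
  · intro i τ
    rw [d_smul τ (mul_star_self_nonneg _) (hs0 i), d_star_eq, hx]
    simp only
    rw [hL, if_pos rfl, sqrt_star, sqrt_mul (hc i)]

lemma flatten (n : ℕ → ℕ) (hn : ∀ k, 5 ≤ n k) : ∃ (S : ℕ → ℕ) (blk : ℕ → ℕ), S 0 = 0 ∧ (∀ k, S (k + 1) = S k + n k) ∧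
    (∀ i, S (blk i) ≤ i ∧ i < S (blk i + 1)) ∧ (∀ k i, S k ≤ i → i < S (k + 1) → blk i = k) ∧ (∀ k, 5 * k ≤ S k) ∧ Monotone S := by
  obtain ⟨S, hS⟩ : ∃ S : ℕ → ℕ, S = fun k => ∑ j ∈ Finset.range k, n j := ⟨_, rfl⟩
  have hs : ∀ k, S (k + 1) = S k + n k := fun k => by rw [hS]; simp only; rw [Finset.sum_range_succ]
  have h5 : ∀ k, 5 * k ≤ S k := by
    intro k
    induction k with
    | zero => simp
    | succ k ih => rw [hs]; have := hn k; omega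
  have hm : Monotone S := monotone_nat_of_le_succ fun k => by rw [hs]; omega
  have hb : ∀ i, ∃ k, S k ≤ i ∧ i < S (k + 1) := by
    intro i
    have hex : ∃ k, i < S (k + 1) := ⟨i, by have := h5 (i + 1); omega⟩
    classical
    refine ⟨Nat.find hex, ?_, Nat.find_spec hex⟩
    rcases Nat.eq_zero_or_pos (Nat.find hex) with h | h
    · rw [h, hS]; simp
    · have := Nat.find_min hex (m := Nat.find hex - 1) (by omega)
      rw [Nat.sub_add_cancel h] at this
      omega
  choose blk hblk using hb
  refine ⟨S, blk, by rw [hS]; simp, hs, hblk, ?_, h5, hm⟩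
  intro k i h1 h2
  obtain ⟨h3, h4⟩ := hblk i
  by_contra hne
  rcases lt_or_gt_of_ne hne with h | h
  · have := hm (show blk i + 1 ≤ k by omega); omega
  · have := hm (show k + 1 ≤ blk i by omega); omega

lemma a_cut {a : V} (ha : 0 ≤ a) (k : ℕ) : ∃ a' : V, 0 ≤ a' ∧ ‖a - a'‖ ≤ 2 * (1 / ((k : ℝ) + 1)) ∧
    ∀ τ : QuasiTrace V, dTau τ a' ≤ τ.toFun (fEps (1 / ((k : ℝ) + 1)) a) := by
  have hε : (0 : ℝ) < 1 / ((k : ℝ) + 1) := by positivity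
  have h0 : 0 ≤ fEps (2 * (1 / ((k : ℝ) + 1))) a * a := by
    have : fEps (2 * (1 / ((k : ℝ) + 1))) a * a = cfcₙ (fun t : ℝ => cutoff (2 * (1 / ((k : ℝ) + 1))) t * t) a := by
      rw [← fc_mul a (g := fun t : ℝ => t) (cutoff_cont _) (cutoff_eq_zero (by positivity) (by positivity)) continuous_id rfl]
      congr 1
      exact (fc_id ha).symm
    rw [this]
    exact fc_nonneg ha fun t ht => mul_nonneg (cutoff_nonneg _ _) ht
  refine ⟨_, h0, fEps_sub_norm ha (by positivity), fun τ => d_le_tau τ (fEps_nonneg _ _) (fEps_norm _ _) h0 ?_⟩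
  rw [← mul_assoc, fEps_mul a hε (by linarith)]

lemma final {L : ℕ → V → V} (hL : IsCopies L) (hsc : StrictComparison V) (hΓ : GammaSurjective V)
    (hd : ∀ e : V, e ≠ 0 → ∀ x : V, x ∈ IC e)
    (hqt : ∃ τ : QuasiTrace V, ¬ τ.IsZero) {a b : V} (ha : 0 ≤ a) (hb : 0 ≤ b)
    (hlt : ∀ τ : QuasiTrace V, ¬ τ.IsZero → dTau τ a < dTau τ b) :
    ∃ x : V, star x * x = a ∧ x * star x ∈ her b := by
  obtain ⟨F, n, hF, hF0, hn5, h4, h5, h6⟩ := choose_dims ha hb (fun ε hε => lemP hL hsc hd hqt ha hb hlt hε)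
  choose c hc hcd using fun k => hΓ (F k) ((hF k).mem (hF0 k))
  obtain ⟨S, blk, hS0, hSs, hb1, hb2, hS5, hSm⟩ := flatten n hn5
  obtain ⟨d, hd0, ho, hdn, hdd⟩ := exists_blocks hL (fun i => c (blk i)) (fun i => hc _)
  have hdF : ∀ i τ, dTau τ (d i) = F (blk i) τ := fun i τ => by rw [hdd, hcd]
  have hblock : ∀ k τ, ∑ i ∈ Finset.Ico (S k) (S (k + 1)), dTau τ (d i) = n k * F k τ := by
    intro k τ
    rw [Finset.sum_congr rfl (g := fun _ => F k τ)]
    · rw [Finset.sum_const, Nat.card_Ico, hSs, Nat.add_sub_cancel_left, nsmul_eq_mul]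
    · intro i hi
      rw [Finset.mem_Ico] at hi
      rw [hdF, hb2 k i hi.1 hi.2]
  have hsum : ∀ k τ, ∑ i ∈ Finset.range (S k), dTau τ (d i) = ∑ j ∈ Finset.range k, n j * F j τ := by
    intro k τ
    induction k with
    | zero => simp [hS0]
    | succ k ih =>
      rw [Finset.sum_range_succ, ← ih, ← hblock, Finset.sum_range_add_sum_Ico _ (hSm (Nat.le_succ k))]
  refine engine hL hsc ha hb hd0 ho hdn ?_ ?_
  · intro δ hδ n0
    obtain ⟨k0, hk0⟩ := exists_nat_one_div_lt (half_pos hδ)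
    obtain ⟨k, hk⟩ : ∃ k, k = max k0 n0 := ⟨_, rfl⟩
    have hkk : k0 ≤ k := by omega
    have hkn : n0 ≤ k := by omega
    obtain ⟨a', ha', hn', hda⟩ := a_cut ha k
    have h5k := hS5 (k + 1)
    have hnk := hn5 k
    have hSk := hSs k
    refine ⟨S (k + 1) - 4, S (k + 1), a', by omega, by omega, ha', ?_, ?_, ?_⟩
    · have : (1 : ℝ) / (k + 1) ≤ 1 / (k0 + 1) := by gcongr
      linarith
    · intro τ hτ
      refine (hda τ).trans_lt ?_
      have h := h4 k τ hτ
      rw [← hsum, ← Finset.sum_range_add_sum_Ico _ (show S (k + 1) - 4 ≤ S (k + 1) by omega)] at h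
      have e : ∑ i ∈ Finset.Ico (S (k + 1) - 4) (S (k + 1)), dTau τ (d i) = 4 * F k τ := by
        rw [Finset.sum_congr rfl (g := fun _ => F k τ)]
        · rw [Finset.sum_const, Nat.card_Ico, show S (k + 1) - (S (k + 1) - 4) = 4 by omega, nsmul_eq_mul]; norm_num
        · intro i hi
          rw [Finset.mem_Ico] at hi
          rw [hdF, hb2 k i (by omega) hi.2]
      rw [e] at h
      exact lt_of_add_lt_add_right h
    · intro i hi τ hτ
      obtain ⟨hbi, hbi'⟩ := hb1 i
      obtain ⟨j, hj⟩ : ∃ j, j = blk i := ⟨_, rfl⟩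
      rw [← hj] at hbi hbi'
      have hjk : j ≤ k := by
        by_contra hcon
        have := hSm (show k + 1 ≤ j by omega)
        omega
      rw [hdF, ← hj]
      by_cases hcase : i + 3 < S (j + 1)
      · have hsub : Finset.Ico (i + 1) (i + 4) ⊆ Finset.Ico (i + 1) (S (k + 1)) :=
          Finset.Ico_subset_Ico le_rfl (by have := hSm (show j + 1 ≤ k + 1 by omega); omega)
        refine lt_of_lt_of_le ?_ (Finset.sum_le_sum_of_subset hsub)
        rw [Finset.sum_congr rfl (g := fun _ => F j τ)]
        · rw [Finset.sum_const, Nat.card_Ico, show i + 4 - (i + 1) = 3 by omega, nsmul_eq_mul]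
          refine ENNReal.mul_lt_mul_left (hF0 j τ hτ).ne' ((hF j).2.2.1 τ).ne ?_
          norm_num
        · intro i' hi'
          rw [Finset.mem_Ico] at hi'
          rw [hdF, hb2 j i' (by omega) (by omega)]
      · have hjk' : j < k := by
          refine lt_of_le_of_ne hjk ?_
          rintro rfl
          omega
        have hsub : Finset.Ico (S (j + 1)) (S (j + 1 + 1)) ⊆ Finset.Ico (i + 1) (S (k + 1)) :=
          Finset.Ico_subset_Ico (by omega) (hSm (by omega))
        refine lt_of_lt_of_le ?_ (Finset.sum_le_sum_of_subset hsub)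
        rw [hblock]
        exact h5 j τ hτ
  · intro m τ hτ
    refine lt_of_le_of_lt ?_ (h6 m τ hτ)
    rw [← hsum]
    exact Finset.sum_le_sum_of_subset (Finset.range_mono (by have := hS5 (m + 1); omega))
end P14

/-- **Corollary.** Let `A` be a σ-unital simple C*-algebra with `QT̃(A) ≠ {0}`, strict
comparison, and surjective `Γ`.  If `a, b ∈ (A ⊗ K)₊` satisfy `d_τ(a) < d_τ(b)` for all
nonzero `τ ∈ QT̃(A)`, then `a ≾̃ b`: there is `x` with `x*x = a` and `xx* ∈ Her(b)`. -/
theorem comparison_exact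
    (SB : Stabilization A W)
    (hσ : SigmaUnital A) (hsimple : IsSimpleCStar A)
    (hqt : ∃ τ : QuasiTrace W, ¬ τ.IsZero)
    (hsc : StrictComparison W) (hΓ : GammaSurjective W)
    (a b : W) (ha : 0 ≤ a) (hb : 0 ≤ b)
    (hlt : ∀ τ : QuasiTrace W, ¬ τ.IsZero → dTau τ a < dTau τ b) :
    ∃ x : W, star x * x = a ∧ x * star x ∈ her b := by
  obtain ⟨L, hL⟩ := exists_copies SB
  exact final hL hsc hΓ (fun e he x => simple_dense SB hsimple he x) hqt ha hb hlt
end Paper
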